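/- arXiv:2410.19186 — 2 statements merged into one kernel-verified Lean document; each statement's English description precedes it below -/
import Mathlib

section
/- The integral from 0 to e^{−2π/√10} of E(q^2)^8 E(q^5)^3 / E(q)^7 dq equals (√((10 + 4√5)/5) − 1)/4. -/
open Real

/-- Euler's product `E(q) = ∏_{j=1}^∞ (1 - q^j)`. -/
noncomputable def eulerE (q : ℝ) : ℝ := ∏' j : ℕ, (1 - q ^ (j + 1))

/-!
Write `D = q d/dq` and `S = η(2τ)⁸ η(5τ)³ / η(τ)⁷`, so that the integrand is `S / q`. Consider the
modular functions `T = η(2τ) η(10τ)³ / (η(τ)³ η(5τ))` and `u = η(2τ)⁵ η(5τ) / (η(τ)⁵ η(10τ))` for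
`Γ₀(10)`, and divide their logarithmic derivatives, which are weight 2 Eisenstein series, by
weight 2 eta quotients:
`ρ = D(log T) / (η(τ) η(2τ)² η(5τ)³ / η(10τ)²)` and
`σ = D(log u) / (η(τ)³ η(5τ) η(10τ)² / η(2τ)²)`.
Then `D ρ = 4 S` and `D σ = 20 S`. To see that a form `Y` of weight 4 is a multiple of an eta
quotient `G`, it is enough that `G · D(Y / G)` vanishes; this is a modular form of weight 6, which
by the Sturm bound is decided by finitely many `q`-coefficients. Only the logarithmic derivative of
`G` enters it, so the multiplier systems of the eta quotients never have to be determined.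

Since `ρ → 1` as `q → 0`, the integral from `0` to `x` is `(ρ(x) - 1) / 4`. Comparing derivatives
and limits at `i∞` gives in turn `σ = 5 ρ`, `u = 1 + 5 T` and `5 ρ² = 1 + 4 u²`, and the
transformation of `η` under `τ ↦ -1/τ` gives `T = √5 / 10` at `τ = i / √10`, the fixed point of the
Fricke involution.
-/

open Filter Topology Asymptotics UpperHalfPlane ModularForm CongruenceSubgroup
open Function.Periodic (qParam_ne_zero norm_qParam differentiable_qParam)
open Derivative (normalizedDerivOfComplex serreDerivative)
open EisensteinSeries (E2)
open Finset.HasAntidiagonal (antidiagonal mem_antidiagonal)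
open scoped MatrixGroups Manifold

local notation "𝕢" => Function.Periodic.qParam
local notation "D" => normalizedDerivOfComplex

section QSeries

/-- `F` is given on all of `ℍ` by the convergent series `∑ c m q ^ m`, `q = exp (2πiτ)`. Unlike
`qExpansion`, no periodicity or boundedness of `F` has to be known beforehand. -/
def HasQSeries (c : ℕ → ℂ) (F : ℍ → ℂ) : Prop :=
  ∀ τ : ℍ, HasSum (fun m ↦ c m • 𝕢 1 (τ : ℂ) ^ m) (F τ)

theorem hasDerivAt_qParam_one (z : ℂ) :
    HasDerivAt (𝕢 1) (2 * π * Complex.I * 𝕢 1 z) z := by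
  have h : 𝕢 1 = fun w ↦ Complex.exp (2 * π * Complex.I * w) :=
    funext fun w ↦ by simp [Function.Periodic.qParam]
  simpa [h, mul_comm] using ((hasDerivAt_id z).const_mul (2 * π * Complex.I)).cexp

theorem norm_smul_qParam_pow_le (a : ℂ) (n : ℕ) {z w : ℂ} (h : w.im ≤ z.im) :
    ‖a • 𝕢 1 z ^ n‖ ≤ ‖a • 𝕢 1 w ^ n‖ := by
  simp only [norm_smul, norm_pow, norm_qParam]
  gcongr ‖a‖ * ?_ ^ n
  rw [Real.exp_le_exp]
  nlinarith [Real.pi_pos]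

/-- The map `τ ↦ d τ` of the upper half plane (with a junk value for `d = 0`). -/
noncomputable def natScale (d : ℕ) (τ : ℍ) : ℍ := ofComplex (d * τ)

theorem coe_natScale {d : ℕ} (hd : d ≠ 0) (τ : ℍ) : (natScale d τ : ℂ) = d * τ := by
  have him : 0 < ((d : ℂ) * τ).im := by
    simpa using mul_pos (Nat.cast_pos.2 (Nat.pos_of_ne_zero hd)) τ.im_pos
  rw [natScale, ofComplex_apply_of_im_pos him]

theorem im_natScale {d : ℕ} (hd : d ≠ 0) (τ : ℍ) : (natScale d τ).im = d * τ.im := by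
  simpa using congrArg Complex.im (coe_natScale hd τ)

theorem qParam_nat_mul (h : ℝ) (d : ℕ) (z : ℂ) : 𝕢 h (d * z) = 𝕢 h z ^ d := by
  rw [Function.Periodic.qParam, Function.Periodic.qParam, ← Complex.exp_nat_mul]
  ring_nf

namespace HasQSeries

variable {c c' : ℕ → ℂ} {F G : ℍ → ℂ}

theorem sub (hF : HasQSeries c F) (hG : HasQSeries c' G) :
    HasQSeries (fun n ↦ c n - c' n) (F - G) := fun τ ↦
  ((hF τ).sub (hG τ)).congr_fun fun _ ↦ sub_smul _ _ _

theorem const_mul (a : ℂ) (hF : HasQSeries c F) :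
    HasQSeries (fun n ↦ a * c n) (fun τ ↦ a * F τ) := fun τ ↦ by
  simpa only [smul_eq_mul, mul_assoc] using (hF τ).mul_left a

theorem sum {ι : Type*} {s : Finset ι} {c : ι → ℕ → ℂ} {F : ι → ℍ → ℂ}
    (h : ∀ i ∈ s, HasQSeries (c i) (F i)) :
    HasQSeries (fun n ↦ ∑ i ∈ s, c i n) (fun τ ↦ ∑ i ∈ s, F i τ) := fun τ ↦ by
  simpa only [Finset.sum_smul] using hasSum_sum fun i hi ↦ h i hi τ

theorem mul (hF : HasQSeries c F) (hG : HasQSeries c' G) :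
    HasQSeries (fun n ↦ ∑ p ∈ antidiagonal n, c p.1 * c' p.2) (F * G) := fun τ ↦ by
  have hFτ := (hF τ).summable.norm
  have hGτ := (hG τ).summable.norm
  convert! (summable_norm_sum_mul_antidiagonal_of_summable_norm hFτ hGτ).of_norm.hasSum using 1
  · ext n
    rw [Finset.sum_smul]
    refine Finset.sum_congr rfl fun p hp ↦ ?_
    rw [← mem_antidiagonal.1 hp, pow_add, smul_mul_smul_comm]
  · rw [Pi.mul_apply, ← (hF τ).tsum_eq, ← (hG τ).tsum_eq,
      tsum_mul_tsum_eq_tsum_sum_antidiagonal_of_summable_norm hFτ hGτ]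

theorem div_pow (hF : HasQSeries c F) {n : ℕ} (hc : ∀ m < n, c m = 0) :
    HasQSeries (fun m ↦ c (m + n)) (fun τ ↦ F τ / 𝕢 1 (τ : ℂ) ^ n) := fun τ ↦ by
  have hhead : ∑ m ∈ Finset.range n, c m • 𝕢 1 (τ : ℂ) ^ m = 0 :=
    Finset.sum_eq_zero fun m hm ↦ by rw [hc m (Finset.mem_range.1 hm), zero_smul]
  have htail := ((hasSum_nat_add_iff' n).2 (hF τ)).div_const (𝕢 1 (τ : ℂ) ^ n)
  rw [hhead, sub_zero] at htail
  refine htail.congr_fun fun m ↦ ?_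
  rw [pow_add, smul_eq_mul, smul_eq_mul, ← mul_assoc,
    mul_div_cancel_right₀ _ (pow_ne_zero _ (qParam_ne_zero _))]

theorem isBigO_pow (hF : HasQSeries c F) {n : ℕ} (hc : ∀ m < n, c m = 0) :
    F =O[atImInfty] fun τ : ℍ ↦ 𝕢 1 (τ : ℂ) ^ n := by
  have hbdd : IsBoundedAtImInfty fun τ : ℍ ↦ F τ / 𝕢 1 (τ : ℂ) ^ n :=
    isBoundedAtImInfty_of_hasSum_qExpansion one_pos (hF.div_pow hc)
  have hmul := IsBigO.mul hbdd (isBigO_refl (fun τ : ℍ ↦ 𝕢 1 (τ : ℂ) ^ n) atImInfty).norm_right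
  exact isBigO_norm_right.1 (hmul.congr
    (fun τ ↦ div_mul_cancel₀ _ (pow_ne_zero _ (qParam_ne_zero _))) fun τ ↦ one_mul _)

theorem tendsto_atImInfty (hF : HasQSeries c F) : Tendsto F atImInfty (𝓝 (c 0)) := by
  have hconst : HasQSeries (fun m ↦ if m = 0 then c 0 else 0) fun _ ↦ c 0 := fun τ ↦
    (hasSum_ite_eq 0 (c 0)).congr_fun fun m ↦ by
      rcases eq_or_ne m 0 with rfl | hm <;> simp [*]
  have hO : (F - fun _ ↦ c 0) =O[atImInfty] fun τ : ℍ ↦ 𝕢 1 (τ : ℂ) ^ 1 :=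
    (hF.sub hconst).isBigO_pow fun m hm ↦ by simp [Nat.lt_one_iff.1 hm]
  simp only [pow_one] at hO
  exact tendsto_sub_nhds_zero_iff.1 (hO.trans_tendsto (qParam_tendsto_atImInfty one_pos))

theorem tendsto_div_pow (hF : HasQSeries c F) {n : ℕ} (hc : ∀ m < n, c m = 0) :
    Tendsto (fun τ : ℍ ↦ F τ / 𝕢 1 (τ : ℂ) ^ n) atImInfty (𝓝 (c n)) := by
  simpa only [zero_add] using (hF.div_pow hc).tendsto_atImInfty

theorem coeff_eq_zero_of_isBigO (hF : HasQSeries c F) {n : ℕ}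
    (hO : F =O[atImInfty] fun τ : ℍ ↦ 𝕢 1 (τ : ℂ) ^ n) : ∀ m < n, c m = 0 := by
  intro m
  induction m using Nat.strong_induction_on with
  | _ m ih =>
    intro hm
    have hq : Tendsto (fun τ : ℍ ↦ 𝕢 1 (τ : ℂ) ^ (n - m)) atImInfty (𝓝 0) := by
      simpa [(Nat.sub_pos_of_lt hm).ne'] using (qParam_tendsto_atImInfty one_pos).pow (n - m)
    refine tendsto_nhds_unique (hF.tendsto_div_pow fun l hl ↦ ih l hl (hl.trans hm))
      (IsBigO.trans_tendsto ?_ hq)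
    refine (hO.mul (isBigO_refl (fun τ : ℍ ↦ (𝕢 1 (τ : ℂ) ^ m)⁻¹) _)).congr (fun τ ↦ rfl)
      fun τ ↦ ?_
    rw [pow_sub₀ _ (qParam_ne_zero _) hm.le]

theorem eventuallyEq_tsum (hF : HasQSeries c F) (τ : ℍ) :
    F ∘ ofComplex =ᶠ[𝓝 (τ : ℂ)] fun w ↦ ∑' n, c n • 𝕢 1 w ^ n := by
  filter_upwards [isOpen_upperHalfPlaneSet.mem_nhds τ.im_pos] with w hw
  rw [Function.comp_apply, ofComplex_apply_of_im_pos hw]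
  exact (hF ⟨w, hw⟩).tsum_eq.symm

theorem exists_isOpen_norm_le (hF : HasQSeries c F) (τ : ℍ) :
    ∃ U : Set ℂ, IsOpen U ∧ (τ : ℂ) ∈ U ∧ ∃ u : ℕ → ℝ, Summable u ∧
      ∀ n, ∀ w ∈ U, ‖c n • 𝕢 1 w ^ n‖ ≤ u n := by
  let ρ : ℍ := ⟨(τ.im / 2 : ℝ) * Complex.I, by simpa using τ.im_pos⟩
  have hρ : (ρ : ℂ).im = τ.im / 2 := by simp [ρ]
  refine ⟨{w | τ.im / 2 < w.im}, isOpen_lt continuous_const Complex.continuous_im,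
    half_lt_self τ.im_pos, _, (hF ρ).summable.norm, fun n w hw ↦ norm_smul_qParam_pow_le (c n) n ?_⟩
  exact hρ.trans_le (le_of_lt hw)

theorem mdifferentiable (hF : HasQSeries c F) : MDiff F := fun τ ↦ by
  obtain ⟨U, hU, hτ, u, hu, hle⟩ := hF.exists_isOpen_norm_le τ
  have hdiff := Complex.differentiableOn_tsum_of_summable_norm hu
    (fun n ↦ ((differentiable_qParam.pow n).const_smul (c n)).differentiableOn) hU hle
  exact UpperHalfPlane.mdifferentiableAt_iff.2
    ((hdiff.differentiableAt (hU.mem_nhds hτ)).congr_of_eventuallyEq (hF.eventuallyEq_tsum τ))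

theorem normalizedDeriv (hF : HasQSeries c F) : HasQSeries (fun n ↦ n * c n) (D F) := fun τ ↦ by
  obtain ⟨U, hU, hτ, u, hu, hle⟩ := hF.exists_isOpen_norm_le τ
  have hsum := Complex.hasSum_deriv_of_summable_norm (F := fun n w ↦ c n • 𝕢 1 w ^ n) hu
    (fun n ↦ ((differentiable_qParam.pow n).const_smul (c n)).differentiableOn) hU hle hτ
  rw [← (hF.eventuallyEq_tsum τ).deriv_eq] at hsum
  refine (hsum.mul_left (2 * π * Complex.I)⁻¹).congr_fun fun n ↦ ?_
  rw [(((hasDerivAt_qParam_one τ).fun_pow n).fun_const_smul (c n)).deriv]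
  rcases n.eq_zero_or_pos with rfl | hn
  · simp
  rw [← Nat.sub_add_cancel hn]
  simp only [smul_eq_mul, Nat.add_sub_cancel, pow_succ]
  field_simp

theorem exists_norm_le (hF : HasQSeries c F) {y : ℝ} (hy : 0 < y) :
    ∃ C, ∀ τ : ℍ, y ≤ τ.im → ‖F τ‖ ≤ C := by
  let ρ : ℍ := ⟨y * Complex.I, by simpa using hy⟩
  have hρ : (ρ : ℂ).im = y := by simp [ρ]
  refine ⟨∑' n, ‖c n • 𝕢 1 (ρ : ℂ) ^ n‖, fun τ hτ ↦ ?_⟩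
  rw [← (hF τ).tsum_eq]
  exact tsum_of_norm_bounded (hF ρ).summable.norm.hasSum fun n ↦
    norm_smul_qParam_pow_le (c n) n (hρ.trans_le hτ)

theorem comp_natScale (hF : HasQSeries c F) {d : ℕ} (hd : d ≠ 0) :
    HasQSeries (fun n ↦ if d ∣ n then c (n / d) else 0) (fun τ ↦ F (natScale d τ)) := fun τ ↦ by
  have hinj : Function.Injective (d * ·) := mul_right_injective₀ hd
  refine (hinj.hasSum_iff fun n hn ↦ ?_).1 ((hF (natScale d τ)).congr_fun fun m ↦ ?_)
  · have hdvd : ¬ d ∣ n := fun ⟨m, hm⟩ ↦ hn ⟨m, hm.symm⟩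
    simp [hdvd]
  · simp [coe_natScale hd, qParam_nat_mul, pow_mul, Nat.pos_of_ne_zero hd]

end HasQSeries

end QSeries

theorem hasQSeries_E2 :
    HasQSeries (fun n ↦ if n = 0 then 1 else -24 * ArithmeticFunction.sigma 1 n) E2 := fun τ ↦ by
  simpa [Function.Periodic.qParam] using EisensteinSeries.hasSum_qExpansion_E2 (z := τ)

section Index

theorem Gamma0_mul_of_coprime {M N : ℕ} (h : M.Coprime N) :
    Gamma0 (M * N) = Gamma0 M ⊓ Gamma0 N := by
  ext γ
  rw [Subgroup.mem_inf, Gamma0_mem, Gamma0_mem, Gamma0_mem, ZMod.intCast_zmod_eq_zero_iff_dvd,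
    ZMod.intCast_zmod_eq_zero_iff_dvd, ZMod.intCast_zmod_eq_zero_iff_dvd, Nat.cast_mul]
  exact ⟨fun hd ↦ ⟨dvd_of_mul_right_dvd hd, dvd_of_mul_left_dvd hd⟩,
    fun hd ↦ (Nat.isCoprime_iff_coprime.2 h).mul_dvd hd.1 hd.2⟩

/-- The point `(a : c)` of the projective line over `ZMod p` given by the first column of a matrix
in `SL(2, ℤ)`, with `none` for the point at infinity. -/
def firstColumn (p : ℕ) (g : SL(2, ℤ)) : Option (ZMod p) :=
  if (g 1 0 : ZMod p) = 0 then none else some (g 0 0 * (g 1 0 : ZMod p)⁻¹)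

theorem inv_mul_mem_Gamma0_of_firstColumn_eq {p : ℕ} [Fact p.Prime] {g h : SL(2, ℤ)}
    (e : firstColumn p g = firstColumn p h) : g⁻¹ * h ∈ Gamma0 p := by
  have hentry : (g⁻¹ * h) 1 0 = g 0 0 * h 1 0 - h 0 0 * g 1 0 := by
    rw [Matrix.SpecialLinearGroup.coe_mul, Matrix.SpecialLinearGroup.coe_inv,
      Matrix.adjugate_fin_two]
    simp only [Matrix.mul_apply, Matrix.of_apply, Matrix.cons_val', Matrix.cons_val_fin_one,
      Matrix.cons_val_one, Fin.sum_univ_two, Matrix.cons_val_zero]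
    ring
  rw [Gamma0_mem, hentry]
  push_cast
  unfold firstColumn at e
  split_ifs at e with hg hh hh
  · simp [hg, hh]
  · have := Option.some_injective _ e
    field_simp at this
    linear_combination this

theorem index_Gamma0_prime_le (p : ℕ) [Fact p.Prime] : (Gamma0 p).index ≤ p + 1 := by
  let column : SL(2, ℤ) ⧸ Gamma0 p → Option (ZMod p) := fun x ↦ firstColumn p x.out
  have hinj : Function.Injective column := fun x y hxy ↦ by
    rw [← QuotientGroup.out_eq' x, ← QuotientGroup.out_eq' y, QuotientGroup.eq]
    exact inv_mul_mem_Gamma0_of_firstColumn_eq hxy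
  simpa [Subgroup.index] using Nat.card_le_card_of_injective column hinj

theorem index_Gamma0_ten_le : (Gamma0 10).index ≤ 18 := by
  have : Fact (Nat.Prime 2) := ⟨Nat.prime_two⟩
  have : Fact (Nat.Prime 5) := ⟨Nat.prime_five⟩
  calc (Gamma0 10).index = (Gamma0 2 ⊓ Gamma0 5).index := by
        rw [← Gamma0_mul_of_coprime (by norm_num)]
    _ ≤ (Gamma0 2).index * (Gamma0 5).index := Subgroup.index_inf_le
    _ ≤ 3 * 6 := Nat.mul_le_mul (index_Gamma0_prime_le 2) (index_Gamma0_prime_le 5)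

end Index

section ModularForms

/-- The predicate that `F` is a modular form of weight `k` for a subgroup `Γ` of `SL(2, ℤ)`;
boundedness at the cusps is expressed through all translates of `F` under `SL(2, ℤ)`. -/
structure IsModularForm (Γ : Subgroup SL(2, ℤ)) (k : ℤ) (F : ℍ → ℂ) : Prop where
  slash_eq : ∀ γ ∈ Γ, F ∣[k] γ = F
  mdifferentiable : MDiff F
  isBoundedAtImInfty_slash : ∀ γ : SL(2, ℤ), IsBoundedAtImInfty (F ∣[k] γ)

variable {Γ : Subgroup SL(2, ℤ)} {F G : ℍ → ℂ}

namespace IsModularForm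

theorem sub {k : ℤ} (hF : IsModularForm Γ k F) (hG : IsModularForm Γ k G) :
    IsModularForm Γ k (F - G) where
  slash_eq γ hγ := by
    rw [sub_eq_add_neg, SlashAction.add_slash, SlashAction.neg_slash, hF.slash_eq γ hγ,
      hG.slash_eq γ hγ]
  mdifferentiable := hF.mdifferentiable.sub hG.mdifferentiable
  isBoundedAtImInfty_slash γ := by
    rw [sub_eq_add_neg, SlashAction.add_slash, SlashAction.neg_slash]
    exact (hF.isBoundedAtImInfty_slash γ).add (hG.isBoundedAtImInfty_slash γ).neg_left

theorem mul {k l : ℤ} (hF : IsModularForm Γ k F) (hG : IsModularForm Γ l G) :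
    IsModularForm Γ (k + l) (F * G) where
  slash_eq γ hγ := by rw [mul_slash_SL2, hF.slash_eq γ hγ, hG.slash_eq γ hγ]
  mdifferentiable := hF.mdifferentiable.mul hG.mdifferentiable
  isBoundedAtImInfty_slash γ := by
    rw [mul_slash_SL2]
    exact (hF.isBoundedAtImInfty_slash γ).mul (hG.isBoundedAtImInfty_slash γ)

/-- The bundled modular form of Mathlib, for which the norm to level one is available. -/
def toModularForm [Γ.FiniteIndex] {k : ℤ} (hF : IsModularForm Γ k F) :
    ModularForm (Γ : Subgroup (GL (Fin 2) ℝ)) k where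
  toFun := F
  slash_action_eq' := by
    rintro _ ⟨γ, hγ, rfl⟩
    exact hF.slash_eq γ hγ
  holo' := hF.mdifferentiable
  bdd_at_cusps' hc := by
    rw [Subgroup.IsArithmetic.isCusp_iff_isCusp_SL2Z] at hc
    rw [OnePoint.isBoundedAt_iff_forall_SL2Z hc]
    exact fun γ _ ↦ hF.isBoundedAtImInfty_slash γ

end IsModularForm

theorem isBigO_prod_of_isBigO_one {ι α : Type*} [Fintype ι] {l : Filter α} {f : ι → α → ℂ}
    {φ : α → ℂ} (hbdd : ∀ i, f i =O[l] (1 : α → ℝ)) {i₀ : ι} (h : f i₀ =O[l] φ) :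
    (∏ i, f i) =O[l] φ := by
  classical
  have hprod := h.norm_right.mul (IsBigO.finsetProd (s := Finset.univ.erase i₀) fun i _ ↦ hbdd i)
  refine isBigO_norm_right.1 (hprod.congr (fun x ↦ ?_) fun x ↦ by simp)
  rw [← Finset.mul_prod_erase Finset.univ f (Finset.mem_univ i₀), Pi.mul_apply, Finset.prod_apply]

theorem relIndex_coe_SL (Γ : Subgroup SL(2, ℤ)) :
    (Γ : Subgroup (GL (Fin 2) ℝ)).relIndex 𝒮ℒ = Γ.index := by
  rw [MonoidHom.range_eq_map, Subgroup.relIndex_map_map_of_injective _ _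
    Matrix.SpecialLinearGroup.mapGL_injective, Subgroup.relIndex_top_right]

theorem IsModularForm.isBigO_norm [Γ.FiniteIndex] {k : ℤ} (hF : IsModularForm Γ k F) {φ : ℍ → ℂ}
    (hO : F =O[atImInfty] φ) : ⇑(ModularForm.norm 𝒮ℒ hF.toModularForm) =O[atImInfty] φ := by
  let := Fintype.ofFinite (𝒮ℒ ⧸ (Γ : Subgroup (GL (Fin 2) ℝ)).subgroupOf 𝒮ℒ)
  rw [ModularForm.coe_norm]
  refine isBigO_prod_of_isBigO_one (i₀ := ⟦1⟧) (Quotient.forall.mpr ?_) ?_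
  · rintro ⟨_, ⟨γ, rfl⟩⟩
    rw [SlashInvariantForm.quotientFunc_mk, ← map_inv]
    exact hF.isBoundedAtImInfty_slash γ⁻¹
  · have hcoe : ⇑hF.toModularForm = F := rfl
    simpa [SlashInvariantForm.quotientFunc_mk, hcoe] using hO

theorem IsModularForm.eq_zero_of_isBigO [Γ.FiniteIndex] {k n : ℕ} (hF : IsModularForm Γ k F)
    (hn : k * Γ.index < 12 * n) (hO : F =O[atImInfty] fun τ : ℍ ↦ 𝕢 1 (τ : ℂ) ^ n) : F = 0 := by
  set f := ModularForm.norm 𝒮ℒ hF.toModularForm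
  have hseries : HasQSeries (fun m ↦ (qExpansion 1 f).coeff m) f :=
    hasSum_qExpansion f one_pos one_mem_strictPeriods_SL
  have horder : (n : ℕ∞) ≤ (qExpansion 1 f).order :=
    PowerSeries.nat_le_order _ _ (hseries.coeff_eq_zero_of_isBigO (hF.isBigO_norm hO))
  have hnorm : f = 0 := by
    refine sturm_bound_levelOne (lt_of_lt_of_le ?_ horder)
    have hcard : Nat.card (𝒮ℒ ⧸ (Γ : Subgroup (GL (Fin 2) ℝ)).subgroupOf 𝒮ℒ) = Γ.index :=
      relIndex_coe_SL Γ
    rw [hcard, ← Nat.cast_mul, Int.toNat_natCast]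
    exact_mod_cast Nat.div_lt_of_lt_mul hn
  exact (ModularForm.norm_eq_zero_iff (f := hF.toModularForm) 𝒮ℒ).1 hnorm

end ModularForms

section SerreDerivative

theorem norm_deriv_comp_ofComplex_le {G : ℍ → ℂ} (hG : MDiff G) {M A : ℝ}
    (hM : ∀ z : ℍ, A ≤ z.im → ‖G z‖ ≤ M) {z : ℍ} (hA : A + 1 ≤ z.im) (h1 : 1 < z.im) :
    ‖deriv (G ∘ ofComplex) z‖ ≤ M := by
  have him : ∀ w ∈ Metric.closedBall (z : ℂ) 1, z.im - 1 ≤ w.im := fun w hw ↦ by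
    have hle := (Complex.abs_im_le_norm _).trans (mem_closedBall_iff_norm'.1 hw)
    rw [Complex.sub_im, coe_im] at hle
    linarith [(abs_le.1 hle).2]
  have hdiff : DifferentiableOn ℂ (G ∘ ofComplex) upperHalfPlaneSet :=
    UpperHalfPlane.mdifferentiable_iff.1 hG
  have hsphere : ∀ w ∈ Metric.sphere (z : ℂ) 1, ‖(G ∘ ofComplex) w‖ ≤ M := fun w hw ↦ by
    have hw' := him w (Metric.sphere_subset_closedBall hw)
    have hw0 : 0 < w.im := by linarith
    rw [Function.comp_apply, ofComplex_apply_of_im_pos hw0]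
    exact hM _ (show A ≤ w.im by linarith)
  refine (Complex.norm_deriv_le_of_forall_mem_sphere_norm_le one_pos
    (hdiff.mono ?_).diffContOnCl hsphere).trans_eq (div_one M)
  rw [closure_ball _ one_ne_zero]
  exact fun w hw ↦ show 0 < w.im by linarith [him w hw]

theorem isBoundedAtImInfty_normalizedDeriv {G : ℍ → ℂ} (hG : MDiff G)
    (hb : IsBoundedAtImInfty G) : IsBoundedAtImInfty (D G) := by
  rw [isBoundedAtImInfty_iff] at hb ⊢
  obtain ⟨M, A, hM⟩ := hb
  refine ⟨‖(2 * π * Complex.I)⁻¹‖ * M, max A 1 + 1, fun z hz ↦ ?_⟩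
  rw [normalizedDerivOfComplex, norm_mul]
  gcongr
  exact norm_deriv_comp_ofComplex_le hG hM (by linarith [le_max_left A 1])
    (by linarith [le_max_right A 1])

theorem IsModularForm.serreDerivative {Γ : Subgroup SL(2, ℤ)} {k : ℤ} {F : ℍ → ℂ}
    (hF : IsModularForm Γ k F) : IsModularForm Γ (k + 2) (serreDerivative k F) where
  slash_eq γ hγ := Derivative.serreDerivative_slash_invariant hF.mdifferentiable (hF.slash_eq γ hγ)
  mdifferentiable := Derivative.serreDerivative_mdifferentiable _ hF.mdifferentiable
  isBoundedAtImInfty_slash γ := by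
    rw [Derivative.serreDerivative_slash_equivariant hF.mdifferentiable]
    have hDF := isBoundedAtImInfty_normalizedDeriv (hF.mdifferentiable.slash k γ)
      (hF.isBoundedAtImInfty_slash γ)
    have hE2F := (EisensteinSeries.isBoundedAtImInfty_E2.mul
      (hF.isBoundedAtImInfty_slash γ)).const_smul_left (k * 12⁻¹ : ℂ)
    refine (IsBigO.sub hDF hE2F).congr_left fun z ↦ ?_
    simp only [Derivative.serreDerivative_apply, Pi.smul_apply, Pi.mul_apply, smul_eq_mul,
      ModularForm.SL_slash, mul_assoc]

end SerreDerivative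

section CompletedE2

/-- The completed Eisenstein series `E₂ - 3 / (π y)`: not holomorphic, but modular of weight 2. -/
noncomputable def completedE2 (z : ℍ) : ℂ := E2 z - 3 / (π * z.im)

theorem im_smul_eq_div_denom_mul (γ : SL(2, ℤ)) (z : ℍ) :
    ((γ • z).im : ℂ) =
      z.im / (denom γ z * (denom γ z - 2 * Complex.I * (γ 1 0 : ℤ) * z.im)) := by
  have him : (γ • z).im = _ := ModularGroup.im_smul_eq_div_normSq γ z
  have hden : (denom γ z).im = (γ 1 0 : ℤ) * z.im := by simp [ModularGroup.denom_apply]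
  have hsub := Complex.sub_conj (denom γ z)
  have hconj : starRingEnd ℂ (denom γ z) =
      denom γ z - 2 * Complex.I * (γ 1 0 : ℤ) * z.im := by
    rw [hden] at hsub
    push_cast at hsub
    linear_combination -hsub
  rw [him, Complex.ofReal_div, ← Complex.mul_conj, hconj]

theorem completedE2_smul (γ : SL(2, ℤ)) (z : ℍ) :
    completedE2 (γ • z) = denom γ z ^ 2 * completedE2 z := by
  have hden : denom γ z ≠ 0 := denom_ne_zero _ _
  have hy : (z.im : ℂ) ≠ 0 := mod_cast z.im_ne_zero
  have hpi : (π : ℂ) ≠ 0 := mod_cast Real.pi_ne_zero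
  have hE2 : E2 (γ • z) = denom γ z ^ 2 *
      (E2 z - 1 / (2 * (π ^ 2 / 6)) * (2 * π * Complex.I * (γ 1 0 : ℤ) / denom γ z)) := by
    have h := congrFun (EisensteinSeries.E2_slash_action γ) z
    simp only [SL_slash_apply, Pi.sub_apply, Pi.smul_apply, EisensteinSeries.D2, riemannZeta_two,
      smul_eq_mul] at h
    rw [← h, zpow_neg]
    field_simp
  rw [completedE2, completedE2, hE2, im_smul_eq_div_denom_mul]
  field_simp
  ring

theorem norm_completedE2_smul_mul_im (γ : SL(2, ℤ)) (z : ℍ) :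
    ‖completedE2 (γ • z)‖ * (γ • z).im = ‖completedE2 z‖ * z.im := by
  have him : (γ • z).im = _ := ModularGroup.im_smul_eq_div_normSq γ z
  have hden : ‖denom γ z‖ ≠ 0 := norm_ne_zero_iff.2 (denom_ne_zero γ z)
  rw [completedE2_smul, him, norm_mul, norm_pow, Complex.normSq_eq_norm_sq]
  field_simp

theorem exists_norm_completedE2_le {y : ℝ} (hy : 0 < y) :
    ∃ C, ∀ z : ℍ, y ≤ z.im → ‖completedE2 z‖ ≤ C := by
  obtain ⟨C, hC⟩ := hasQSeries_E2.exists_norm_le hy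
  refine ⟨C + 3 / (π * y), fun z hz ↦ (norm_sub_le _ _).trans (add_le_add (hC z hz) ?_)⟩
  have hnorm : ‖(3 / (π * z.im) : ℂ)‖ = 3 / (π * z.im) := by
    rw [← Complex.ofReal_ofNat, ← Complex.ofReal_mul, ← Complex.ofReal_div, Complex.norm_real]
    exact Real.norm_of_nonneg (by have := z.im_pos; positivity)
  rw [hnorm]
  gcongr

theorem one_le_norm_int_mul_add_int {τ : ℍ} (hτ : 1 ≤ τ.im) {A B : ℤ}
    (h : (A * τ + B : ℂ) ≠ 0) : 1 ≤ ‖(A * τ + B : ℂ)‖ := by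
  rcases eq_or_ne A 0 with rfl | hA
  · simp only [Int.cast_zero, zero_mul, zero_add] at h ⊢
    rw [Complex.norm_intCast]
    exact_mod_cast Int.one_le_abs (Int.cast_ne_zero.1 h)
  · calc (1 : ℝ) ≤ |(A : ℝ)| * τ.im :=
          one_le_mul_of_one_le_of_one_le (mod_cast Int.one_le_abs hA) hτ
      _ = |(A * τ + B : ℂ).im| := by simp [abs_mul, abs_of_pos τ.im_pos]
      _ ≤ _ := Complex.abs_im_le_norm _

theorem denom_natScale_smul_mul_denom {d : ℕ} (hd : d ≠ 0) (g γ : SL(2, ℤ)) (τ : ℍ) :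
    denom g (natScale d (γ • τ)) * denom γ τ =
      (g 1 0 * d * γ 0 0 + g 1 1 * γ 1 0 : ℤ) * τ + (g 1 0 * d * γ 0 1 + g 1 1 * γ 1 1 : ℤ) := by
  have hne : denom γ τ ≠ 0 := denom_ne_zero _ _
  have hnum : (natScale d (γ • τ) : ℂ) * denom γ τ = d * (γ 0 0 * τ + γ 0 1) := by
    rw [coe_natScale hd, UpperHalfPlane.specialLinearGroup_apply]
    rw [ModularGroup.denom_apply] at hne ⊢
    simp only [algebraMap_int_eq, eq_intCast, Complex.ofReal_intCast]
    rw [mul_assoc, div_mul_cancel₀ _ hne]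
  rw [ModularGroup.denom_apply g, add_mul, mul_assoc, hnum, ModularGroup.denom_apply γ]
  push_cast
  ring

theorem im_smul_natScale_smul_le {d : ℕ} (hd : d ≠ 0) (g γ : SL(2, ℤ)) {τ : ℍ} (hτ : 1 ≤ τ.im) :
    (g • natScale d (γ • τ)).im ≤ d * τ.im := by
  have hden : 1 ≤ ‖denom g (natScale d (γ • τ)) * denom γ τ‖ := by
    have hne : denom g (natScale d (γ • τ)) * denom γ τ ≠ 0 :=
      mul_ne_zero (denom_ne_zero _ _) (denom_ne_zero _ _)
    rw [denom_natScale_smul_mul_denom hd] at hne ⊢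
    exact one_le_norm_int_mul_add_int hτ hne
  have himg : (g • natScale d (γ • τ)).im = _ := ModularGroup.im_smul_eq_div_normSq g _
  have himγ : (γ • τ).im = _ := ModularGroup.im_smul_eq_div_normSq γ τ
  rw [himg, im_natScale hd, himγ, mul_div_assoc', div_div, ← Complex.normSq_mul,
    Complex.normSq_eq_norm_sq, mul_comm (denom γ τ)]
  exact div_le_self (mul_nonneg d.cast_nonneg τ.im_pos.le) (one_le_pow₀ hden)

theorem norm_completedE2_natScale_smul_mul_im_le {C : ℝ}
    (hC : ∀ z : ℍ, 1 / 2 ≤ z.im → ‖completedE2 z‖ ≤ C) {d : ℕ} (hd : d ≠ 0) (γ : SL(2, ℤ)) {τ : ℍ}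
    (hτ : 1 ≤ τ.im) : ‖completedE2 (natScale d (γ • τ))‖ * (γ • τ).im ≤ C * τ.im := by
  -- `‖completedE2 z‖ * z.im` is `SL(2, ℤ)`-invariant, so it can be estimated anywhere in the orbit.
  obtain ⟨g, hg⟩ := ModularGroup.exists_one_half_le_im_smul (natScale d (γ • τ))
  have hd0 : (0 : ℝ) < d := mod_cast Nat.pos_of_ne_zero hd
  refine le_of_mul_le_mul_left ?_ hd0
  calc d * (‖completedE2 (natScale d (γ • τ))‖ * (γ • τ).im)
      = ‖completedE2 (g • natScale d (γ • τ))‖ * (g • natScale d (γ • τ)).im := by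
        rw [norm_completedE2_smul_mul_im, im_natScale hd]; ring
    _ ≤ C * (d * τ.im) := mul_le_mul (hC _ hg) (im_smul_natScale_smul_le hd g γ hτ)
        (g • natScale d (γ • τ)).im_pos.le ((norm_nonneg _).trans (hC _ hg))
    _ = d * (C * τ.im) := by ring

theorem completedE2_natScale_smul {N d : ℕ} (hd0 : d ≠ 0) (hdN : d ∣ N) {γ : SL(2, ℤ)}
    (hγ : γ ∈ Gamma0 N) (τ : ℍ) :
    completedE2 (natScale d (γ • τ)) = denom γ τ ^ 2 * completedE2 (natScale d τ) := by
  rw [Gamma0_mem, ZMod.intCast_zmod_eq_zero_iff_dvd] at hγ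
  obtain ⟨c, hc⟩ : (d : ℤ) ∣ γ 1 0 := (Int.natCast_dvd_natCast.2 hdN).trans hγ
  have hdet : γ 0 0 * γ 1 1 - γ 0 1 * γ 1 0 = 1 := by rw [← Matrix.det_fin_two]; exact γ.2
  let g : SL(2, ℤ) := ⟨!![γ 0 0, γ 0 1 * d; c, γ 1 1], by
    rw [Matrix.det_fin_two_of]; rw [hc] at hdet; linarith⟩
  have hden : denom g (natScale d τ) = denom γ τ := by
    rw [ModularGroup.denom_apply, ModularGroup.denom_apply, hc, coe_natScale hd0]
    simp only [Matrix.of_apply, Matrix.cons_val', Matrix.cons_val_zero, Matrix.cons_val_fin_one,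
      Matrix.cons_val_one, Int.cast_mul, Int.cast_natCast, g]
    ring
  have hg : natScale d (γ • τ) = g • natScale d τ := by
    apply UpperHalfPlane.ext
    rw [coe_natScale hd0, UpperHalfPlane.coe_specialLinearGroup_apply,
      UpperHalfPlane.coe_specialLinearGroup_apply]
    simp only [hc, coe_natScale hd0, g, algebraMap_int_eq, eq_intCast, Complex.ofReal_intCast,
      Int.cast_mul, Int.cast_natCast, Complex.ofReal_mul, Complex.ofReal_natCast,
      Matrix.of_apply, Matrix.cons_val', Matrix.cons_val_zero, Matrix.cons_val_fin_one,
      Matrix.cons_val_one]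
    ring
  rw [hg, completedE2_smul, hden]

end CompletedE2

section EtaLogDeriv

/-- The logarithmic derivative, with respect to `D = q d/dq`, of the eta quotient
`∏ η(d τ) ^ r d` over the divisors `d` of `N`. -/
noncomputable def etaLogDeriv (N : ℕ) (r : ℕ → ℤ) (τ : ℍ) : ℂ :=
  24⁻¹ * ∑ d ∈ N.divisors, (d * r d : ℂ) * E2 (natScale d τ)

/-- The coefficients of the `q`-series of `etaLogDeriv N r`. They are rational so that finitely
many of them can be evaluated by the kernel. -/
def etaLogDerivCoeff (N : ℕ) (r : ℕ → ℤ) (n : ℕ) : ℚ :=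
  24⁻¹ * ∑ d ∈ N.divisors, d * r d *
    if d ∣ n then (if n / d = 0 then 1 else -24 * ArithmeticFunction.sigma 1 (n / d) : ℚ) else 0

variable {N : ℕ} {r g : ℕ → ℤ}

theorem etaLogDeriv_add (N : ℕ) (r s : ℕ → ℤ) :
    etaLogDeriv N (r + s) = etaLogDeriv N r + etaLogDeriv N s := by
  ext τ
  simp only [etaLogDeriv, Pi.add_apply, Int.cast_add, mul_add, add_mul, Finset.sum_add_distrib]

theorem hasQSeries_etaLogDeriv (N : ℕ) (r : ℕ → ℤ) :
    HasQSeries (fun n ↦ (etaLogDerivCoeff N r n : ℂ)) (etaLogDeriv N r) := by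
  have hsum := (HasQSeries.sum fun d (hd : d ∈ N.divisors) ↦ (hasQSeries_E2.comp_natScale
    (Nat.pos_of_mem_divisors hd).ne').const_mul (d * r d : ℂ)).const_mul 24⁻¹
  convert! hsum using 2 with n
  simp only [etaLogDerivCoeff, Rat.cast_mul, Rat.cast_sum, apply_ite (Rat.cast : ℚ → ℂ)]
  push_cast
  rfl

theorem etaLogDeriv_eq_completedE2 (hr : ∑ d ∈ N.divisors, r d = 0) (τ : ℍ) :
    etaLogDeriv N r τ = 24⁻¹ * ∑ d ∈ N.divisors, (d * r d : ℂ) * completedE2 (natScale d τ) := by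
  have hcorr : ∀ d ∈ N.divisors, (d * r d : ℂ) * (3 / (π * (natScale d τ).im : ℂ)) =
      r d * (3 / (π * τ.im)) := fun d hd ↦ by
    have hd0 := (Nat.pos_of_mem_divisors hd).ne'
    have hpi : (π : ℂ) ≠ 0 := mod_cast Real.pi_ne_zero
    have him : (τ.im : ℂ) ≠ 0 := mod_cast τ.im_ne_zero
    have hdC : (d : ℂ) ≠ 0 := mod_cast hd0
    rw [im_natScale hd0]
    push_cast
    field_simp
  have hrC : ∑ d ∈ N.divisors, (r d : ℂ) = 0 := mod_cast hr
  simp only [completedE2, mul_sub, Finset.sum_sub_distrib]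
  rw [Finset.sum_congr rfl hcorr, ← Finset.sum_mul, hrC, zero_mul, mul_zero, sub_zero,
    etaLogDeriv]

theorem norm_slash_mul_im (F : ℍ → ℂ) (γ : SL(2, ℤ)) (τ : ℍ) :
    ‖(F ∣[(2 : ℤ)] γ) τ‖ * τ.im = ‖F (γ • τ)‖ * (γ • τ).im := by
  have him : (γ • τ).im = _ := ModularGroup.im_smul_eq_div_normSq γ τ
  rw [SL_slash_apply, him, Complex.normSq_eq_norm_sq, norm_mul, norm_zpow, zpow_neg]
  norm_cast
  ring

theorem norm_etaLogDeriv_slash_le {C : ℝ} (hC : ∀ z : ℍ, 1 / 2 ≤ z.im → ‖completedE2 z‖ ≤ C)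
    (hr : ∑ d ∈ N.divisors, r d = 0) (γ : SL(2, ℤ)) {τ : ℍ} (hτ : 1 ≤ τ.im) :
    ‖(etaLogDeriv N r ∣[(2 : ℤ)] γ) τ‖ ≤ ‖(24⁻¹ : ℂ)‖ * ∑ d ∈ N.divisors, ‖(d * r d : ℂ)‖ * C := by
  refine le_of_mul_le_mul_right ?_ τ.im_pos
  rw [norm_slash_mul_im, etaLogDeriv_eq_completedE2 hr, norm_mul, mul_assoc, mul_assoc,
    Finset.sum_mul]
  gcongr
  refine (mul_le_mul_of_nonneg_right (norm_sum_le _ _) (γ • τ).im_pos.le).trans ?_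
  rw [Finset.sum_mul]
  refine Finset.sum_le_sum fun d hd ↦ ?_
  rw [norm_mul, mul_assoc, mul_assoc]
  exact mul_le_mul_of_nonneg_left (norm_completedE2_natScale_smul_mul_im_le hC
    (Nat.pos_of_mem_divisors hd).ne' γ hτ) (norm_nonneg _)

theorem isModularForm_etaLogDeriv (hr : ∑ d ∈ N.divisors, r d = 0) :
    IsModularForm (Gamma0 N) 2 (etaLogDeriv N r) where
  slash_eq γ hγ := by
    ext τ
    have hden : denom γ τ ≠ 0 := denom_ne_zero _ _
    have hsmul : etaLogDeriv N r (γ • τ) = denom γ τ ^ 2 * etaLogDeriv N r τ := by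
      rw [etaLogDeriv_eq_completedE2 hr, etaLogDeriv_eq_completedE2 hr, mul_left_comm,
        Finset.mul_sum _ _ (denom γ τ ^ 2)]
      congr 1
      refine Finset.sum_congr rfl fun d hd ↦ ?_
      rw [completedE2_natScale_smul (Nat.pos_of_mem_divisors hd).ne'
        (Nat.dvd_of_mem_divisors hd) hγ, mul_left_comm]
    rw [SL_slash_apply, hsmul, mul_right_comm, ← zpow_natCast, ← zpow_add₀ hden]
    simp
  mdifferentiable := (hasQSeries_etaLogDeriv N r).mdifferentiable
  isBoundedAtImInfty_slash γ := by
    obtain ⟨C, hC⟩ := exists_norm_completedE2_le one_half_pos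
    exact isBoundedAtImInfty_iff.2 ⟨_, 1, fun τ hτ ↦ norm_etaLogDeriv_slash_le hC hr γ hτ⟩

/-- The operator `F ↦ G · D (F / G)` for the eta quotient `G` with exponents `g`. -/
noncomputable def etaDerivative (N : ℕ) (g : ℕ → ℤ) (F : ℍ → ℂ) : ℍ → ℂ :=
  D F - etaLogDeriv N g * F

/-- The effect of `etaDerivative N g` on the coefficients of a `q`-series. -/
def etaDerivativeCoeff (N : ℕ) (g : ℕ → ℤ) (c : ℕ → ℚ) (n : ℕ) : ℚ :=
  n * c n - ∑ p ∈ antidiagonal n, etaLogDerivCoeff N g p.1 * c p.2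

theorem hasQSeries_etaDerivative {c : ℕ → ℚ} {F : ℍ → ℂ} (hF : HasQSeries (fun n ↦ (c n : ℂ)) F)
    (N : ℕ) (g : ℕ → ℤ) :
    HasQSeries (fun n ↦ (etaDerivativeCoeff N g c n : ℂ)) (etaDerivative N g F) := by
  have hcoeff : (fun n ↦ (etaDerivativeCoeff N g c n : ℂ)) = fun n : ℕ ↦
      n * (c n : ℂ) - ∑ p ∈ antidiagonal n, (etaLogDerivCoeff N g p.1 : ℂ) * c p.2 :=
    funext fun n ↦ by rw [etaDerivativeCoeff]; push_cast; rfl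
  have hmul := (hasQSeries_etaLogDeriv N g).mul hF
  rw [hcoeff]
  exact hF.normalizedDeriv.sub hmul

theorem isModularForm_etaDerivative {k : ℤ} {F : ℍ → ℂ} (hF : IsModularForm (Gamma0 N) k F)
    (hN : N ≠ 0) (hg : ∑ d ∈ N.divisors, g d = 2 * k) :
    IsModularForm (Gamma0 N) (k + 2) (etaDerivative N g F) := by
  have h1 : 1 ∈ N.divisors := Nat.one_mem_divisors.2 hN
  have hsingle : etaLogDeriv N (Pi.single 1 (2 * k)) = fun τ ↦ k * 12⁻¹ * E2 τ := by
    ext τ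
    have hscale : natScale 1 τ = τ := UpperHalfPlane.ext (by simp [coe_natScale])
    rw [etaLogDeriv, Finset.sum_eq_single_of_mem 1 h1 fun d _ hd ↦ by simp [hd], hscale]
    push_cast [Pi.single_eq_same]
    ring
  have heq : etaDerivative N g F =
      serreDerivative k F - etaLogDeriv N (g - Pi.single 1 (2 * k)) * F := by
    have hadd := etaLogDeriv_add N (g - Pi.single 1 (2 * k)) (Pi.single 1 (2 * k))
    rw [sub_add_cancel, hsingle] at hadd
    ext τ
    simp only [etaDerivative, hadd, Pi.sub_apply, Pi.mul_apply, Pi.add_apply,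
      Derivative.serreDerivative_apply]
    ring
  have hzero : ∑ d ∈ N.divisors, (g - Pi.single 1 (2 * k) : ℕ → ℤ) d = 0 := by
    have hsum : ∑ d ∈ N.divisors, (Pi.single 1 (2 * k) : ℕ → ℤ) d = 2 * k := by
      rw [Finset.sum_eq_single_of_mem 1 h1 fun d _ hd ↦ Pi.single_eq_of_ne hd _,
        Pi.single_eq_same]
    rw [← sub_eq_zero.2 (hg.trans hsum.symm), ← Finset.sum_sub_distrib]
    rfl
  rw [heq]
  have hmul := (isModularForm_etaLogDeriv hzero).mul hF
  rw [add_comm] at hmul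
  exact hF.serreDerivative.sub hmul

end EtaLogDeriv

section EtaQuotient

theorem eq_of_normalizedDeriv_eq {F G : ℍ → ℂ} (hF : MDiff F) (hG : MDiff G) (hD : D F = D G)
    (hlim : Tendsto (F - G) atImInfty (𝓝 0)) : F = G := by
  have hderiv : upperHalfPlaneSet.EqOn (deriv (F ∘ ofComplex)) (deriv (G ∘ ofComplex)) :=
    fun w hw ↦ mul_left_cancel₀ (inv_ne_zero Complex.two_pi_I_ne_zero) (congrFun hD ⟨w, hw⟩)
  obtain ⟨a, ha⟩ := isOpen_upperHalfPlaneSet.exists_eq_add_of_deriv_eq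
    (convex_halfSpace_im_gt 0).isPreconnected (UpperHalfPlane.mdifferentiable_iff.1 hF)
    (UpperHalfPlane.mdifferentiable_iff.1 hG) hderiv
  have hsub : ∀ τ : ℍ, F τ = G τ + a := fun τ ↦ by simpa using ha τ.im_pos
  have ha0 : a = 0 := by
    refine tendsto_nhds_unique (tendsto_const_nhds.congr fun τ ↦ ?_) hlim
    rw [Pi.sub_apply, hsub, add_sub_cancel_left]
  exact funext fun τ ↦ by rw [hsub, ha0, add_zero]

/-- The eta quotient `∏ η(d τ) ^ r d` over the divisors `d` of `N`. -/
noncomputable def etaQuotient (N : ℕ) (r : ℕ → ℤ) (τ : ℍ) : ℂ :=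
  ∏ d ∈ N.divisors, eta (natScale d τ) ^ r d

/-- Euler's product `eulerE` as a function of a complex variable. -/
noncomputable def complexEulerE (q : ℂ) : ℂ := ∏' j : ℕ, (1 - q ^ (j + 1))

variable {N : ℕ} {r g s : ℕ → ℤ}

theorem etaQuotient_ne_zero (N : ℕ) (r : ℕ → ℤ) (τ : ℍ) : etaQuotient N r τ ≠ 0 :=
  Finset.prod_ne_zero_iff.2 fun d _ ↦ zpow_ne_zero _ (eta_ne_zero (natScale d τ).im_pos)

theorem etaQuotient_add (N : ℕ) (r s : ℕ → ℤ) :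
    etaQuotient N (r + s) = etaQuotient N r * etaQuotient N s := by
  ext τ
  simp only [etaQuotient, Pi.mul_apply, Pi.add_apply, ← Finset.prod_mul_distrib]
  exact Finset.prod_congr rfl fun d _ ↦ zpow_add₀ (eta_ne_zero (natScale d τ).im_pos) _ _

theorem etaQuotient_neg (N : ℕ) (r : ℕ → ℤ) :
    etaQuotient N (-r) = (etaQuotient N r)⁻¹ := by
  ext τ
  simp only [etaQuotient, Pi.inv_apply, Pi.neg_apply, zpow_neg, Finset.prod_inv_distrib]

theorem etaLogDeriv_neg (N : ℕ) (r : ℕ → ℤ) : etaLogDeriv N (-r) = -etaLogDeriv N r := by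
  ext τ
  simp only [etaLogDeriv, Pi.neg_apply, Int.cast_neg, mul_neg, neg_mul, Finset.sum_neg_distrib]

theorem etaQuotient_comp_ofComplex_eventuallyEq (N : ℕ) (r : ℕ → ℤ) (τ : ℍ) :
    etaQuotient N r ∘ ofComplex =ᶠ[𝓝 (τ : ℂ)] fun w ↦ ∏ d ∈ N.divisors, eta (d * w) ^ r d := by
  filter_upwards [isOpen_upperHalfPlaneSet.mem_nhds τ.im_pos] with w hw
  rw [Function.comp_apply, etaQuotient, ofComplex_apply_of_im_pos hw]
  refine Finset.prod_congr rfl fun d hd ↦ ?_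
  rw [coe_natScale (Nat.pos_of_mem_divisors hd).ne']

theorem differentiableAt_eta_nat_mul {d : ℕ} (hd : d ≠ 0) (τ : ℍ) :
    DifferentiableAt ℂ (fun w ↦ eta (d * w)) τ := by
  have him : 0 < ((d : ℂ) * τ).im := by rw [← coe_natScale hd]; exact (natScale d τ).im_pos
  exact (differentiableAt_eta_of_mem_upperHalfPlaneSet him).comp (τ : ℂ) (by fun_prop)

theorem eta_nat_mul_ne_zero {d : ℕ} (hd : d ≠ 0) (τ : ℍ) : eta (d * τ) ≠ 0 := by
  rw [← coe_natScale hd]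
  exact eta_ne_zero (natScale d τ).im_pos

theorem logDeriv_eta_nat_mul {d : ℕ} (hd : d ≠ 0) (τ : ℍ) :
    logDeriv (fun w ↦ eta (d * w)) τ = π * Complex.I / 12 * (d * E2 (natScale d τ)) := by
  have heta : DifferentiableAt ℂ eta (d * τ) := by
    rw [← coe_natScale hd]
    exact differentiableAt_eta_of_mem_upperHalfPlaneSet (natScale d τ).im_pos
  have hcomp := logDeriv_comp (f := eta) (g := fun w : ℂ ↦ d * w) (x := τ) heta (by fun_prop)
  rw [Function.comp_def, deriv_const_mul_id', ← coe_natScale hd, logDeriv_eta_eq_E2] at hcomp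
  rw [hcomp]
  ring

theorem mdifferentiable_etaQuotient (N : ℕ) (r : ℕ → ℤ) : MDiff (etaQuotient N r) := fun τ ↦ by
  refine UpperHalfPlane.mdifferentiableAt_iff.2 (DifferentiableAt.congr_of_eventuallyEq ?_
    (etaQuotient_comp_ofComplex_eventuallyEq N r τ))
  refine DifferentiableAt.fun_finsetProd fun d hd ↦ ?_
  have hd0 := (Nat.pos_of_mem_divisors hd).ne'
  exact (differentiableAt_eta_nat_mul hd0 τ).zpow (Or.inl (eta_nat_mul_ne_zero hd0 τ))

theorem normalizedDeriv_etaQuotient (N : ℕ) (r : ℕ → ℤ) :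
    D (etaQuotient N r) = etaLogDeriv N r * etaQuotient N r := by
  ext τ
  have heq := etaQuotient_comp_ofComplex_eventuallyEq N r τ
  have hd0 : ∀ d ∈ N.divisors, d ≠ 0 := fun d hd ↦ (Nat.pos_of_mem_divisors hd).ne'
  have hlog : logDeriv (fun w ↦ ∏ d ∈ N.divisors, eta (d * w) ^ r d) τ =
      2 * π * Complex.I * etaLogDeriv N r τ := by
    rw [logDeriv_prod]
    · rw [etaLogDeriv, Finset.mul_sum, Finset.mul_sum]
      refine Finset.sum_congr rfl fun d hd ↦ ?_
      rw [logDeriv_fun_zpow (differentiableAt_eta_nat_mul (hd0 d hd) τ),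
        logDeriv_eta_nat_mul (hd0 d hd)]
      ring
    · exact fun d hd ↦ zpow_ne_zero _ (eta_nat_mul_ne_zero (hd0 d hd) τ)
    · exact fun d hd ↦ (differentiableAt_eta_nat_mul (hd0 d hd) τ).zpow
        (Or.inl (eta_nat_mul_ne_zero (hd0 d hd) τ))
  have hval := heq.eq_of_nhds
  rw [Function.comp_apply, ofComplex_apply] at hval
  rw [logDeriv_apply, ← heq.deriv_eq, ← hval, div_eq_iff (etaQuotient_ne_zero N r τ)] at hlog
  rw [normalizedDerivOfComplex, hlog, Pi.mul_apply]
  field_simp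

theorem normalizedDeriv_div_etaQuotient {F : ℍ → ℂ} (hF : MDiff F) (N : ℕ) (g : ℕ → ℤ) :
    D (F / etaQuotient N g) = etaDerivative N g F / etaQuotient N g := by
  rw [div_eq_mul_inv, ← etaQuotient_neg, Derivative.normalizedDerivOfComplex_mul _ _ hF
    (mdifferentiable_etaQuotient N (-g)), normalizedDeriv_etaQuotient, etaLogDeriv_neg,
    etaDerivative, etaQuotient_neg, div_eq_mul_inv]
  ring

theorem mdifferentiable_div_etaQuotient {F : ℍ → ℂ} (hF : MDiff F) (N : ℕ) (g : ℕ → ℤ) :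
    MDiff (F / etaQuotient N g) := by
  rw [div_eq_mul_inv, ← etaQuotient_neg]
  exact hF.mul (mdifferentiable_etaQuotient N (-g))

theorem eta_natScale {d : ℕ} (hd : d ≠ 0) (τ : ℍ) :
    eta (natScale d τ) = 𝕢 24 (τ : ℂ) ^ d * complexEulerE (𝕢 1 (τ : ℂ) ^ d) := by
  rw [coe_natScale hd, eta, qParam_nat_mul, ← qParam_nat_mul 1]
  rfl

theorem prod_zpow_eq_zpow_sum {ι K : Type*} [CommGroupWithZero K] {a : K} (ha : a ≠ 0)
    (s : Finset ι) (f : ι → ℤ) : ∏ i ∈ s, a ^ f i = a ^ ∑ i ∈ s, f i := by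
  classical
  induction s using Finset.induction_on with
  | empty => simp
  | insert i s hi ih => rw [Finset.prod_insert hi, Finset.sum_insert hi, zpow_add₀ ha, ih]

theorem etaQuotient_eq_qParam_zpow_mul_prod {m : ℤ} (hm : ∑ d ∈ N.divisors, d * r d = 24 * m)
    (τ : ℍ) : etaQuotient N r τ =
      𝕢 1 (τ : ℂ) ^ m * ∏ d ∈ N.divisors, complexEulerE (𝕢 1 (τ : ℂ) ^ d) ^ r d := by
  have hq : 𝕢 24 (τ : ℂ) ^ (24 : ℤ) = 𝕢 1 (τ : ℂ) := by
    simp only [Function.Periodic.qParam, ← Complex.exp_int_mul]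
    congr 1
    push_cast
    ring
  have hpow : ∏ d ∈ N.divisors, (𝕢 24 (τ : ℂ) ^ d) ^ r d = 𝕢 1 (τ : ℂ) ^ m := by
    rw [← hq, ← zpow_mul, ← hm, ← prod_zpow_eq_zpow_sum (qParam_ne_zero _)]
    exact Finset.prod_congr rfl fun d _ ↦ by rw [zpow_mul, zpow_natCast]
  rw [etaQuotient, ← hpow, ← Finset.prod_mul_distrib]
  refine Finset.prod_congr rfl fun d hd ↦ ?_
  rw [eta_natScale (Nat.pos_of_mem_divisors hd).ne', mul_zpow]

theorem tendsto_complexEulerE_zero : Tendsto complexEulerE (𝓝 0) (𝓝 1) := by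
  have hcont : ContinuousAt complexEulerE 0 :=
    (differentiableOn_tprod_one_sub_pow.differentiableAt
      (Metric.isOpen_ball.mem_nhds (Metric.mem_ball_self one_pos))).continuousAt
  simpa [ContinuousAt, complexEulerE] using hcont

theorem tendsto_etaQuotient_div_qParam_zpow {m : ℤ}
    (hm : ∑ d ∈ N.divisors, d * r d = 24 * m) :
    Tendsto (fun τ : ℍ ↦ etaQuotient N r τ / 𝕢 1 (τ : ℂ) ^ m) atImInfty (𝓝 1) := by
  have hlim : Tendsto (fun τ : ℍ ↦ ∏ d ∈ N.divisors, complexEulerE (𝕢 1 (τ : ℂ) ^ d) ^ r d)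
      atImInfty (𝓝 (∏ d ∈ N.divisors, (1 : ℂ) ^ r d)) := by
    refine tendsto_finsetProd _ fun d hd ↦ ?_
    have hq : Tendsto (fun τ : ℍ ↦ 𝕢 1 (τ : ℂ) ^ d) atImInfty (𝓝 0) := by
      simpa [(Nat.pos_of_mem_divisors hd).ne'] using (qParam_tendsto_atImInfty one_pos).pow d
    exact (tendsto_complexEulerE_zero.comp hq).zpow₀ _ (Or.inl one_ne_zero)
  simp only [one_zpow, Finset.prod_const_one] at hlim
  refine hlim.congr fun τ ↦ ?_
  rw [etaQuotient_eq_qParam_zpow_mul_prod hm, mul_div_cancel_left₀ _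
    (zpow_ne_zero _ (qParam_ne_zero _))]

theorem tendsto_div_etaQuotient {c : ℕ → ℂ} {F : ℍ → ℂ} (hF : HasQSeries c F) {m : ℕ}
    (hm : ∑ d ∈ N.divisors, d * g d = 24 * (m : ℤ)) (hc : ∀ n < m, c n = 0) :
    Tendsto (F / etaQuotient N g) atImInfty (𝓝 (c m)) := by
  have hquot := (hF.tendsto_div_pow hc).div (tendsto_etaQuotient_div_qParam_zpow hm) one_ne_zero
  rw [div_one] at hquot
  refine hquot.congr fun τ ↦ ?_
  rw [Pi.div_apply, zpow_natCast]
  exact div_div_div_cancel_right₀ (pow_ne_zero _ (qParam_ne_zero _)) _ _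

theorem eq_smul_etaQuotient_of_etaDerivative_eq_zero {c : ℕ → ℂ} {F : ℍ → ℂ}
    (hF : HasQSeries c F) {m : ℕ} (hm : ∑ d ∈ N.divisors, d * g d = 24 * (m : ℤ))
    (hc : ∀ n < m, c n = 0) (hzero : etaDerivative N g F = 0) : F = c m • etaQuotient N g := by
  have hconst : F / etaQuotient N g = fun _ ↦ c m := by
    refine eq_of_normalizedDeriv_eq (mdifferentiable_div_etaQuotient hF.mdifferentiable N g)
      mdifferentiable_const ?_ (tendsto_sub_nhds_zero_iff.2 (tendsto_div_etaQuotient hF hm hc))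
    rw [normalizedDeriv_div_etaQuotient hF.mdifferentiable, hzero,
      Derivative.normalizedDerivOfComplex_const]
    exact funext fun τ ↦ zero_div _
  exact funext fun τ ↦ (div_eq_iff (etaQuotient_ne_zero N g τ)).1 (congrFun hconst τ)

theorem normalizedDeriv_etaLogDeriv_div_etaQuotient [(Gamma0 N).FiniteIndex] {m n : ℕ}
    (hr : ∑ d ∈ N.divisors, r d = 0) (hg : ∑ d ∈ N.divisors, g d = 4)
    (hgs : ∑ d ∈ N.divisors, (g + s) d = 8)
    (hm : ∑ d ∈ N.divisors, d * (g + s) d = 24 * (m : ℤ))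
    (horder : ∀ j < m, etaDerivativeCoeff N g (etaLogDerivCoeff N r) j = 0)
    (hn : 6 * (Gamma0 N).index < 12 * n)
    (hsturm : ∀ j < n, etaDerivativeCoeff N (g + s)
      (etaDerivativeCoeff N g (etaLogDerivCoeff N r)) j = 0) :
    D (etaLogDeriv N r / etaQuotient N g) =
      (etaDerivativeCoeff N g (etaLogDerivCoeff N r) m : ℂ) • etaQuotient N s := by
  have hN : N ≠ 0 := by rintro rfl; simp at hg
  have hform := isModularForm_etaLogDeriv hr
  have hseries := hasQSeries_etaDerivative (hasQSeries_etaLogDeriv N r) N g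
  have hweight : IsModularForm (Gamma0 N) (6 : ℕ)
      (etaDerivative N (g + s) (etaDerivative N g (etaLogDeriv N r))) :=
    isModularForm_etaDerivative (isModularForm_etaDerivative hform hN hg) hN hgs
  have hzero := hweight.eq_zero_of_isBigO hn
    ((hasQSeries_etaDerivative hseries N (g + s)).isBigO_pow fun j hj ↦ mod_cast hsturm j hj)
  have hY := eq_smul_etaQuotient_of_etaDerivative_eq_zero hseries hm
    (fun j hj ↦ mod_cast horder j hj) hzero
  rw [normalizedDeriv_div_etaQuotient hform.mdifferentiable, hY, etaQuotient_add]
  ext τ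
  have hne := etaQuotient_ne_zero N g τ
  simp only [Pi.div_apply, Pi.smul_apply, Pi.mul_apply, smul_eq_mul]
  field_simp

end EtaQuotient

section LevelTen

/-- The exponents `a, b, c, d` at the divisors `1, 2, 5, 10` of the level. -/
def levelTenExponents (a b c d : ℤ) : ℕ → ℤ
  | 1 => a
  | 2 => b
  | 5 => c
  | 10 => d
  | _ => 0

/-- The exponents of the Hauptmodul `T = η(2τ) η(10τ)³ / (η(τ)³ η(5τ))`. -/
def tExp : ℕ → ℤ := levelTenExponents (-3) 1 (-1) 3

/-- The exponents of the modular function `u = η(2τ)⁵ η(5τ) / (η(τ)⁵ η(10τ))`. -/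
def uExp : ℕ → ℤ := levelTenExponents (-5) 5 1 (-1)

/-- The exponents of the weight 2 form `η(τ) η(2τ)² η(5τ)³ / η(10τ)²`. -/
def fExp : ℕ → ℤ := levelTenExponents 1 2 3 (-2)

/-- The exponents of the weight 2 form `η(τ)³ η(5τ) η(10τ)² / η(2τ)²`. -/
def vExp : ℕ → ℤ := levelTenExponents 3 (-2) 1 2

/-- The exponents of `S = η(2τ)⁸ η(5τ)³ / η(τ)⁷`, which is `q` times the integrand. -/
def sExp : ℕ → ℤ := levelTenExponents (-7) 8 3 0

/-- The function `ρ = D(log T) / (η(τ) η(2τ)² η(5τ)³ / η(10τ)²)`, a primitive of `4 S` for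
`D = q d/dq`. -/
noncomputable def rho : ℍ → ℂ := etaLogDeriv 10 tExp / etaQuotient 10 fExp

theorem levelTenExponents_add (a b c d a' b' c' d' : ℤ) :
    levelTenExponents a b c d + levelTenExponents a' b' c' d' =
      levelTenExponents (a + a') (b + b') (c + c') (d + d') := by
  ext n
  rw [Pi.add_apply]
  unfold levelTenExponents
  split <;> rfl

theorem vExp_add_uExp : vExp + uExp = fExp + tExp := by
  simp only [vExp, uExp, fExp, tExp, levelTenExponents_add]
  rfl

theorem vExp_add_uExp_add_uExp : vExp + uExp + uExp = sExp := by
  simp only [vExp, uExp, levelTenExponents_add]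
  rfl

theorem six_mul_index_Gamma0_ten_lt : 6 * (Gamma0 10).index < 12 * 10 := by
  have := index_Gamma0_ten_le
  lia

theorem mdifferentiable_rho : MDiff rho :=
  mdifferentiable_div_etaQuotient (hasQSeries_etaLogDeriv 10 tExp).mdifferentiable 10 fExp

theorem normalizedDeriv_rho : D rho = (4 : ℂ) • etaQuotient 10 sExp := by
  have hcoeff : etaDerivativeCoeff 10 fExp (etaLogDerivCoeff 10 tExp) 1 = 4 := by decide +kernel
  rw [rho, normalizedDeriv_etaLogDeriv_div_etaQuotient (s := sExp) (m := 1) (by decide)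
    (by decide) (by decide) (by decide) (by decide +kernel) six_mul_index_Gamma0_ten_lt
    (by decide +kernel), hcoeff, Rat.cast_ofNat]

theorem normalizedDeriv_etaLogDeriv_uExp_div :
    D (etaLogDeriv 10 uExp / etaQuotient 10 vExp) = (20 : ℂ) • etaQuotient 10 sExp := by
  have hcoeff : etaDerivativeCoeff 10 vExp (etaLogDerivCoeff 10 uExp) 2 = 20 := by decide +kernel
  rw [normalizedDeriv_etaLogDeriv_div_etaQuotient (s := sExp) (m := 2) (by decide)
    (by decide) (by decide) (by decide) (by decide +kernel) six_mul_index_Gamma0_ten_lt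
    (by decide +kernel), hcoeff, Rat.cast_ofNat]

theorem tendsto_rho : Tendsto rho atImInfty (𝓝 1) := by
  have hcoeff : etaLogDerivCoeff 10 tExp 0 = 1 := by decide +kernel
  have hlim := tendsto_div_etaQuotient (N := 10) (g := fExp) (m := 0)
    (hasQSeries_etaLogDeriv 10 tExp) (by decide) (by simp)
  rwa [hcoeff, Rat.cast_one] at hlim

theorem tendsto_etaLogDeriv_uExp_div :
    Tendsto (etaLogDeriv 10 uExp / etaQuotient 10 vExp) atImInfty (𝓝 5) := by
  have hcoeff : etaLogDerivCoeff 10 uExp 1 = 5 := by decide +kernel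
  have horder : ∀ n < 1, etaLogDerivCoeff 10 uExp n = 0 := by decide +kernel
  have hlim := tendsto_div_etaQuotient (N := 10) (g := vExp) (m := 1)
    (hasQSeries_etaLogDeriv 10 uExp) (by decide) fun n hn ↦ mod_cast horder n hn
  rwa [hcoeff, Rat.cast_ofNat] at hlim

theorem etaLogDeriv_tExp : etaLogDeriv 10 tExp = rho * etaQuotient 10 fExp :=
  funext fun τ ↦ (div_mul_cancel₀ _ (etaQuotient_ne_zero 10 fExp τ)).symm

theorem etaLogDeriv_uExp : etaLogDeriv 10 uExp = (5 : ℂ) • (rho * etaQuotient 10 vExp) := by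
  have heq : etaLogDeriv 10 uExp / etaQuotient 10 vExp = (5 : ℂ) • rho := by
    refine eq_of_normalizedDeriv_eq (mdifferentiable_div_etaQuotient
      (hasQSeries_etaLogDeriv 10 uExp).mdifferentiable 10 vExp) (mdifferentiable_rho.const_smul _)
      ?_ ?_
    · rw [normalizedDeriv_etaLogDeriv_uExp_div,
        Derivative.normalizedDerivOfComplex_smul _ _ mdifferentiable_rho, normalizedDeriv_rho,
        smul_smul]
      norm_num
    · have hlim := tendsto_etaLogDeriv_uExp_div.sub (tendsto_rho.const_smul (5 : ℂ))
      rw [smul_eq_mul, mul_one, sub_self] at hlim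
      exact hlim
  rw [← smul_mul_assoc, ← heq]
  exact funext fun τ ↦ (div_mul_cancel₀ _ (etaQuotient_ne_zero 10 vExp τ)).symm

theorem tendsto_etaQuotient_tExp : Tendsto (etaQuotient 10 tExp) atImInfty (𝓝 0) := by
  have hlim := (tendsto_etaQuotient_div_qParam_zpow (N := 10) (r := tExp) (m := 1)
    (by decide)).mul (qParam_tendsto_atImInfty one_pos)
  rw [mul_zero] at hlim
  refine hlim.congr fun τ ↦ ?_
  rw [zpow_one, div_mul_cancel₀ _ (qParam_ne_zero _)]

theorem tendsto_etaQuotient_uExp : Tendsto (etaQuotient 10 uExp) atImInfty (𝓝 1) := by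
  simpa using tendsto_etaQuotient_div_qParam_zpow (N := 10) (r := uExp) (m := 0) (by decide)

theorem etaQuotient_uExp : etaQuotient 10 uExp = 1 + (5 : ℂ) • etaQuotient 10 tExp := by
  have hT := mdifferentiable_etaQuotient 10 tExp
  have h1 : MDiff (1 : ℍ → ℂ) := mdifferentiable_const
  refine eq_of_normalizedDeriv_eq (mdifferentiable_etaQuotient 10 uExp)
    (h1.add (hT.const_smul _)) ?_ ?_
  · calc D (etaQuotient 10 uExp)
        = (5 : ℂ) • (rho * etaQuotient 10 (vExp + uExp)) := by
          rw [normalizedDeriv_etaQuotient, etaLogDeriv_uExp, etaQuotient_add, smul_mul_assoc,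
            mul_assoc]
      _ = (5 : ℂ) • D (etaQuotient 10 tExp) := by
          rw [vExp_add_uExp, etaQuotient_add, normalizedDeriv_etaQuotient, etaLogDeriv_tExp,
            mul_assoc]
      _ = D (1 + (5 : ℂ) • etaQuotient 10 tExp) := by
          rw [Derivative.normalizedDerivOfComplex_add _ _ h1 (hT.const_smul _),
            Derivative.normalizedDerivOfComplex_smul _ _ hT, Pi.one_def,
            Derivative.normalizedDerivOfComplex_const, zero_add]
  · have hlim := tendsto_etaQuotient_uExp.sub
      (tendsto_const_nhds (x := (1 : ℂ)).add (tendsto_etaQuotient_tExp.const_smul (5 : ℂ)))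
    rw [smul_zero, add_zero, sub_self] at hlim
    exact hlim

theorem five_smul_rho_sq : (5 : ℂ) • rho ^ 2 = 1 + (4 : ℂ) • etaQuotient 10 uExp ^ 2 := by
  have hu := mdifferentiable_etaQuotient 10 uExp
  have h1 : MDiff (1 : ℍ → ℂ) := mdifferentiable_const
  have hu2 : MDiff (etaQuotient 10 uExp ^ 2) := hu.pow 2
  have hrho2 : MDiff (rho ^ 2) := mdifferentiable_rho.pow 2
  refine eq_of_normalizedDeriv_eq (hrho2.const_smul _) (h1.add (hu2.const_smul _)) ?_ ?_
  · have hS := vExp_add_uExp_add_uExp ▸ etaQuotient_add 10 (vExp + uExp) uExp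
    rw [etaQuotient_add] at hS
    rw [Derivative.normalizedDerivOfComplex_add _ _ h1 (hu2.const_smul _),
      Derivative.normalizedDerivOfComplex_smul _ _ hu2,
      Derivative.normalizedDerivOfComplex_smul _ _ hrho2, Pi.one_def,
      Derivative.normalizedDerivOfComplex_const,
      Derivative.normalizedDerivOfComplex_pow _ _ mdifferentiable_rho,
      Derivative.normalizedDerivOfComplex_pow _ _ hu, normalizedDeriv_rho,
      normalizedDeriv_etaQuotient, etaLogDeriv_uExp, hS]
    ext τ
    simp only [Pi.smul_apply, Pi.add_apply, Pi.zero_apply, Pi.mul_apply, Pi.pow_apply, smul_eq_mul]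
    push_cast
    ring
  · have hlim := ((tendsto_rho.pow 2).const_smul (5 : ℂ)).sub (tendsto_const_nhds (x := (1 : ℂ)).add
      ((tendsto_etaQuotient_uExp.pow 2).const_smul (4 : ℂ)))
    norm_num at hlim
    exact hlim

theorem five_mul_rho_sq (τ : ℍ) : 5 * rho τ ^ 2 = 1 + 4 * (1 + 5 * etaQuotient 10 tExp τ) ^ 2 := by
  simpa [etaQuotient_uExp] using congrFun five_smul_rho_sq τ

end LevelTen

section RealNome

theorem ofReal_eulerE (q : ℝ) : (eulerE q : ℂ) = complexEulerE q := by
  have hmap := Function.LeftInverse.map_tprod (g := Complex.ofRealHom) (g' := Complex.re)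
    (L := SummationFilter.unconditional ℕ) (fun j : ℕ ↦ 1 - q ^ (j + 1))
    Complex.continuous_ofReal Complex.continuous_re Complex.ofReal_re
  simpa [eulerE, complexEulerE] using hmap

theorem eulerE_nonneg {q : ℝ} (hq : q ∈ Set.Ico 0 1) : 0 ≤ eulerE q :=
  tprod_nonneg fun _ ↦ sub_nonneg.2 (pow_le_one₀ hq.1 hq.2.le)

theorem eulerE_ne_zero {q : ℝ} (hq : q ∈ Set.Ico 0 1) : eulerE q ≠ 0 := by
  refine tprod_one_add_ne_zero_of_summable (f := fun j : ℕ ↦ -q ^ (j + 1)) (fun j ↦ ?_) ?_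
  · rw [← sub_eq_add_neg]
    exact (sub_pos.2 (pow_lt_one₀ hq.1 hq.2 j.succ_ne_zero)).ne'
  · simpa only [norm_neg, norm_pow, Real.norm_of_nonneg hq.1] using
      (summable_nat_add_iff 1).2 (summable_geometric_of_lt_one hq.1 hq.2)

theorem continuousOn_eulerE : ContinuousOn eulerE (Set.Ico 0 1) := by
  have hmaps : Set.MapsTo ((↑) : ℝ → ℂ) (Set.Ico 0 1) (Metric.ball 0 1) := fun q hq ↦ by
    simpa [abs_of_nonneg hq.1] using hq.2
  have hcont : ContinuousOn (fun q : ℝ ↦ complexEulerE q) (Set.Ico 0 1) :=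
    differentiableOn_tprod_one_sub_pow.continuousOn.comp
      Complex.continuous_ofReal.continuousOn hmaps
  refine (Complex.continuous_re.comp_continuousOn hcont).congr fun q _ ↦ ?_
  rw [Function.comp_apply, ← ofReal_eulerE, Complex.ofReal_re]

/-- The point `log q / (2πi)` of the upper half plane with nome `q`, for `0 < q < 1` (a junk value
otherwise). -/
noncomputable def nomePoint (q : ℝ) : ℍ := ofComplex (Function.Periodic.invQParam 1 q)

variable {q : ℝ}

theorem im_invQParam_pos (hq : q ∈ Set.Ioo 0 1) : 0 < (Function.Periodic.invQParam 1 q).im := by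
  rw [Function.Periodic.im_invQParam, Complex.norm_real, Real.norm_of_nonneg hq.1.le]
  exact mul_pos_of_neg_of_neg (div_neg_of_neg_of_pos (by norm_num) two_pi_pos)
    (Real.log_neg hq.1 hq.2)

theorem coe_nomePoint (hq : q ∈ Set.Ioo 0 1) :
    (nomePoint q : ℂ) = Function.Periodic.invQParam 1 q := by
  rw [nomePoint, ofComplex_apply_of_im_pos (im_invQParam_pos hq)]

theorem qParam_nomePoint (hq : q ∈ Set.Ioo 0 1) : 𝕢 1 (nomePoint q : ℂ) = q := by
  rw [coe_nomePoint hq, Function.Periodic.qParam_right_inv one_ne_zero (mod_cast hq.1.ne')]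

theorem exp_neg_two_pi_mul_mem_Ioo {t : ℝ} (ht : 0 < t) :
    Real.exp (-2 * π * t) ∈ Set.Ioo 0 1 :=
  ⟨Real.exp_pos _, Real.exp_lt_one_iff.2 (mul_neg_of_neg_of_pos (by linarith [pi_pos]) ht)⟩

theorem coe_nomePoint_exp {t : ℝ} (ht : 0 < t) :
    (nomePoint (Real.exp (-2 * π * t)) : ℂ) = Complex.I * t := by
  rw [coe_nomePoint (exp_neg_two_pi_mul_mem_Ioo ht), Function.Periodic.invQParam,
    ← Complex.ofReal_log (Real.exp_pos _).le, Real.log_exp]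
  field_simp
  push_cast
  linear_combination (-2 * (π : ℂ) * t) * Complex.I_sq

theorem tendsto_nomePoint_atImInfty : Tendsto nomePoint (𝓝[>] 0) atImInfty := by
  have hcoe : Tendsto ((↑) : ℝ → ℂ) (𝓝[>] 0) (𝓝[≠] 0) :=
    tendsto_nhdsWithin_iff.2 ⟨(Complex.continuous_ofReal.tendsto' 0 0 rfl).mono_left
      nhdsWithin_le_nhds, by filter_upwards [self_mem_nhdsWithin] with q hq using
        Complex.ofReal_ne_zero.2 (ne_of_gt hq)⟩
  have him := tendsto_comap_iff.1 ((Function.Periodic.invQParam_tendsto one_pos).comp hcoe)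
  refine tendsto_comap_iff.2 (him.congr' ?_)
  filter_upwards [Ioo_mem_nhdsGT one_pos] with q hq
  exact congrArg Complex.im (coe_nomePoint hq).symm

theorem hasDerivAt_comp_nomePoint {F : ℍ → ℂ} (hF : MDiff F) (hq : q ∈ Set.Ioo 0 1) :
    HasDerivAt (fun x ↦ F (nomePoint x)) (D F (nomePoint q) / q) q := by
  have hlog : HasDerivAt (Function.Periodic.invQParam 1) (1 / (2 * π * Complex.I) * (q : ℂ)⁻¹) q :=
    ((Complex.hasDerivAt_log (Complex.ofReal_mem_slitPlane.2 hq.1)).const_mul _).congr_deriv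
      (by simp)
  have hcomp : DifferentiableAt ℂ (F ∘ ofComplex) (Function.Periodic.invQParam 1 q) := by
    rw [← coe_nomePoint hq]
    exact UpperHalfPlane.mdifferentiableAt_iff.1 (hF _)
  refine (hcomp.hasDerivAt.comp (q : ℂ) hlog).comp_ofReal.congr_deriv ?_
  rw [normalizedDerivOfComplex, coe_nomePoint hq]
  ring

end RealNome

section Evaluation

variable {q x : ℝ}

/-- The integrand `E(q²)⁸ E(q⁵)³ / E(q)⁷`, which is `q⁻¹` times the eta quotient with exponents
`sExp` at the point of nome `q`. -/
noncomputable def eulerIntegrand (q : ℝ) : ℝ :=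
  eulerE (q ^ 2) ^ 8 * eulerE (q ^ 5) ^ 3 / eulerE q ^ 7

theorem eulerIntegrand_nonneg (hq : q ∈ Set.Ico 0 1) : 0 ≤ eulerIntegrand q := by
  have hpow (d : ℕ) (hd : d ≠ 0) : 0 ≤ eulerE (q ^ d) :=
    eulerE_nonneg ⟨pow_nonneg hq.1 d, pow_lt_one₀ hq.1 hq.2 hd⟩
  exact div_nonneg (mul_nonneg (pow_nonneg (hpow 2 two_ne_zero) 8)
    (pow_nonneg (hpow 5 (by norm_num)) 3)) (pow_nonneg (eulerE_nonneg hq) 7)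

theorem continuousOn_eulerIntegrand : ContinuousOn eulerIntegrand (Set.Ico 0 1) := by
  have hpow (d : ℕ) (hd : d ≠ 0) : ContinuousOn (fun q ↦ eulerE (q ^ d)) (Set.Ico 0 1) :=
    continuousOn_eulerE.comp (continuous_pow d).continuousOn
      fun q hq ↦ ⟨pow_nonneg hq.1 d, pow_lt_one₀ hq.1 hq.2 hd⟩
  exact (((hpow 2 two_ne_zero).pow 8).mul ((hpow 5 (by norm_num)).pow 3)).div
    (continuousOn_eulerE.pow 7) fun q hq ↦ pow_ne_zero 7 (eulerE_ne_zero hq)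

theorem prod_divisors_ten {M : Type*} [CommMonoid M] (f : ℕ → M) :
    ∏ d ∈ Nat.divisors 10, f d = f 1 * f 2 * f 5 * f 10 := by
  rw [show Nat.divisors 10 = {1, 2, 5, 10} from rfl]
  simp [mul_assoc]

theorem etaQuotient_sExp_nomePoint (hq : q ∈ Set.Ioo 0 1) :
    etaQuotient 10 sExp (nomePoint q) = q * eulerIntegrand q := by
  rw [etaQuotient_eq_qParam_zpow_mul_prod (m := 1) (by decide), qParam_nomePoint hq, zpow_one,
    prod_divisors_ten]
  simp only [sExp, levelTenExponents, eulerIntegrand, ← Complex.ofReal_pow, ← ofReal_eulerE,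
    zpow_neg, zpow_ofNat, pow_one]
  push_cast
  ring

theorem hasDerivAt_rho_nomePoint (hq : q ∈ Set.Ioo 0 1) :
    HasDerivAt (fun x ↦ rho (nomePoint x)) ((4 * eulerIntegrand q : ℝ) : ℂ) q := by
  have hq0 : (q : ℂ) ≠ 0 := mod_cast hq.1.ne'
  refine (hasDerivAt_comp_nomePoint mdifferentiable_rho hq).congr_deriv ?_
  rw [normalizedDeriv_rho, Pi.smul_apply, etaQuotient_sExp_nomePoint hq, smul_eq_mul]
  push_cast
  field_simp

theorem rho_nomePoint (hx : x ∈ Set.Ioo 0 1) :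
    rho (nomePoint x) = ((1 + 4 * ∫ q in (0 : ℝ)..x, eulerIntegrand q : ℝ) : ℂ) := by
  have hint : IntervalIntegrable (fun q ↦ ((4 * eulerIntegrand q : ℝ) : ℂ))
      MeasureTheory.volume 0 x := by
    refine ContinuousOn.intervalIntegrable (Complex.continuous_ofReal.comp_continuousOn
      (continuousOn_const.mul (continuousOn_eulerIntegrand.mono ?_)))
    rw [Set.uIcc_of_le hx.1.le]
    exact Set.Icc_subset_Ico_right hx.2
  have hftc := intervalIntegral.integral_eq_sub_of_hasDerivAt_of_tendsto hx.1
    (fun q hq ↦ hasDerivAt_rho_nomePoint ⟨hq.1, hq.2.trans hx.2⟩) hint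
    (tendsto_rho.comp tendsto_nomePoint_atImInfty)
    ((hasDerivAt_rho_nomePoint hx).continuousAt.tendsto.mono_left nhdsWithin_le_nhds)
  rw [intervalIntegral.integral_ofReal, intervalIntegral.integral_const_mul] at hftc
  rw [Complex.ofReal_add, hftc, Complex.ofReal_one, add_sub_cancel]

theorem eta_I_mul_inv {t : ℝ} (ht : 0 < t) :
    eta (Complex.I * (t⁻¹ : ℝ)) = √t * eta (Complex.I * t) := by
  have ht0 : (t : ℂ) ≠ 0 := mod_cast ht.ne'
  have hinv : -1 / (Complex.I * t) = Complex.I * (t⁻¹ : ℝ) := by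
    push_cast
    field_simp
    rw [Complex.I_sq]
  have hsqrt : Complex.sqrt (Complex.I * t) = Complex.sqrt Complex.I * √t := by
    have hexp : √t = Real.exp (Real.log t / 2) := by rw [Real.exp_half, Real.exp_log ht]
    rw [mul_comm Complex.I, sqrt_eq_exp (mul_ne_zero ht0 Complex.I_ne_zero),
      sqrt_eq_exp Complex.I_ne_zero, Complex.log_ofReal_mul ht Complex.I_ne_zero, hexp,
      Complex.ofReal_exp, ← Complex.exp_add]
    push_cast
    ring_nf
  have hI : Complex.sqrt Complex.I ≠ 0 := by simp [Complex.sqrt]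
  have htrans := eta_comp_eq_csqrt_I_inv (x := Complex.I * t) (by simpa [upperHalfPlaneSet])
  simp only [Function.comp_apply, Pi.smul_apply, Pi.mul_apply, smul_eq_mul] at htrans
  rwa [hinv, hsqrt, mul_assoc, inv_mul_cancel_left₀ hI] at htrans

theorem eta_natScale_inv_sqrt {N d e : ℕ} (hN : N ≠ 0) (hde : d * e = N) {τ : ℍ}
    (hτ : (τ : ℂ) = Complex.I * ((√N)⁻¹ : ℝ)) :
    eta (natScale e τ) = √(d / √N) * eta (natScale d τ) := by
  obtain ⟨hd, he⟩ : d ≠ 0 ∧ e ≠ 0 := mul_ne_zero_iff.1 (hde ▸ hN)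
  have hinv : (d / √N)⁻¹ = e * (√N)⁻¹ := by
    have hsq : √N * √N = d * e := by rw [Real.mul_self_sqrt N.cast_nonneg, ← hde, Nat.cast_mul]
    field_simp
    linear_combination hsq
  have hcoe (k : ℕ) (hk : k ≠ 0) : (natScale k τ : ℂ) = Complex.I * (k * (√N)⁻¹ : ℝ) := by
    rw [coe_natScale hk, hτ]
    push_cast
    ring
  rw [hcoe e he, hcoe d hd, ← hinv, eta_I_mul_inv (by positivity), div_eq_mul_inv]

theorem sqrt_inv_sqrt_ten_pow_div : √(1 / √10) ^ 3 / √(2 / √10) = √5 / 10 := by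
  have hsqrt : √10 = √2 * √5 := by rw [← Real.sqrt_mul zero_le_two]; norm_num
  have htwo_sq : √2 ^ 2 = 2 := Real.sq_sqrt zero_le_two
  have hfive_sq : √5 ^ 2 = 5 := Real.sq_sqrt (by norm_num)
  rw [Real.sqrt_div zero_le_one, Real.sqrt_div zero_le_two, Real.sqrt_one]
  have hsqrt_sq : √√10 ^ 2 = √10 := Real.sq_sqrt (Real.sqrt_nonneg _)
  field_simp
  rw [hsqrt_sq, hsqrt]
  linear_combination (-√5 ^ 2) * htwo_sq - 2 * hfive_sq

theorem etaQuotient_tExp_inv_sqrt_ten {τ : ℍ} (hτ : (τ : ℂ) = Complex.I * ((√10)⁻¹ : ℝ)) :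
    etaQuotient 10 tExp τ = (√5 / 10 : ℝ) := by
  have hten := eta_natScale_inv_sqrt (N := 10) (d := 1) (e := 10) (by norm_num) (by norm_num)
    (mod_cast hτ)
  have hfive := eta_natScale_inv_sqrt (N := 10) (d := 2) (e := 5) (by norm_num) (by norm_num)
    (mod_cast hτ)
  have hone := eta_ne_zero (natScale 1 τ).im_pos
  have htwo := eta_ne_zero (natScale 2 τ).im_pos
  have hne : (√(2 / √10) : ℂ) ≠ 0 := by
    have : 0 < √(2 / √10) := by positivity
    exact_mod_cast this.ne'
  rw [← sqrt_inv_sqrt_ten_pow_div, etaQuotient, prod_divisors_ten]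
  simp only [tExp, levelTenExponents, zpow_neg, zpow_ofNat, hten, hfive]
  push_cast
  field_simp

theorem sq_one_add_four_mul_integral :
    (1 + 4 * ∫ q in (0 : ℝ)..Real.exp (-2 * π * (√10)⁻¹), eulerIntegrand q) ^ 2 =
      (10 + 4 * √5) / 5 := by
  have ht : 0 < (√10)⁻¹ := by positivity
  have hrho := five_mul_rho_sq (nomePoint (Real.exp (-2 * π * (√10)⁻¹)))
  rw [rho_nomePoint (exp_neg_two_pi_mul_mem_Ioo ht),
    etaQuotient_tExp_inv_sqrt_ten (coe_nomePoint_exp ht)] at hrho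
  have hsq : √5 ^ 2 = 5 := Real.sq_sqrt (by norm_num)
  have hreal : 5 * (1 + 4 * ∫ q in (0 : ℝ)..Real.exp (-2 * π * (√10)⁻¹), eulerIntegrand q) ^ 2 =
      1 + 4 * (1 + 5 * (√5 / 10)) ^ 2 := mod_cast hrho
  linear_combination hreal / 5 + hsq / 5

end Evaluation

theorem stmt_8 :
    (∫ q in (0:ℝ)..Real.exp (-2 * Real.pi / Real.sqrt 10),
        eulerE (q ^ 2) ^ 8 * eulerE (q ^ 5) ^ 3 / eulerE q ^ 7)
      = (Real.sqrt ((10 + 4 * Real.sqrt 5) / 5) - 1) / 4 := by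
  rw [div_eq_mul_inv (-2 * π)]
  change ∫ q in (0 : ℝ)..Real.exp (-2 * π * (√10)⁻¹), eulerIntegrand q = _
  have hx := exp_neg_two_pi_mul_mem_Ioo (t := (√10)⁻¹) (by positivity)
  have hnonneg : 0 ≤ ∫ q in (0 : ℝ)..Real.exp (-2 * π * (√10)⁻¹), eulerIntegrand q :=
    intervalIntegral.integral_nonneg hx.1.le
      fun q hq ↦ eulerIntegrand_nonneg ⟨hq.1, hq.2.trans_lt hx.2⟩
  rw [← sq_one_add_four_mul_integral, Real.sqrt_sq (by positivity)]
  ring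
end

section
/- There exists a sequence of integers a(1), a(2), a(3), … such that for every real number q with 0 < q < 1, the series ∑_{n=1}^∞ n·a(n)·q^n converges absolutely and q · E(q)^8 E(q^{10})^3 / E(q^2)^7 = ∑_{n=1}^∞ n·a(n)·q^n; in particular a(1) = 1, a(2) = −4, a(3) = 9, a(4) = −14. -/
open Real

/-!
Write `θ(z; q) = ∑ j, z ^ j q ^ (j (j - 1) / 2)`. Let `R = θ(-q; q⁵) / θ(-q²; q⁵)` be the
Rogers-Ramanujan quotient without its factor `q ^ (1/5)`, and `k = q R(q) R(q²)²`. Ramanujan's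
evaluations of `k⁻¹ - 4 - k` and `k⁻¹ + 1 - k` as eta quotients, together with
`q k' / k = E(q) E(q²)² E(q⁵)³ / E(q¹⁰)²`, give

`d/dq ((1 - 2 k) / (k⁻¹ + 1 - k)) = k' k⁻¹ (k⁻¹ - 4 - k) / (k⁻¹ + 1 - k)²
  = E(q)⁸ E(q¹⁰)³ / E(q²)⁷`.

The function being differentiated is a power series with integer coefficients `a(n)`, because theta
series with constant term `1` are units of `ℤ⟦X⟧`; applying `q d/dq` multiplies `a(n)` by `n`.

The identities between theta functions come from the Jacobi triple product and from products of two
theta series: viewing the double series as a sum over `ℤ[i]` and collecting the cosets of the ideal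
generated by `1 + i`, or by `2 + i`, splits such a product into further products. The logarithmic
derivative of `R` comes from the latter splitting of `E(q)⁶`, written as a double series weighted
by a quadratic form.
-/

open Filter Topology

namespace QSeries

/-! ### Triangular exponents -/

/-- The triangular exponent `j (j - 1) / 2` of a bilateral theta series; the division is exact. -/
def tri (j : ℤ) : ℤ := j * (j - 1) / 2

theorem two_mul_tri (j : ℤ) : 2 * tri j = j * (j - 1) :=
  Int.mul_ediv_cancel' (Int.even_mul_pred_self j).two_dvd

theorem tri_add (i j : ℤ) : tri (i + j) = tri i + tri j + i * j := by
  linarith [two_mul_tri (i + j), two_mul_tri i, two_mul_tri j]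

theorem tri_neg (j : ℤ) : tri (-j) = tri j + j := by
  linarith [two_mul_tri (-j), two_mul_tri j]

theorem tri_one_sub (j : ℤ) : tri (1 - j) = tri j := by
  linarith [two_mul_tri (1 - j), two_mul_tri j]

theorem tri_nonneg (j : ℤ) : 0 ≤ tri j := by
  have two_mul_nonneg : 0 ≤ j * (j - 1) := by
    rcases le_or_gt j 0 with hj | hj <;> nlinarith
  linarith [two_mul_tri j]

theorem summable_abs_pow_mul_zpow_mul_zpow_tri {r z : ℝ} (hr₀ : 0 < r) (hr₁ : r < 1)
    (hz : 0 < z) (p : ℕ) :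
    Summable fun j : ℤ ↦ |(j : ℝ)| ^ p * (z ^ j * r ^ tri j) := by
  have hT : 0 < -log r / (2 * π) := div_pos (neg_pos.2 (log_neg hr₀ hr₁)) (by positivity)
  refine (summable_pow_mul_jacobiTheta₂_term_bound ((|log z| + |log r| / 2) / (2 * π)) hT
    p).of_nonneg_of_le (fun j ↦ by positivity) fun j ↦ ?_
  have term_eq_exp : z ^ j * r ^ tri j = exp (log z * j + log r * tri j) := by
    rw [exp_add, exp_mul, exp_mul, exp_log hr₀, exp_log hz, rpow_intCast, rpow_intCast]
  have tri_eq : (tri j : ℝ) = (j : ℝ) ^ 2 / 2 - j / 2 := by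
    have := two_mul_tri j
    rify at this
    linarith
  have exponent_eq : -π * (-log r / (2 * π) * (j : ℝ) ^ 2 -
      2 * ((|log z| + |log r| / 2) / (2 * π)) * |(j : ℝ)|)
      = log r * (j : ℝ) ^ 2 / 2 + |log z * j| + |log r * j| / 2 := by
    rw [abs_mul, abs_mul]
    field_simp
    ring
  rw [term_eq_exp, tri_eq]
  push_cast
  rw [exponent_eq]
  refine mul_le_mul_of_nonneg_left (exp_le_exp.2 ?_) (by positivity)
  linarith [le_abs_self (log z * j), neg_abs_le (log r * j)]

/-! ### Infinite `q`-products -/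

/-- The infinite `q`-Pochhammer symbol `(a; q)_∞`. -/
noncomputable def qPochhammer (a q : ℂ) : ℂ := ∏' k : ℕ, (1 - a * q ^ k)

/-- Euler's product `E(q) = (q; q)_∞` on the complex unit disc. -/
noncomputable def eulerProd (q : ℂ) : ℂ := qPochhammer q q

section Products

variable {a q : ℂ}

theorem summable_norm_neg_mul_pow (a : ℂ) (hq : ‖q‖ < 1) :
    Summable fun k : ℕ ↦ ‖-(a * q ^ k)‖ := by
  simpa only [norm_neg, norm_mul, norm_pow] using
    (summable_geometric_of_lt_one (norm_nonneg q) hq).mul_left ‖a‖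

theorem multipliable_one_sub_mul_pow (a : ℂ) (hq : ‖q‖ < 1) :
    Multipliable fun k : ℕ ↦ 1 - a * q ^ k := by
  simpa only [sub_eq_add_neg] using
    multipliable_one_add_of_summable (summable_norm_neg_mul_pow a hq)

theorem one_sub_ne_zero_of_norm_lt_one {x : ℂ} (hx : ‖x‖ < 1) : 1 - x ≠ 0 :=
  sub_ne_zero.2 fun h ↦ by simp [← h] at hx

theorem norm_pow_lt_one (hq : ‖q‖ < 1) {n : ℕ} (hn : n ≠ 0) : ‖q ^ n‖ < 1 := by
  simpa only [norm_pow] using pow_lt_one₀ (norm_nonneg q) hq hn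

theorem qPochhammer_ne_zero (hq : ‖q‖ < 1) (ha : ‖a‖ < 1) : qPochhammer a q ≠ 0 := by
  refine tprod_one_add_ne_zero_of_summable (f := fun k : ℕ ↦ -(a * q ^ k)) (fun k ↦ ?_)
    (summable_norm_neg_mul_pow a hq)
  rw [← sub_eq_add_neg]
  refine one_sub_ne_zero_of_norm_lt_one ?_
  rw [norm_mul, norm_pow]
  exact mul_lt_one_of_nonneg_of_lt_one_left (norm_nonneg a) ha
    (pow_le_one₀ (norm_nonneg q) hq.le)

theorem eulerProd_ne_zero (hq : ‖q‖ < 1) : eulerProd q ≠ 0 :=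
  qPochhammer_ne_zero hq hq

theorem eulerProd_pow_ne_zero (hq : ‖q‖ < 1) {n : ℕ} (hn : n ≠ 0) : eulerProd (q ^ n) ≠ 0 :=
  eulerProd_ne_zero (norm_pow_lt_one hq hn)

theorem eulerProd_eq_tprod (q : ℂ) : eulerProd q = ∏' k : ℕ, (1 - q ^ (k + 1)) :=
  tprod_congr fun k ↦ by rw [pow_succ']

theorem qPochhammer_eq_one_sub_mul (a : ℂ) (hq : ‖q‖ < 1) :
    qPochhammer a q = (1 - a) * qPochhammer (a * q) q := by
  have shifted : Multipliable fun k : ℕ ↦ 1 - a * q ^ (k + 1) :=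
    (multipliable_one_sub_mul_pow (a * q) hq).congr fun k ↦ by ring
  have tail_eq : ∏' k : ℕ, (1 - a * q ^ (k + 1)) = qPochhammer (a * q) q :=
    tprod_congr fun k ↦ by ring
  have split_first := tprod_eq_zero_mul' (f := fun k : ℕ ↦ 1 - a * q ^ k) shifted
  rwa [tail_eq, pow_zero, mul_one] at split_first

theorem qPochhammer_mul_qPochhammer_neg (a : ℂ) (hq : ‖q‖ < 1) :
    qPochhammer a q * qPochhammer (-a) q = qPochhammer (a ^ 2) (q ^ 2) := by
  rw [qPochhammer, qPochhammer, ← (multipliable_one_sub_mul_pow a hq).tprod_mul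
    (multipliable_one_sub_mul_pow (-a) hq)]
  exact tprod_congr fun k ↦ by ring

theorem qPochhammer_eq_prod_range (a : ℂ) (hq : ‖q‖ < 1) (d : ℕ) [NeZero d] :
    qPochhammer a q = ∏ r ∈ Finset.range d, qPochhammer (a * q ^ r) (q ^ d) := by
  let e : Fin d × ℕ ≃ ℕ := (Equiv.prodComm _ _).trans (Nat.divModEquiv d).symm
  have factor_eq (p : Fin d × ℕ) :
      1 - a * q ^ e p = 1 - a * q ^ (p.1 : ℕ) * (q ^ d) ^ p.2 := by
    rw [show e p = p.2 * d + p.1 from rfl]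
    ring
  have fiber (r : Fin d) : Multipliable fun k : ℕ ↦ 1 - a * q ^ (r : ℕ) * (q ^ d) ^ k :=
    multipliable_one_sub_mul_pow _ (norm_pow_lt_one hq (NeZero.ne d))
  have whole : Multipliable fun p : Fin d × ℕ ↦ 1 - a * q ^ (p.1 : ℕ) * (q ^ d) ^ p.2 :=
    (e.multipliable_iff.2 (multipliable_one_sub_mul_pow a hq)).congr factor_eq
  calc qPochhammer a q
      = ∏' p : Fin d × ℕ, (1 - a * q ^ (p.1 : ℕ) * (q ^ d) ^ p.2) := by
        rw [qPochhammer, ← e.tprod_eq]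
        exact tprod_congr factor_eq
    _ = ∏' r : Fin d, qPochhammer (a * q ^ (r : ℕ)) (q ^ d) := whole.tprod_prod' fiber
    _ = ∏ r ∈ Finset.range d, qPochhammer (a * q ^ r) (q ^ d) := by
        rw [tprod_fintype, Finset.prod_range]

end Products

/-! ### The Jacobi triple product -/

/-- The partial product `(q; q)_n` of Euler's product. -/
noncomputable def finiteEulerProd (q : ℂ) (n : ℕ) : ℂ := ∏ k ∈ Finset.range n, (1 - q ^ (k + 1))

/-- `1 / (q; q)_n`, extended by zero to negative `n`. -/
noncomputable def invFiniteEulerProd (q : ℂ) (n : ℤ) : ℂ :=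
  if 0 ≤ n then (finiteEulerProd q n.toNat)⁻¹ else 0

/-- The coefficient of `z ^ j` in `∏ k < n, (1 + z q ^ k) (1 + z⁻¹ q ^ (k + 1))`, that is, the
central `q`-binomial coefficient `[2n, n + j]` times `q ^ tri j`. -/
noncomputable def tripleProdCoeff (q : ℂ) (n : ℕ) (j : ℤ) : ℂ :=
  finiteEulerProd q (2 * n) * invFiniteEulerProd q (n - j) * invFiniteEulerProd q (n + j) *
    q ^ tri j

section TripleProduct

variable {q z : ℂ}

theorem finiteEulerProd_succ (q : ℂ) (n : ℕ) :
    finiteEulerProd q (n + 1) = finiteEulerProd q n * (1 - q ^ (n + 1)) :=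
  Finset.prod_range_succ _ _

theorem finiteEulerProd_ne_zero (hq : ‖q‖ < 1) (n : ℕ) : finiteEulerProd q n ≠ 0 :=
  Finset.prod_ne_zero_iff.2 fun k _ ↦
    one_sub_ne_zero_of_norm_lt_one (norm_pow_lt_one hq k.succ_ne_zero)

theorem tendsto_finiteEulerProd (hq : ‖q‖ < 1) :
    Tendsto (finiteEulerProd q) atTop (𝓝 (eulerProd q)) :=
  (multipliable_one_sub_mul_pow q hq).hasProd.tendsto_prod_nat.congr fun n ↦
    Finset.prod_congr rfl fun k _ ↦ by rw [pow_succ']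

theorem invFiniteEulerProd_sub_one (hq : ‖q‖ < 1) (n : ℤ) :
    invFiniteEulerProd q (n - 1) = (1 - q ^ n) * invFiniteEulerProd q n := by
  rcases lt_trichotomy n 0 with hn | rfl | hn
  · simp [invFiniteEulerProd, show ¬ 1 ≤ n by lia, show ¬ 0 ≤ n by lia]
  · simp [invFiniteEulerProd]
  · obtain ⟨m, rfl⟩ : ∃ m : ℕ, n = (m + 1 : ℕ) := ⟨(n - 1).toNat, by lia⟩
    have factor_ne_zero : 1 - q ^ (m + 1) ≠ 0 :=
      one_sub_ne_zero_of_norm_lt_one (norm_pow_lt_one hq m.succ_ne_zero)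
    have prod_ne_zero := finiteEulerProd_ne_zero hq m
    rw [zpow_natCast, invFiniteEulerProd, invFiniteEulerProd, if_pos (by lia), if_pos (by lia),
      Int.toNat_natCast, show ((m + 1 : ℕ) - 1 : ℤ).toNat = m by lia, finiteEulerProd_succ]
    field_simp

theorem tripleProdCoeff_succ (hq₀ : q ≠ 0) (hq : ‖q‖ < 1) (n : ℕ) (j : ℤ) :
    tripleProdCoeff q (n + 1) j = (1 + q ^ (2 * n + 1)) * tripleProdCoeff q n j +
      q ^ n * tripleProdCoeff q n (j - 1) + q ^ (n + 1) * tripleProdCoeff q n (j + 1) := by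
  have prod_eq : finiteEulerProd q (2 * (n + 1)) =
      finiteEulerProd q (2 * n) * (1 - q ^ (2 * n + 1)) * (1 - q ^ (2 * n + 2)) := by
    rw [show 2 * (n + 1) = 2 * n + 1 + 1 by ring, finiteEulerProd_succ, finiteEulerProd_succ]
  have tri_succ : tri (j + 1) = tri j + j := by linarith [tri_add j 1, show tri 1 = 0 from rfl]
  have tri_pred : tri (j - 1) = tri j - j + 1 := by
    linarith [sub_eq_add_neg j 1 ▸ tri_add j (-1), show tri (-1) = 1 from rfl]
  have inv_sub_eq := invFiniteEulerProd_sub_one hq (n - j + 1)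
  have inv_sub_pred_eq := invFiniteEulerProd_sub_one hq (n - j)
  have inv_add_eq := invFiniteEulerProd_sub_one hq (n + j + 1)
  have inv_add_pred_eq := invFiniteEulerProd_sub_one hq (n + j)
  rw [add_sub_cancel_right] at inv_sub_eq inv_add_eq
  simp only [tripleProdCoeff, prod_eq, tri_succ, tri_pred, Nat.cast_add, Nat.cast_one]
  rw [show (n - (j + 1) : ℤ) = n - j - 1 by ring, show (n + (j - 1) : ℤ) = n + j - 1 by ring,
    show (n - (j - 1) : ℤ) = n - j + 1 by ring, show (n + (j + 1) : ℤ) = n + j + 1 by ring,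
    show (n + 1 - j : ℤ) = n - j + 1 by ring, show (n + 1 + j : ℤ) = n + j + 1 by ring,
    inv_sub_pred_eq, inv_add_pred_eq, inv_sub_eq, inv_add_eq]
  have hqj : q ^ j ≠ 0 := zpow_ne_zero j hq₀
  simp only [zpow_add₀ hq₀, zpow_sub₀ hq₀, zpow_natCast, zpow_one]
  field_simp
  ring

theorem tripleProdCoeff_eq_zero (q : ℂ) {n : ℕ} {j : ℤ} (hj : j ∉ Finset.Icc (-n : ℤ) n) :
    tripleProdCoeff q n j = 0 := by
  rw [Finset.mem_Icc, not_and_or] at hj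
  rcases hj with hj | hj
  · rw [tripleProdCoeff, invFiniteEulerProd.eq_def q (n + j), if_neg (by lia)]
    simp
  · rw [tripleProdCoeff, invFiniteEulerProd.eq_def q (n - j), if_neg (by lia)]
    simp

theorem summable_mul_tripleProdCoeff (q : ℂ) (n : ℕ) (w : ℤ → ℂ) :
    Summable fun j ↦ w j * tripleProdCoeff q n j :=
  summable_of_ne_finset_zero fun j hj ↦ by rw [tripleProdCoeff_eq_zero q hj, mul_zero]

theorem tsum_mul_tripleProdCoeff_zero (q : ℂ) (w : ℤ → ℂ) :
    ∑' j, w j * tripleProdCoeff q 0 j = w 0 := by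
  rw [tsum_eq_single 0 fun j hj ↦ by
    rw [tripleProdCoeff_eq_zero q (by simpa using hj), mul_zero]]
  simp [tripleProdCoeff, invFiniteEulerProd, finiteEulerProd, tri]

theorem tsum_mul_tripleProdCoeff_succ (hq₀ : q ≠ 0) (hq : ‖q‖ < 1) (n : ℕ) (w : ℤ → ℂ) :
    ∑' j, w j * tripleProdCoeff q (n + 1) j =
      (1 + q ^ (2 * n + 1)) * ∑' j, w j * tripleProdCoeff q n j +
      q ^ n * ∑' j, w (j + 1) * tripleProdCoeff q n j +
      q ^ (n + 1) * ∑' j, w (j - 1) * tripleProdCoeff q n j := by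
  have center := (summable_mul_tripleProdCoeff q n w).hasSum
  have right : HasSum (fun j ↦ w j * tripleProdCoeff q n (j - 1))
      (∑' j, w (j + 1) * tripleProdCoeff q n j) := by
    simpa [Function.comp_def] using (Equiv.subRight (1 : ℤ)).hasSum_iff.2
      (summable_mul_tripleProdCoeff q n fun j ↦ w (j + 1)).hasSum
  have left : HasSum (fun j ↦ w j * tripleProdCoeff q n (j + 1))
      (∑' j, w (j - 1) * tripleProdCoeff q n j) := by
    simpa [Function.comp_def] using (Equiv.addRight (1 : ℤ)).hasSum_iff.2
      (summable_mul_tripleProdCoeff q n fun j ↦ w (j - 1)).hasSum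
  rw [← (((center.mul_left _).add (right.mul_left _)).add (left.mul_left _)).tsum_eq]
  refine tsum_congr fun j ↦ ?_
  rw [tripleProdCoeff_succ hq₀ hq]
  ring

theorem tsum_zpow_mul_tripleProdCoeff (hq₀ : q ≠ 0) (hq : ‖q‖ < 1) (hz : z ≠ 0) (n : ℕ) :
    ∑' j : ℤ, z ^ j * tripleProdCoeff q n j =
      ∏ k ∈ Finset.range n, ((1 + z * q ^ k) * (1 + z⁻¹ * q ^ (k + 1))) := by
  induction n with
  | zero => rw [tsum_mul_tripleProdCoeff_zero, zpow_zero, Finset.prod_range_zero]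
  | succ n ih =>
    rw [tsum_mul_tripleProdCoeff_succ hq₀ hq, Finset.prod_range_succ, ← ih]
    simp only [zpow_add_one₀ hz, zpow_sub_one₀ hz, mul_right_comm _ z, mul_right_comm _ z⁻¹,
      tsum_mul_right]
    field_simp
    ring

theorem tsum_mul_neg_one_zpow_mul_tripleProdCoeff_succ (hq₀ : q ≠ 0) (hq : ‖q‖ < 1) (n : ℕ) :
    ∑' j : ℤ, (j * (-1) ^ j) * tripleProdCoeff q (n + 1) j =
      (1 - q ^ n) * (1 - q ^ (n + 1)) * ∑' j : ℤ, (j * (-1) ^ j) * tripleProdCoeff q n j +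
      (q ^ (n + 1) - q ^ n) * ∑' j : ℤ, (-1) ^ j * tripleProdCoeff q n j := by
  have weighted := summable_mul_tripleProdCoeff q n fun j ↦ j * (-1) ^ j
  have unweighted := summable_mul_tripleProdCoeff q n fun j ↦ (-1) ^ j
  have up : ∑' j : ℤ, (((j + 1 : ℤ) : ℂ) * (-1) ^ (j + 1)) * tripleProdCoeff q n j =
      -(∑' j : ℤ, (j * (-1) ^ j) * tripleProdCoeff q n j +
        ∑' j : ℤ, (-1) ^ j * tripleProdCoeff q n j) := by
    rw [← weighted.tsum_add unweighted, ← tsum_neg]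
    refine tsum_congr fun j ↦ ?_
    rw [zpow_add_one₀ (by simp)]
    push_cast
    ring
  have down : ∑' j : ℤ, (((j - 1 : ℤ) : ℂ) * (-1) ^ (j - 1)) * tripleProdCoeff q n j =
      -(∑' j : ℤ, (j * (-1) ^ j) * tripleProdCoeff q n j -
        ∑' j : ℤ, (-1) ^ j * tripleProdCoeff q n j) := by
    rw [← weighted.tsum_sub unweighted, ← tsum_neg]
    refine tsum_congr fun j ↦ ?_
    rw [zpow_sub_one₀ (by simp)]
    push_cast
    ring
  rw [tsum_mul_tripleProdCoeff_succ hq₀ hq, up, down]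
  ring

theorem tsum_mul_neg_one_zpow_mul_tripleProdCoeff (hq₀ : q ≠ 0) (hq : ‖q‖ < 1) (n : ℕ) :
    ∑' j : ℤ, (j * (-1) ^ j) * tripleProdCoeff q (n + 1) j =
      -(finiteEulerProd q n * finiteEulerProd q (n + 1)) := by
  induction n with
  | zero =>
    rw [tsum_mul_neg_one_zpow_mul_tripleProdCoeff_succ hq₀ hq, tsum_mul_tripleProdCoeff_zero,
      tsum_mul_tripleProdCoeff_zero]
    simp [finiteEulerProd]
  | succ n ih =>
    have alternating_eq_zero : ∑' j : ℤ, (-1) ^ j * tripleProdCoeff q (n + 1) j = 0 := by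
      rw [tsum_zpow_mul_tripleProdCoeff hq₀ hq (by simp), Finset.prod_range_succ']
      simp
    rw [tsum_mul_neg_one_zpow_mul_tripleProdCoeff_succ hq₀ hq, ih, alternating_eq_zero,
      finiteEulerProd_succ q (n + 1), finiteEulerProd_succ q n]
    ring

theorem tendsto_invFiniteEulerProd (hq : ‖q‖ < 1) (j : ℤ) :
    Tendsto (fun n : ℕ ↦ invFiniteEulerProd q (n + j)) atTop (𝓝 (eulerProd q)⁻¹) := by
  have index_tendsto : Tendsto (fun n : ℕ ↦ ((n : ℤ) + j).toNat) atTop atTop :=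
    tendsto_atTop.2 fun b ↦ (eventually_ge_atTop (b + j.natAbs)).mono fun n hn ↦ by lia
  refine (((tendsto_finiteEulerProd hq).inv₀ (eulerProd_ne_zero hq)).comp index_tendsto).congr' ?_
  filter_upwards [eventually_ge_atTop j.natAbs] with n hn
  rw [invFiniteEulerProd, if_pos (by lia), Function.comp_apply]

theorem tendsto_tripleProdCoeff (hq : ‖q‖ < 1) (j : ℤ) :
    Tendsto (fun n : ℕ ↦ tripleProdCoeff q n j) atTop (𝓝 ((eulerProd q)⁻¹ * q ^ tri j)) := by
  have even_tendsto : Tendsto (fun n : ℕ ↦ finiteEulerProd q (2 * n)) atTop (𝓝 (eulerProd q)) :=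
    (tendsto_finiteEulerProd hq).comp (tendsto_id.const_mul_atTop' two_pos)
  have := ((even_tendsto.mul (tendsto_invFiniteEulerProd hq (-j))).mul
    (tendsto_invFiniteEulerProd hq j)).mul_const (q ^ tri j)
  rwa [mul_inv_cancel₀ (eulerProd_ne_zero hq), one_mul] at this

theorem exists_norm_tripleProdCoeff_le (hq : ‖q‖ < 1) :
    ∃ C : ℝ, ∀ (n : ℕ) (j : ℤ), ‖tripleProdCoeff q n j‖ ≤ C * ‖q‖ ^ tri j := by
  obtain ⟨A, hA⟩ := (tendsto_finiteEulerProd hq).norm.bddAbove_range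
  obtain ⟨B, hB⟩ :=
    ((tendsto_finiteEulerProd hq).inv₀ (eulerProd_ne_zero hq)).norm.bddAbove_range
  have prod_le (n : ℕ) : ‖finiteEulerProd q n‖ ≤ A := hA ⟨n, rfl⟩
  have hA₀ : 0 ≤ A := (norm_nonneg _).trans (prod_le 0)
  have hB₀ : 0 ≤ B := (norm_nonneg _).trans (hB ⟨0, rfl⟩)
  have inv_le (m : ℤ) : ‖invFiniteEulerProd q m‖ ≤ B := by
    rw [invFiniteEulerProd]
    split_ifs
    · exact hB ⟨_, rfl⟩
    · rwa [norm_zero]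
  refine ⟨A * B * B, fun n j ↦ ?_⟩
  rw [tripleProdCoeff, norm_mul, norm_mul, norm_mul, norm_zpow]
  gcongr
  exacts [prod_le _, inv_le _, inv_le _]

theorem tendsto_tsum_mul_tripleProdCoeff (hq : ‖q‖ < 1) {w : ℤ → ℂ}
    (hw : Summable fun j ↦ ‖w j * q ^ tri j‖) :
    Tendsto (fun n : ℕ ↦ ∑' j, w j * tripleProdCoeff q n j) atTop
      (𝓝 ((eulerProd q)⁻¹ * ∑' j, w j * q ^ tri j)) := by
  obtain ⟨C, hC⟩ := exists_norm_tripleProdCoeff_le hq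
  rw [← tsum_mul_left]
  refine tendsto_tsum_of_dominated_convergence (hw.mul_left C) (fun j ↦ ?_)
    (Eventually.of_forall fun n j ↦ ?_)
  · rw [mul_left_comm]
    exact (tendsto_tripleProdCoeff hq j).const_mul (w j)
  · calc ‖w j * tripleProdCoeff q n j‖ ≤ ‖w j‖ * (C * ‖q‖ ^ tri j) := by
          rw [norm_mul]
          gcongr
          exact hC n j
      _ = C * ‖w j * q ^ tri j‖ := by rw [norm_mul, norm_zpow]; ring

/-- The general term of `theta z q`. -/
noncomputable def thetaTerm (z q : ℂ) (j : ℤ) : ℂ := z ^ j * q ^ tri j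

/-- The bilateral theta series `∑ z ^ j q ^ (j (j - 1) / 2)`, Ramanujan's `f(z, q / z)`. -/
noncomputable def theta (z q : ℂ) : ℂ := ∑' j : ℤ, thetaTerm z q j

theorem summable_norm_pow_mul_thetaTerm (hq₀ : q ≠ 0) (hq : ‖q‖ < 1) (hz : z ≠ 0) (p : ℕ) :
    Summable fun j : ℤ ↦ ‖(j : ℂ) ^ p * thetaTerm z q j‖ := by
  simpa only [thetaTerm, norm_mul, norm_pow, norm_zpow, Complex.norm_intCast] using
    summable_abs_pow_mul_zpow_mul_zpow_tri (norm_pos_iff.2 hq₀) hq (norm_pos_iff.2 hz) p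

theorem summable_norm_thetaTerm (hq₀ : q ≠ 0) (hq : ‖q‖ < 1) (hz : z ≠ 0) :
    Summable fun j : ℤ ↦ ‖thetaTerm z q j‖ := by
  simpa only [pow_zero, one_mul] using summable_norm_pow_mul_thetaTerm hq₀ hq hz 0

theorem theta_eq_eulerProd_mul (hq₀ : q ≠ 0) (hq : ‖q‖ < 1) (hz : z ≠ 0) :
    theta z q = eulerProd q * (qPochhammer (-z) q * qPochhammer (-(q / z)) q) := by
  have lim := tendsto_tsum_mul_tripleProdCoeff hq (summable_norm_thetaTerm hq₀ hq hz)
  have lim_prod := ((multipliable_one_sub_mul_pow (-z) hq).hasProd.tendsto_prod_nat).mul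
    (multipliable_one_sub_mul_pow (-(q / z)) hq).hasProd.tendsto_prod_nat
  have eq_prod := tendsto_nhds_unique lim <| lim_prod.congr fun n ↦ by
    rw [tsum_zpow_mul_tripleProdCoeff hq₀ hq hz, ← Finset.prod_mul_distrib]
    exact Finset.prod_congr rfl fun k _ ↦ by ring
  exact (inv_mul_eq_iff_eq_mul₀ (eulerProd_ne_zero hq)).1 eq_prod

theorem theta_neg_one (hq₀ : q ≠ 0) (hq : ‖q‖ < 1) : theta (-1) q = 0 := by
  rw [theta_eq_eulerProd_mul hq₀ hq (by simp), qPochhammer_eq_one_sub_mul _ hq]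
  simp

theorem tsum_mul_thetaTerm_neg_one (hq₀ : q ≠ 0) (hq : ‖q‖ < 1) :
    ∑' j : ℤ, (j : ℂ) * thetaTerm (-1) q j = -eulerProd q ^ 3 := by
  have summable : Summable fun j : ℤ ↦ ‖(j * (-1) ^ j : ℂ) * q ^ tri j‖ := by
    simpa only [thetaTerm, pow_one, mul_assoc] using
      summable_norm_pow_mul_thetaTerm hq₀ hq (z := -1) (by simp) 1
  have lim := (tendsto_tsum_mul_tripleProdCoeff hq summable).comp (tendsto_add_atTop_nat 1)
  have lim_prod := ((tendsto_finiteEulerProd hq).mul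
    ((tendsto_finiteEulerProd hq).comp (tendsto_add_atTop_nat 1))).neg
  have eq_prod := tendsto_nhds_unique lim <| lim_prod.congr fun n ↦
    (tsum_mul_neg_one_zpow_mul_tripleProdCoeff hq₀ hq n).symm
  simp only [thetaTerm, ← mul_assoc]
  rw [(inv_mul_eq_iff_eq_mul₀ (eulerProd_ne_zero hq)).1 eq_prod]
  ring

end TripleProduct

/-! ### Products of theta series split along Gaussian sublattices -/

section Theta

variable {q z w : ℂ}

theorem thetaTerm_neg (hq₀ : q ≠ 0) (z : ℂ) (j : ℤ) :
    thetaTerm z q (-j) = thetaTerm (q / z) q j := by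
  rw [thetaTerm, thetaTerm, tri_neg, zpow_add₀ hq₀, div_zpow, zpow_neg]
  ring

theorem theta_div (hq₀ : q ≠ 0) (z : ℂ) : theta (q / z) q = theta z q := by
  simp_rw [theta, ← thetaTerm_neg hq₀]
  exact (Equiv.neg ℤ).tsum_eq (thetaTerm z q)

theorem theta_eq_of_mul_eq (hq₀ : q ≠ 0) (h : z * w = q) : theta z q = theta w q := by
  obtain ⟨-, hw⟩ := mul_ne_zero_iff.1 (h ▸ hq₀)
  rw [← theta_div hq₀ w, ← h, mul_div_cancel_right₀ _ hw]

theorem theta_eq_mul_theta_mul (hq₀ : q ≠ 0) (hz : z ≠ 0) :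
    theta z q = z * theta (z * q) q := by
  have term_succ (j : ℤ) : thetaTerm z q (j + 1) = z * thetaTerm (z * q) q j := by
    rw [thetaTerm, thetaTerm, tri_add, show tri 1 = 0 from rfl, zpow_add_one₀ hz, mul_zpow,
      zpow_add₀ hq₀, zpow_add₀ hq₀, mul_one, zpow_zero]
    ring
  simp_rw [theta, ← tsum_mul_left, ← term_succ]
  exact ((Equiv.addRight (1 : ℤ)).tsum_eq (thetaTerm z q)).symm

/-- Every Gaussian integer is `r + (k + i) (x + y i)` for a unique residue `0 ≤ r < k ^ 2 + 1` and
unique integers `x`, `y`. -/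
def gaussianSplit (k : ℕ) : Fin (k ^ 2 + 1) × ℤ × ℤ ≃ ℤ × ℤ where
  toFun p := (p.1 + k * p.2.1 - p.2.2, p.2.1 + k * p.2.2)
  invFun p :=
    let n := Int.divModEquiv (k ^ 2 + 1) (p.1 - k * p.2)
    (n.2, p.2 + k * n.1, -n.1)
  left_inv := by
    rintro ⟨r, x, y⟩
    have split_eq : Int.divModEquiv (k ^ 2 + 1) (r + k * x - y - k * (x + k * y)) = (-y, r) := by
      rw [← Equiv.eq_symm_apply]
      simp only [Int.divModEquiv_symm_apply, Nat.cast_add, Nat.cast_pow, Nat.cast_one, neg_mul]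
      ring
    simp [split_eq]
  right_inv := by
    rintro ⟨i, j⟩
    have split_eq := (Int.divModEquiv (k ^ 2 + 1)).symm_apply_apply (i - k * j)
    simp only [Int.divModEquiv_symm_apply] at split_eq
    push_cast at split_eq
    ext <;> simp only
    · linear_combination split_eq
    · ring

theorem tsum_eq_sum_gaussianSplit {F : ℤ × ℤ → ℂ} (hF : Summable F) (k : ℕ) :
    ∑' p, F p = ∑ r ∈ Finset.range (k ^ 2 + 1),
      ∑' p : ℤ × ℤ, F (r + k * p.1 - p.2, p.1 + k * p.2) := by
  have summable_split : Summable fun p ↦ F (gaussianSplit k p) :=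
    (gaussianSplit k).summable_iff.2 hF
  rw [← (gaussianSplit k).tsum_eq F, summable_split.tsum_prod, tsum_fintype, Finset.sum_range]
  rfl

theorem thetaTerm_mul_thetaTerm_gaussianSplit (hq₀ : q ≠ 0) (hz : z ≠ 0) (hw : w ≠ 0)
    (k r : ℕ) (x y : ℤ) :
    thetaTerm z q (r + k * x - y) * thetaTerm w q (x + k * y) =
      z ^ r * q ^ tri r * (thetaTerm (z ^ k * w * q ^ (tri k + r * k)) (q ^ (k ^ 2 + 1)) x *
        thetaTerm (z⁻¹ * w ^ k * q ^ (tri k + 1 - r)) (q ^ (k ^ 2 + 1)) y) := by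
  have exponent_eq : tri (r + k * x - y) + tri (x + k * y) =
      tri r + ((tri k + r * k) * x + (k ^ 2 + 1) * tri x) +
        ((tri k + 1 - r) * y + (k ^ 2 + 1) * tri y) := by
    linarith [two_mul_tri (r + k * x - y), two_mul_tri (x + k * y), two_mul_tri r,
      congrArg (· * (x + y)) (two_mul_tri k), congrArg ((k ^ 2 + 1 : ℤ) * ·) (two_mul_tri x),
      congrArg ((k ^ 2 + 1 : ℤ) * ·) (two_mul_tri y)]
  have base_zpow (n : ℤ) : (q ^ (k ^ 2 + 1)) ^ n = q ^ ((k ^ 2 + 1 : ℤ) * n) := by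
    rw [zpow_mul]
    norm_cast
  calc thetaTerm z q (r + k * x - y) * thetaTerm w q (x + k * y)
      = z ^ (r + k * x - y) * w ^ (x + k * y) * q ^ (tri (r + k * x - y) + tri (x + k * y)) := by
        rw [thetaTerm, thetaTerm, zpow_add₀ hq₀]
        ring
    _ = _ := by
        rw [exponent_eq]
        simp only [thetaTerm, mul_zpow, inv_zpow, base_zpow, zpow_add₀ hz, zpow_sub₀ hz,
          zpow_add₀ hw, zpow_add₀ hq₀, zpow_natCast, zpow_mul]
        ring

theorem summable_thetaTerm_mul_thetaTerm (hq₀ : q ≠ 0) (hq : ‖q‖ < 1) (hz : z ≠ 0)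
    (hw : w ≠ 0) : Summable fun p : ℤ × ℤ ↦ thetaTerm z q p.1 * thetaTerm w q p.2 :=
  summable_mul_of_summable_norm (summable_norm_thetaTerm hq₀ hq hz)
    (summable_norm_thetaTerm hq₀ hq hw)

theorem theta_mul_theta (hq₀ : q ≠ 0) (hq : ‖q‖ < 1) (hz : z ≠ 0) (hw : w ≠ 0) :
    theta z q * theta w q = ∑' p : ℤ × ℤ, thetaTerm z q p.1 * thetaTerm w q p.2 :=
  tsum_mul_tsum_of_summable_norm (summable_norm_thetaTerm hq₀ hq hz)
    (summable_norm_thetaTerm hq₀ hq hw)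

theorem theta_mul_theta_eq_sum (hq₀ : q ≠ 0) (hq : ‖q‖ < 1) (hz : z ≠ 0) (hw : w ≠ 0) (k : ℕ) :
    theta z q * theta w q = ∑ r ∈ Finset.range (k ^ 2 + 1), z ^ r * q ^ tri r *
      (theta (z ^ k * w * q ^ (tri k + r * k)) (q ^ (k ^ 2 + 1)) *
        theta (z⁻¹ * w ^ k * q ^ (tri k + 1 - r)) (q ^ (k ^ 2 + 1))) := by
  rw [theta_mul_theta hq₀ hq hz hw,
    tsum_eq_sum_gaussianSplit (summable_thetaTerm_mul_thetaTerm hq₀ hq hz hw) k]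
  refine Finset.sum_congr rfl fun r _ ↦ ?_
  rw [theta_mul_theta (pow_ne_zero _ hq₀) (norm_pow_lt_one hq (by lia))
    (by simp [*, zpow_ne_zero]) (by simp [*, zpow_ne_zero]), ← tsum_mul_left]
  exact tsum_congr fun p ↦ thetaTerm_mul_thetaTerm_gaussianSplit hq₀ hz hw k r p.1 p.2

theorem theta_mul_theta_eq_add (hq₀ : q ≠ 0) (hq : ‖q‖ < 1) (hz : z ≠ 0) (hw : w ≠ 0) :
    theta z q * theta w q = theta (z * w) (q ^ 2) * theta (w / z * q) (q ^ 2) +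
      z * (theta (z * w * q) (q ^ 2) * theta (w / z) (q ^ 2)) := by
  rw [theta_mul_theta_eq_sum hq₀ hq hz hw 1]
  norm_num [Finset.sum_range_succ, tri, div_eq_inv_mul]

theorem theta_sq (hq₀ : q ≠ 0) (hq : ‖q‖ < 1) (hz : z ≠ 0) :
    theta z q ^ 2 = theta (z ^ 3 * q) (q ^ 5) * theta (z * q ^ 2) (q ^ 5) +
      z * (theta (z ^ 3 * q ^ 3) (q ^ 5) * theta (z * q) (q ^ 5)) +
      z⁻¹ * q * (theta (z ^ 3) (q ^ 5) * theta z (q ^ 5)) +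
      z * (theta (z ^ 3 * q ^ 2) (q ^ 5) * theta (z * q ^ 4) (q ^ 5)) +
      z ^ 2 * (theta (z ^ 3 * q ^ 4) (q ^ 5) * theta (z * q ^ 3) (q ^ 5)) := by
  have hq₅ : q ^ 5 ≠ 0 := pow_ne_zero 5 hq₀
  have split : theta z q ^ 2 = theta (z ^ 3 * q) (q ^ 5) * theta (z * q ^ 2) (q ^ 5) +
      z * (theta (z ^ 3 * q ^ 3) (q ^ 5) * theta (z * q) (q ^ 5)) +
      z ^ 2 * q * (theta (z ^ 3 * q ^ 5) (q ^ 5) * theta z (q ^ 5)) +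
      z ^ 3 * q ^ 3 * (theta (z ^ 3 * q ^ 7) (q ^ 5) * theta (z * q⁻¹) (q ^ 5)) +
      z ^ 4 * q ^ 6 * (theta (z ^ 3 * q ^ 9) (q ^ 5) * theta (z * (q ^ 2)⁻¹) (q ^ 5)) := by
    rw [sq, theta_mul_theta_eq_sum hq₀ hq hz hz 2]
    norm_num [Finset.sum_range_succ, tri, show z⁻¹ * z ^ 2 = z by field_simp, ← pow_succ]
  have shift {u v : ℂ} (hu : u ≠ 0) (huv : u * q ^ 5 = v) :
      theta v (q ^ 5) = u⁻¹ * theta u (q ^ 5) := by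
    rw [theta_eq_mul_theta_mul hq₅ hu, huv, inv_mul_cancel_left₀ hu]
  rw [split, shift (u := z ^ 3) (by simp [*]) rfl,
    shift (u := z ^ 3 * q ^ 2) (v := z ^ 3 * q ^ 7) (by simp [*]) (by ring),
    shift (u := z ^ 3 * q ^ 4) (v := z ^ 3 * q ^ 9) (by simp [*]) (by ring),
    shift (u := z * q⁻¹) (v := z * q ^ 4) (by simp [*]) (by field_simp),
    shift (u := z * (q ^ 2)⁻¹) (v := z * q ^ 3) (by simp [*]) (by field_simp)]
  field_simp

theorem theta_neg_self_sq (hq₀ : q ≠ 0) (hq : ‖q‖ < 1) :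
    theta (-q) (q ^ 2) ^ 2 =
      theta (-q ^ 5) (q ^ 10) ^ 2 - 4 * q * (theta (-q) (q ^ 10) * theta (-q ^ 3) (q ^ 10)) := by
  have hq₁₀ : q ^ 10 ≠ 0 := pow_ne_zero 10 hq₀
  have h := theta_sq (pow_ne_zero 2 hq₀) (norm_pow_lt_one hq two_ne_zero) (neg_ne_zero.2 hq₀)
  ring_nf at h
  have shift : theta (-q) (q ^ 10) = -q * theta (-q ^ 11) (q ^ 10) := by
    rw [theta_eq_mul_theta_mul hq₁₀ (neg_ne_zero.2 hq₀), show -q * q ^ 10 = -q ^ 11 by ring]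
  rw [h, theta_eq_of_mul_eq hq₁₀ (show -q ^ 9 * -q = q ^ 10 by ring),
    theta_eq_of_mul_eq hq₁₀ (show -q ^ 7 * -q ^ 3 = q ^ 10 by ring), shift]
  field_simp
  ring

theorem theta_one_sq (hq₀ : q ≠ 0) (hq : ‖q‖ < 1) :
    theta 1 q ^ 2 = q * theta 1 (q ^ 5) ^ 2 + 4 * (theta q (q ^ 5) * theta (q ^ 2) (q ^ 5)) := by
  have hq₅ : q ^ 5 ≠ 0 := pow_ne_zero 5 hq₀
  rw [theta_sq hq₀ hq one_ne_zero]
  simp only [one_pow, one_mul, inv_one]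
  rw [theta_eq_of_mul_eq hq₅ (show q ^ 3 * q ^ 2 = q ^ 5 by ring),
    theta_eq_of_mul_eq hq₅ (show q ^ 4 * q = q ^ 5 by ring)]
  ring

theorem theta_neg_mul_theta_sq (hq₀ : q ≠ 0) (hq : ‖q‖ < 1) :
    theta (-q) (q ^ 5) * theta (q ^ 2) (q ^ 5) =
      theta (-q ^ 3) (q ^ 10) * theta (-q ^ 4) (q ^ 10) -
        q * (theta (-q) (q ^ 10) * theta (-q ^ 2) (q ^ 10)) := by
  have hq₁₀ : q ^ 10 ≠ 0 := pow_ne_zero 10 hq₀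
  rw [theta_mul_theta_eq_add (pow_ne_zero 5 hq₀) (norm_pow_lt_one hq (by simp))
    (neg_ne_zero.2 hq₀) (pow_ne_zero 2 hq₀), show q ^ 2 / -q = -q by field_simp, ← pow_mul,
    show -q * q ^ 5 = -q ^ 6 by ring, show -q * q ^ 2 = -q ^ 3 by ring,
    show -q ^ 3 * q ^ 5 = -q ^ 8 by ring,
    theta_eq_of_mul_eq hq₁₀ (show -q ^ 6 * -q ^ 4 = q ^ 10 by ring),
    theta_eq_of_mul_eq hq₁₀ (show -q ^ 8 * -q ^ 2 = q ^ 10 by ring)]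
  ring

theorem theta_mul_theta_neg_sq (hq₀ : q ≠ 0) (hq : ‖q‖ < 1) :
    theta q (q ^ 5) * theta (-q ^ 2) (q ^ 5) =
      theta (-q ^ 3) (q ^ 10) * theta (-q ^ 4) (q ^ 10) +
        q * (theta (-q) (q ^ 10) * theta (-q ^ 2) (q ^ 10)) := by
  have hq₁₀ : q ^ 10 ≠ 0 := pow_ne_zero 10 hq₀
  rw [theta_mul_theta_eq_add (pow_ne_zero 5 hq₀) (norm_pow_lt_one hq (by simp))
    hq₀ (neg_ne_zero.2 (pow_ne_zero 2 hq₀)), show -q ^ 2 / q = -q by field_simp, ← pow_mul,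
    show -q * q ^ 5 = -q ^ 6 by ring, show q * -q ^ 2 = -q ^ 3 by ring,
    show -q ^ 3 * q ^ 5 = -q ^ 8 by ring,
    theta_eq_of_mul_eq hq₁₀ (show -q ^ 6 * -q ^ 4 = q ^ 10 by ring),
    theta_eq_of_mul_eq hq₁₀ (show -q ^ 8 * -q ^ 2 = q ^ 10 by ring)]
  ring

end Theta

/-! ### A weighted lattice sum for `E(q) ^ 6` -/

/-- The exponent of `q` in the `j`-th term of `theta (-q ^ a) (q ^ m)`. -/
def thetaExp (a m : ℕ) (j : ℤ) : ℤ := a * j + m * tri j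

/-- The result of applying `q d/dq` termwise to `theta (-q ^ a) (q ^ m)`. -/
noncomputable def thetaEulerDeriv (a m : ℕ) (q : ℂ) : ℂ :=
  ∑' j : ℤ, thetaExp a m j * thetaTerm (-q ^ a) (q ^ m) j

/-- The quadratic form `3 c ^ 2 - 3 d ^ 2 + 8 c d` in `c = 2 i - 1`, `d = 2 j - 1`, which changes
sign under the quarter turn `(c, d) ↦ (-d, c)`. -/
def turnWeight (i j : ℤ) : ℤ :=
  3 * (2 * i - 1) ^ 2 - 3 * (2 * j - 1) ^ 2 + 8 * ((2 * i - 1) * (2 * j - 1))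

/-- The general term of the double series for `32 E(q) ^ 6`. -/
noncomputable def turnTerm (q : ℂ) (p : ℤ × ℤ) : ℂ :=
  turnWeight p.1 p.2 * (thetaTerm (-1) q p.1 * thetaTerm (-1) q p.2)

section TurnSum

variable {q z : ℂ}

theorem thetaTerm_one_sub (hz : z ≠ 0) (q : ℂ) (j : ℤ) :
    thetaTerm z q (1 - j) = z * thetaTerm z⁻¹ q j := by
  rw [thetaTerm, thetaTerm, tri_one_sub, zpow_sub₀ hz, zpow_one, inv_zpow]
  ring

theorem turnTerm_turn (q : ℂ) (i j : ℤ) : turnTerm q (1 - j, i) = turnTerm q (i, j) := by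
  simp only [turnTerm, turnWeight, thetaTerm_one_sub (neg_ne_zero.2 one_ne_zero) q j,
    inv_neg_one]
  push_cast
  ring

theorem summable_norm_quadratic_mul_thetaTerm (hq₀ : q ≠ 0) (hq : ‖q‖ < 1) (hz : z ≠ 0)
    (a b c : ℂ) : Summable fun j : ℤ ↦ ‖(a * j ^ 2 + b * j + c) * thetaTerm z q j‖ := by
  have moment (p : ℕ) := (summable_norm_pow_mul_thetaTerm hq₀ hq hz p).of_norm
  refine ((((moment 2).mul_left a).add ((moment 1).mul_left b)).add
    ((moment 0).mul_left c)).norm.congr fun j ↦ ?_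
  ring_nf

theorem summable_norm_thetaExp_mul_thetaTerm (hq₀ : q ≠ 0) (hq : ‖q‖ < 1) (a : ℕ) {m : ℕ}
    (hm : m ≠ 0) :
    Summable fun j : ℤ ↦ ‖(thetaExp a m j : ℂ) * thetaTerm (-q ^ a) (q ^ m) j‖ := by
  refine (summable_norm_quadratic_mul_thetaTerm (pow_ne_zero m hq₀) (norm_pow_lt_one hq hm)
    (neg_ne_zero.2 (pow_ne_zero a hq₀)) (m / 2) (a - m / 2) 0).congr fun j ↦ ?_
  have two_mul_tri_cast : (2 : ℂ) * tri j = j * (j - 1) := mod_cast two_mul_tri j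
  congr 2
  rw [thetaExp]
  push_cast
  linear_combination -(m / 2 : ℂ) * two_mul_tri_cast

theorem tsum_two_mul_sub_one_mul_thetaTerm_neg_one (hq₀ : q ≠ 0) (hq : ‖q‖ < 1) :
    ∑' j : ℤ, (2 * j - 1 : ℂ) * thetaTerm (-1) q j = -2 * eulerProd q ^ 3 := by
  have hz : (-1 : ℂ) ≠ 0 := by simp
  have first := (summable_norm_pow_mul_thetaTerm hq₀ hq hz 1).of_norm
  simp only [pow_one] at first
  simp_rw [sub_mul, one_mul, mul_assoc]
  rw [(first.mul_left 2).tsum_sub (summable_norm_thetaTerm hq₀ hq hz).of_norm, tsum_mul_left,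
    tsum_mul_thetaTerm_neg_one hq₀ hq, show ∑' j, thetaTerm (-1) q j = 0 from theta_neg_one hq₀ hq]
  ring

theorem hasSum_mul_of_summable_norm {f g : ℤ → ℂ} (hf : Summable fun j ↦ ‖f j‖)
    (hg : Summable fun j ↦ ‖g j‖) :
    HasSum (fun p : ℤ × ℤ ↦ f p.1 * g p.2) ((∑' j, f j) * ∑' j, g j) :=
  hf.of_norm.hasSum.mul hg.of_norm.hasSum (summable_mul_of_summable_norm hf hg)

theorem hasSum_turnTerm (hq₀ : q ≠ 0) (hq : ‖q‖ < 1) :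
    HasSum (turnTerm q) (32 * eulerProd q ^ 6) := by
  have hz : (-1 : ℂ) ≠ 0 := by simp
  have norm₀ := summable_norm_thetaTerm hq₀ hq hz
  have norm₁ : Summable fun j : ℤ ↦ ‖(2 * j - 1 : ℂ) * thetaTerm (-1) q j‖ :=
    (summable_norm_quadratic_mul_thetaTerm hq₀ hq hz 0 2 (-1)).congr fun j ↦ by ring_nf
  have norm₂ : Summable fun j : ℤ ↦ ‖(2 * j - 1 : ℂ) ^ 2 * thetaTerm (-1) q j‖ :=
    (summable_norm_quadratic_mul_thetaTerm hq₀ hq hz 4 (-4) 1).congr fun j ↦ by ring_nf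
  have sum₀ : ∑' j : ℤ, thetaTerm (-1) q j = 0 := theta_neg_one hq₀ hq
  have sum₁ := tsum_two_mul_sub_one_mul_thetaTerm_neg_one hq₀ hq
  have sum₂₀ := hasSum_mul_of_summable_norm norm₂ norm₀
  have sum₀₂ := hasSum_mul_of_summable_norm norm₀ norm₂
  have sum₁₁ := hasSum_mul_of_summable_norm norm₁ norm₁
  rw [sum₀, mul_zero] at sum₂₀
  rw [sum₀, zero_mul] at sum₀₂
  rw [sum₁] at sum₁₁
  have total := ((sum₂₀.mul_left 3).sub (sum₀₂.mul_left 3)).add (sum₁₁.mul_left 8)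
  rw [show 3 * 0 - 3 * 0 + 8 * (-2 * eulerProd q ^ 3 * (-2 * eulerProd q ^ 3)) =
    32 * eulerProd q ^ 6 by ring] at total
  refine total.congr_fun fun p ↦ ?_
  simp only [turnTerm, turnWeight]
  push_cast
  ring

theorem tsum_turnTerm_class_eq (q : ℂ) {r s : ℤ} (x₀ y₀ : ℤ) (hs : s + 2 * x₀ - y₀ = 1)
    (hr : x₀ + 2 * y₀ = r) :
    ∑' p : ℤ × ℤ, turnTerm q (s + 2 * p.1 - p.2, p.1 + 2 * p.2) =
      ∑' p : ℤ × ℤ, turnTerm q (r + 2 * p.1 - p.2, p.1 + 2 * p.2) := by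
  let turn : ℤ × ℤ ≃ ℤ × ℤ :=
    (Equiv.prodComm ℤ ℤ).trans ((Equiv.subLeft x₀).prodCongr (Equiv.addLeft y₀))
  rw [← turn.tsum_eq]
  refine tsum_congr fun p ↦ (congrArg (turnTerm q) (Prod.ext ?_ ?_)).trans (turnTerm_turn q _ _)
  · change s + 2 * (x₀ - p.2) - (y₀ + p.1) = 1 - (p.1 + 2 * p.2)
    linear_combination hs
  · change x₀ - p.2 + 2 * (y₀ + p.1) = r + 2 * p.1 - p.2
    linear_combination hr

theorem turnTerm_reflect (hq₀ : q ≠ 0) (x y : ℤ) :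
    turnTerm q (2 + 2 * (y - 1) - (x + 1), y - 1 + 2 * (x + 1)) =
      -turnTerm q (2 + 2 * x - y, x + 2 * y) := by
  have term_eq (i j : ℤ) :
      turnTerm q (i, j) = turnWeight i j * ((-1) ^ (i + j) * q ^ (tri i + tri j)) := by
    rw [turnTerm, thetaTerm, thetaTerm, zpow_add₀ (by simp), zpow_add₀ hq₀]
    ring
  have weight_eq : turnWeight (2 + 2 * (y - 1) - (x + 1)) (y - 1 + 2 * (x + 1)) =
      -turnWeight (2 + 2 * x - y) (x + 2 * y) := by
    simp only [turnWeight]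
    ring
  have sign_eq : (-1 : ℂ) ^ (2 + 2 * (y - 1) - (x + 1) + (y - 1 + 2 * (x + 1))) =
      (-1) ^ (2 + 2 * x - y + (x + 2 * y)) := by
    rw [show 2 + 2 * (y - 1) - (x + 1) + (y - 1 + 2 * (x + 1)) =
      2 + 2 * x - y + (x + 2 * y) + 2 * (y - x - 1) by ring, zpow_add₀ (by simp),
      (even_two_mul _).neg_one_zpow, mul_one]
  have exponent_eq : tri (2 + 2 * (y - 1) - (x + 1)) + tri (y - 1 + 2 * (x + 1)) =
      tri (2 + 2 * x - y) + tri (x + 2 * y) := by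
    linarith [two_mul_tri (2 + 2 * (y - 1) - (x + 1)), two_mul_tri (y - 1 + 2 * (x + 1)),
      two_mul_tri (2 + 2 * x - y), two_mul_tri (x + 2 * y)]
  rw [term_eq, term_eq, weight_eq, sign_eq, exponent_eq, Int.cast_neg, neg_mul]

theorem tsum_turnTerm_class_two (hq₀ : q ≠ 0) :
    ∑' p : ℤ × ℤ, turnTerm q (2 + 2 * p.1 - p.2, p.1 + 2 * p.2) = 0 := by
  let reflect : ℤ × ℤ ≃ ℤ × ℤ :=
    (Equiv.prodComm ℤ ℤ).trans ((Equiv.subRight 1).prodCongr (Equiv.addRight 1))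
  have sum_reflect : ∑' p : ℤ × ℤ, turnTerm q (2 + 2 * (p.2 - 1) - (p.1 + 1),
      p.2 - 1 + 2 * (p.1 + 1)) = ∑' p : ℤ × ℤ, turnTerm q (2 + 2 * p.1 - p.2, p.1 + 2 * p.2) :=
    reflect.tsum_eq fun p ↦ turnTerm q (2 + 2 * p.1 - p.2, p.1 + 2 * p.2)
  simp only [turnTerm_reflect hq₀, tsum_neg] at sum_reflect
  exact neg_eq_self.1 sum_reflect

theorem turnTerm_class_zero (hq₀ : q ≠ 0) (x y : ℤ) :
    turnTerm q (2 * x - y, x + 2 * y) = 8 * ((1 + 5 * (thetaExp 1 5 x - thetaExp 2 5 y)) *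
      (thetaTerm (-q) (q ^ 5) x * thetaTerm (-q ^ 2) (q ^ 5) y)) := by
  have split : thetaTerm (-1) q (2 * x - y) * thetaTerm (-1) q (x + 2 * y) =
      thetaTerm (-q) (q ^ 5) x * thetaTerm (-q ^ 2) (q ^ 5) y := by
    simpa [tri] using thetaTerm_mul_thetaTerm_gaussianSplit hq₀ (neg_ne_zero.2 one_ne_zero)
      (neg_ne_zero.2 one_ne_zero) 2 0 x y
  have weight_eq : turnWeight (2 * x - y) (x + 2 * y) =
      8 * (1 + 5 * (thetaExp 1 5 x - thetaExp 2 5 y)) := by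
    simp only [turnWeight, thetaExp]
    push_cast
    linear_combination 100 * two_mul_tri y - 100 * two_mul_tri x
  rw [turnTerm, split, weight_eq]
  push_cast
  ring

theorem tsum_turnTerm_class_zero (hq₀ : q ≠ 0) (hq : ‖q‖ < 1) :
    ∑' p : ℤ × ℤ, turnTerm q (2 * p.1 - p.2, p.1 + 2 * p.2) =
      8 * (theta (-q) (q ^ 5) * theta (-q ^ 2) (q ^ 5) +
        5 * (thetaEulerDeriv 1 5 q * theta (-q ^ 2) (q ^ 5) -
          theta (-q) (q ^ 5) * thetaEulerDeriv 2 5 q)) := by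
  have norm_term (a : ℕ) : Summable fun j : ℤ ↦ ‖thetaTerm (-q ^ a) (q ^ 5) j‖ :=
    summable_norm_thetaTerm (pow_ne_zero 5 hq₀) (norm_pow_lt_one hq (by simp))
      (neg_ne_zero.2 (pow_ne_zero a hq₀))
  have norm_deriv (a : ℕ) := summable_norm_thetaExp_mul_thetaTerm hq₀ hq a (m := 5) (by simp)
  have sum₀₀ := hasSum_mul_of_summable_norm (norm_term 1) (norm_term 2)
  have sum₁₀ := hasSum_mul_of_summable_norm (norm_deriv 1) (norm_term 2)
  have sum₀₁ := hasSum_mul_of_summable_norm (norm_term 1) (norm_deriv 2)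
  have total := ((sum₀₀.add ((sum₁₀.sub sum₀₁).mul_left 5)).mul_left 8).tsum_eq
  simp only [pow_one] at total
  rw [thetaEulerDeriv, thetaEulerDeriv, theta, theta, pow_one, ← total]
  refine tsum_congr fun p ↦ ?_
  rw [turnTerm_class_zero hq₀]
  ring

theorem theta_mul_theta_add_five_mul (hq₀ : q ≠ 0) (hq : ‖q‖ < 1) :
    theta (-q) (q ^ 5) * theta (-q ^ 2) (q ^ 5) +
      5 * (thetaEulerDeriv 1 5 q * theta (-q ^ 2) (q ^ 5) -
        theta (-q) (q ^ 5) * thetaEulerDeriv 2 5 q) = eulerProd q ^ 6 := by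
  have total := (hasSum_turnTerm hq₀ hq).tsum_eq
  rw [tsum_eq_sum_gaussianSplit (hasSum_turnTerm hq₀ hq).summable 2] at total
  simp only [Finset.sum_range_succ, Finset.sum_range_zero, Nat.cast_ofNat, Nat.cast_zero,
    Nat.cast_one, Nat.reduceAdd, Nat.reducePow] at total
  have class_one := tsum_turnTerm_class_eq q (r := 0) (s := 1) 0 0 (by simp) (by simp)
  have class_four := tsum_turnTerm_class_eq q (r := 1) (s := 4) (-1) 1 (by simp) (by simp)
  have class_three := tsum_turnTerm_class_eq q (r := 4) (s := 3) 0 2 (by simp) (by simp)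
  have class_two := tsum_turnTerm_class_two hq₀
  rw [class_two, class_three, class_four, class_one] at total
  simp only [zero_add, tsum_turnTerm_class_zero hq₀ hq] at total
  linear_combination total / 32

end TurnSum

/-! ### Evaluation of theta series by Euler's product -/

section ThetaProducts

variable {q z : ℂ}

theorem qPochhammer_neg_self (hq : ‖q‖ < 1) :
    qPochhammer (-q) q = eulerProd (q ^ 2) / eulerProd q :=
  (eq_div_iff_mul_eq (eulerProd_ne_zero hq)).2 <| by
    rw [mul_comm, eulerProd, eulerProd, qPochhammer_mul_qPochhammer_neg q hq]

theorem qPochhammer_self_sq (hq : ‖q‖ < 1) :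
    qPochhammer q (q ^ 2) = eulerProd q / eulerProd (q ^ 2) := by
  have dissection := qPochhammer_eq_prod_range q hq 2
  simp only [Finset.prod_range_succ, Finset.prod_range_zero, one_mul, pow_zero, mul_one, pow_one,
    ← sq] at dissection
  exact (eq_div_iff_mul_eq (eulerProd_pow_ne_zero hq two_ne_zero)).2 dissection.symm

theorem theta_one (hq₀ : q ≠ 0) (hq : ‖q‖ < 1) :
    theta 1 q = 2 * eulerProd (q ^ 2) ^ 2 / eulerProd q := by
  have hE := eulerProd_ne_zero hq
  rw [theta_eq_eulerProd_mul hq₀ hq one_ne_zero, qPochhammer_eq_one_sub_mul (-1) hq, neg_one_mul,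
    div_one, qPochhammer_neg_self hq]
  field_simp
  ring

theorem theta_neg_self (hq₀ : q ≠ 0) (hq : ‖q‖ < 1) :
    theta (-q) (q ^ 2) = eulerProd q ^ 2 / eulerProd (q ^ 2) := by
  have hE := eulerProd_pow_ne_zero hq two_ne_zero
  rw [theta_eq_eulerProd_mul (pow_ne_zero 2 hq₀) (norm_pow_lt_one hq two_ne_zero)
    (neg_ne_zero.2 hq₀), show -(q ^ 2 / -q) = q by field_simp, neg_neg, qPochhammer_self_sq hq]
  field_simp

theorem theta_sign_mul_pow (hq₀ : q ≠ 0) (hq : ‖q‖ < 1) {s : ℂ} (hs : s ^ 2 = 1) {a b m : ℕ}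
    (hm : m ≠ 0) (hab : a + b = m) :
    theta (s * q ^ a) (q ^ m) = eulerProd (q ^ m) *
      (qPochhammer (-(s * q ^ a)) (q ^ m) * qPochhammer (-(s * q ^ b)) (q ^ m)) := by
  have hs₀ : s ≠ 0 := by rintro rfl; simp at hs
  have quotient_eq : q ^ m / (s * q ^ a) = s * q ^ b := by
    rw [← hab, pow_add]
    field_simp
    exact hs.symm
  rw [theta_eq_eulerProd_mul (pow_ne_zero m hq₀) (norm_pow_lt_one hq hm)
    (mul_ne_zero hs₀ (pow_ne_zero a hq₀)), quotient_eq]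

theorem theta_neg_mul_theta_neg_sq (hq₀ : q ≠ 0) (hq : ‖q‖ < 1) :
    theta (-q) (q ^ 5) * theta (-q ^ 2) (q ^ 5) = eulerProd q * eulerProd (q ^ 5) := by
  have dissection := qPochhammer_eq_prod_range q hq 5
  have theta₁ := theta_sign_mul_pow (s := -1) (a := 1) (b := 4) (m := 5) hq₀ hq (by simp) (by simp)
    rfl
  have theta₂ := theta_sign_mul_pow (s := -1) (a := 2) (b := 3) (m := 5) hq₀ hq (by simp) (by simp)
    rfl
  simp only [neg_one_mul, neg_neg, pow_one] at theta₁ theta₂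
  simp only [Finset.prod_range_succ, Finset.prod_range_zero, one_mul, ← pow_succ', Nat.reduceAdd,
    zero_add, pow_one] at dissection
  rw [theta₁, theta₂, eulerProd.eq_def q, dissection, eulerProd]
  ring

theorem theta_mul_theta_pow_two (hq₀ : q ≠ 0) (hq : ‖q‖ < 1) :
    theta q (q ^ 5) * theta (q ^ 2) (q ^ 5) =
      eulerProd (q ^ 2) * eulerProd (q ^ 5) ^ 3 / (eulerProd q * eulerProd (q ^ 10)) := by
  have hE₁ := eulerProd_ne_zero hq
  have hE₅ := eulerProd_pow_ne_zero hq (n := 5) (by simp)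
  have hE₁₀ := eulerProd_pow_ne_zero hq (n := 10) (by simp)
  have dissection := qPochhammer_eq_prod_range (-q) hq 5
  have theta₁ := theta_sign_mul_pow (s := 1) (a := 1) (b := 4) (m := 5) hq₀ hq (by simp) (by simp)
    rfl
  have theta₂ := theta_sign_mul_pow (s := 1) (a := 2) (b := 3) (m := 5) hq₀ hq (by simp) (by simp)
    rfl
  have five := qPochhammer_neg_self (norm_pow_lt_one hq (n := 5) (by simp))
  rw [← pow_mul] at five
  simp only [one_mul, pow_one] at theta₁ theta₂
  simp only [Finset.prod_range_succ, Finset.prod_range_zero, one_mul, neg_mul, ← pow_succ',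
    Nat.reduceAdd, zero_add, pow_one, qPochhammer_neg_self hq, five] at dissection
  rw [theta₁, theta₂]
  field_simp at dissection ⊢
  linear_combination -dissection

theorem theta_neg_mul_theta_neg_cube (hq₀ : q ≠ 0) (hq : ‖q‖ < 1) :
    theta (-q) (q ^ 10) * theta (-q ^ 3) (q ^ 10) =
      eulerProd q * eulerProd (q ^ 10) ^ 3 / (eulerProd (q ^ 2) * eulerProd (q ^ 5)) := by
  have hE₂ := eulerProd_pow_ne_zero hq two_ne_zero
  have hE₅ := eulerProd_pow_ne_zero hq (n := 5) (by simp)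
  have hE₁₀ := eulerProd_pow_ne_zero hq (n := 10) (by simp)
  have dissection := qPochhammer_eq_prod_range q (norm_pow_lt_one hq two_ne_zero) 5
  have theta₁ := theta_sign_mul_pow (s := -1) (a := 1) (b := 9) (m := 10) hq₀ hq (by simp) (by simp)
    rfl
  have theta₃ := theta_sign_mul_pow (s := -1) (a := 3) (b := 7) (m := 10) hq₀ hq (by simp) (by simp)
    rfl
  have five := qPochhammer_self_sq (norm_pow_lt_one hq (n := 5) (by simp))
  rw [← pow_mul] at five
  simp only [neg_one_mul, neg_neg, pow_one] at theta₁ theta₃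
  simp only [Finset.prod_range_succ, Finset.prod_range_zero, one_mul, mul_zero, ← pow_mul,
    ← pow_succ', Nat.reduceMul, Nat.reduceAdd, zero_add, mul_one, pow_one,
    qPochhammer_self_sq hq, five] at dissection
  rw [theta₁, theta₃]
  field_simp at dissection ⊢
  linear_combination -dissection

theorem eulerProd_sq_mul_theta (hq₀ : q ≠ 0) (hq : ‖q‖ < 1) (hz : z ≠ 0) :
    eulerProd (q ^ 2) ^ 2 * theta z q =
      eulerProd q * (theta z (q ^ 2) * theta (z * q) (q ^ 2)) := by
  have hq₂ := pow_ne_zero 2 hq₀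
  have hq₂' := norm_pow_lt_one hq two_ne_zero
  have left_split := qPochhammer_eq_prod_range (-z) hq 2
  have right_split := qPochhammer_eq_prod_range (-(q / z)) hq 2
  simp only [Finset.prod_range_succ, Finset.prod_range_zero, one_mul, pow_zero, mul_one,
    pow_one] at left_split right_split
  rw [theta_eq_eulerProd_mul hq₀ hq hz, theta_eq_eulerProd_mul hq₂ hq₂' hz,
    theta_eq_eulerProd_mul hq₂ hq₂' (mul_ne_zero hz hq₀), left_split, right_split,
    show q ^ 2 / (z * q) = q / z by field_simp, show -(q / z) * q = -(q ^ 2 / z) by ring, neg_mul]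
  ring

end ThetaProducts

/-! ### Ramanujan's parameter `k` -/

/-- The Rogers-Ramanujan quotient `R(q) = (q, q⁴; q⁵)_∞ / (q², q³; q⁵)_∞`, written with theta series
and without the customary factor `q ^ (1/5)`. -/
noncomputable def rogersRamanujan (q : ℂ) : ℂ := theta (-q) (q ^ 5) / theta (-q ^ 2) (q ^ 5)

/-- Ramanujan's parameter `k = q R(q) R(q²)²`. -/
noncomputable def ramanujanK (q : ℂ) : ℂ := q * rogersRamanujan q * rogersRamanujan (q ^ 2) ^ 2

section RamanujanK

variable {q : ℂ}

theorem theta_neg_self_five_ne_zero (hq₀ : q ≠ 0) (hq : ‖q‖ < 1) : theta (-q) (q ^ 5) ≠ 0 := by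
  refine left_ne_zero_of_mul (b := theta (-q ^ 2) (q ^ 5)) ?_
  rw [theta_neg_mul_theta_neg_sq hq₀ hq]
  exact mul_ne_zero (eulerProd_ne_zero hq) (eulerProd_pow_ne_zero hq (by simp))

theorem theta_neg_sq_five_ne_zero (hq₀ : q ≠ 0) (hq : ‖q‖ < 1) :
    theta (-q ^ 2) (q ^ 5) ≠ 0 := by
  refine right_ne_zero_of_mul (a := theta (-q) (q ^ 5)) ?_
  rw [theta_neg_mul_theta_neg_sq hq₀ hq]
  exact mul_ne_zero (eulerProd_ne_zero hq) (eulerProd_pow_ne_zero hq (by simp))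

theorem rogersRamanujan_ne_zero (hq₀ : q ≠ 0) (hq : ‖q‖ < 1) : rogersRamanujan q ≠ 0 :=
  div_ne_zero (theta_neg_self_five_ne_zero hq₀ hq) (theta_neg_sq_five_ne_zero hq₀ hq)

theorem ramanujanK_ne_zero (hq₀ : q ≠ 0) (hq : ‖q‖ < 1) : ramanujanK q ≠ 0 :=
  mul_ne_zero (mul_ne_zero hq₀ (rogersRamanujan_ne_zero hq₀ hq)) <| pow_ne_zero 2 <|
    rogersRamanujan_ne_zero (pow_ne_zero 2 hq₀) (norm_pow_lt_one hq two_ne_zero)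

theorem rogersRamanujan_eq_ten (hq₀ : q ≠ 0) (hq : ‖q‖ < 1) :
    rogersRamanujan q = theta (-q) (q ^ 10) * theta (-q ^ 4) (q ^ 10) /
      (theta (-q ^ 2) (q ^ 10) * theta (-q ^ 3) (q ^ 10)) := by
  have hq₅ := pow_ne_zero 5 hq₀
  have hq₅' := norm_pow_lt_one hq (n := 5) (by simp)
  have numerator := eulerProd_sq_mul_theta hq₅ hq₅' (neg_ne_zero.2 hq₀)
  have denominator := eulerProd_sq_mul_theta hq₅ hq₅' (neg_ne_zero.2 (pow_ne_zero 2 hq₀))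
  rw [← pow_mul, theta_eq_of_mul_eq (pow_ne_zero _ hq₀)
    (show -q * q ^ 5 * -q ^ 4 = q ^ (5 * 2) by ring)] at numerator
  rw [← pow_mul, theta_eq_of_mul_eq (pow_ne_zero _ hq₀)
    (show -q ^ 2 * q ^ 5 * -q ^ 3 = q ^ (5 * 2) by ring)] at denominator
  rw [rogersRamanujan, ← mul_div_mul_left _ _ (pow_ne_zero 2 (eulerProd_pow_ne_zero hq
    (n := 5 * 2) (by simp))), numerator, denominator,
    mul_div_mul_left _ _ (eulerProd_pow_ne_zero hq (by simp))]

theorem theta_ten_quadruple_product (hq₀ : q ≠ 0) (hq : ‖q‖ < 1) :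
    theta (-q ^ 3) (q ^ 10) * theta (-q ^ 4) (q ^ 10) *
      (theta (-q) (q ^ 10) * theta (-q ^ 2) (q ^ 10)) =
      eulerProd q * eulerProd (q ^ 10) ^ 4 / eulerProd (q ^ 5) := by
  have hE₂ := eulerProd_pow_ne_zero hq two_ne_zero
  have hE₅ := eulerProd_pow_ne_zero hq (n := 5) (by simp)
  have odd_pair := theta_neg_mul_theta_neg_cube hq₀ hq
  have even_pair :=
    theta_neg_mul_theta_neg_sq (pow_ne_zero 2 hq₀) (norm_pow_lt_one hq two_ne_zero)
  simp only [← pow_mul, Nat.reduceMul] at even_pair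
  calc _ = theta (-q) (q ^ 10) * theta (-q ^ 3) (q ^ 10) *
        (theta (-q ^ 2) (q ^ 10) * theta (-q ^ 4) (q ^ 10)) := by ring
    _ = _ := by
      rw [odd_pair, even_pair]
      field_simp

theorem theta_ten_quadruple_product_ne_zero (hq₀ : q ≠ 0) (hq : ‖q‖ < 1) :
    theta (-q ^ 3) (q ^ 10) * theta (-q ^ 4) (q ^ 10) *
      (theta (-q) (q ^ 10) * theta (-q ^ 2) (q ^ 10)) ≠ 0 := by
  rw [theta_ten_quadruple_product hq₀ hq]
  exact div_ne_zero (mul_ne_zero (eulerProd_ne_zero hq)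
    (pow_ne_zero 4 (eulerProd_pow_ne_zero hq (by simp)))) (eulerProd_pow_ne_zero hq (by simp))

theorem ramanujanK_mul_theta (hq₀ : q ≠ 0) (hq : ‖q‖ < 1) :
    ramanujanK q * (theta (-q ^ 3) (q ^ 10) * theta (-q ^ 4) (q ^ 10)) =
      q * (theta (-q) (q ^ 10) * theta (-q ^ 2) (q ^ 10)) := by
  have product_ne_zero := theta_ten_quadruple_product_ne_zero hq₀ hq
  have h₃ := left_ne_zero_of_mul (left_ne_zero_of_mul product_ne_zero)
  have h₄ := right_ne_zero_of_mul (left_ne_zero_of_mul product_ne_zero)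
  have h₂ := right_ne_zero_of_mul (right_ne_zero_of_mul product_ne_zero)
  rw [ramanujanK, rogersRamanujan_eq_ten hq₀ hq, rogersRamanujan]
  simp only [← pow_mul, Nat.reduceMul]
  field_simp

theorem inv_ramanujanK_sub (hq₀ : q ≠ 0) (hq : ‖q‖ < 1) :
    (ramanujanK q)⁻¹ - ramanujanK q = eulerProd (q ^ 2) * eulerProd (q ^ 5) ^ 5 /
      (q * eulerProd q * eulerProd (q ^ 10) ^ 5) := by
  have hE₁ := eulerProd_ne_zero hq
  have hE₅ := eulerProd_pow_ne_zero hq (n := 5) (by simp)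
  have hE₁₀ := eulerProd_pow_ne_zero hq (n := 10) (by simp)
  have hk := ramanujanK_ne_zero hq₀ hq
  have hA := left_ne_zero_of_mul (theta_ten_quadruple_product_ne_zero hq₀ hq)
  have k_mul := ramanujanK_mul_theta hq₀ hq
  have product := theta_ten_quadruple_product hq₀ hq
  have minus := theta_neg_mul_theta_sq hq₀ hq
  have plus := theta_mul_theta_neg_sq hq₀ hq
  have negative_pair := theta_neg_mul_theta_neg_sq hq₀ hq
  have positive_pair := theta_mul_theta_pow_two hq₀ hq
  rw [← k_mul] at minus plus
  set A := theta (-q ^ 3) (q ^ 10) * theta (-q ^ 4) (q ^ 10)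
  have A_sq_mul_k : A ^ 2 * ramanujanK q =
      q * (eulerProd q * eulerProd (q ^ 10) ^ 4 / eulerProd (q ^ 5)) := by
    linear_combination A * k_mul + q * product
  have A_sq_mul_one_sub : A ^ 2 * (1 - ramanujanK q ^ 2) = eulerProd q * eulerProd (q ^ 5) *
      (eulerProd (q ^ 2) * eulerProd (q ^ 5) ^ 3 / (eulerProd q * eulerProd (q ^ 10))) := by
    rw [← negative_pair, ← positive_pair]
    linear_combination -(theta q (q ^ 5) * theta (-q ^ 2) (q ^ 5)) * minus -
      (A - ramanujanK q * A) * plus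
  calc (ramanujanK q)⁻¹ - ramanujanK q
      = A ^ 2 * (1 - ramanujanK q ^ 2) / (A ^ 2 * ramanujanK q) := by field_simp
    _ = _ := by
        rw [A_sq_mul_one_sub, A_sq_mul_k]
        field_simp

theorem inv_ramanujanK_sub_four_sub (hq₀ : q ≠ 0) (hq : ‖q‖ < 1) :
    (ramanujanK q)⁻¹ - 4 - ramanujanK q = eulerProd q ^ 3 * eulerProd (q ^ 5) /
      (q * eulerProd (q ^ 2) * eulerProd (q ^ 10) ^ 3) := by
  have hE₁ := eulerProd_ne_zero hq
  have hE₂ := eulerProd_pow_ne_zero hq two_ne_zero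
  have hE₅ := eulerProd_pow_ne_zero hq (n := 5) (by simp)
  have hE₁₀ := eulerProd_pow_ne_zero hq (n := 10) (by simp)
  have theta_five :=
    theta_neg_self (pow_ne_zero 5 hq₀) (norm_pow_lt_one hq (n := 5) (by simp))
  simp only [← pow_mul, Nat.reduceMul] at theta_five
  have identity := theta_neg_self_sq hq₀ hq
  rw [theta_neg_mul_theta_neg_cube hq₀ hq, theta_neg_self hq₀ hq, theta_five] at identity
  rw [sub_right_comm, inv_ramanujanK_sub hq₀ hq]
  field_simp at identity ⊢
  linear_combination -identity

theorem inv_ramanujanK_add_one_sub (hq₀ : q ≠ 0) (hq : ‖q‖ < 1) :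
    (ramanujanK q)⁻¹ + 1 - ramanujanK q = eulerProd (q ^ 2) ^ 4 * eulerProd (q ^ 5) ^ 2 /
      (q * eulerProd q ^ 2 * eulerProd (q ^ 10) ^ 4) := by
  have hE₁ := eulerProd_ne_zero hq
  have hE₅ := eulerProd_pow_ne_zero hq (n := 5) (by simp)
  have hE₁₀ := eulerProd_pow_ne_zero hq (n := 10) (by simp)
  have theta_five := theta_one (pow_ne_zero 5 hq₀) (norm_pow_lt_one hq (n := 5) (by simp))
  simp only [← pow_mul, Nat.reduceMul] at theta_five
  have identity := theta_one_sq hq₀ hq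
  rw [theta_mul_theta_pow_two hq₀ hq, theta_one hq₀ hq, theta_five] at identity
  rw [add_sub_right_comm, inv_ramanujanK_sub hq₀ hq]
  field_simp at identity ⊢
  linear_combination -identity / 4

theorem eulerProd_pow_five_div_add (hq₀ : q ≠ 0) (hq : ‖q‖ < 1) :
    eulerProd q ^ 5 / eulerProd (q ^ 5) + 4 * (eulerProd (q ^ 2) ^ 5 / eulerProd (q ^ 10)) =
      5 * (eulerProd q * eulerProd (q ^ 2) ^ 2 * eulerProd (q ^ 5) ^ 3 /
        eulerProd (q ^ 10) ^ 2) := by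
  have hE₁ := eulerProd_ne_zero hq
  have hE₂ := eulerProd_pow_ne_zero hq two_ne_zero
  have hE₅ := eulerProd_pow_ne_zero hq (n := 5) (by simp)
  have hE₁₀ := eulerProd_pow_ne_zero hq (n := 10) (by simp)
  have relation : eulerProd q ^ 3 * eulerProd (q ^ 5) /
      (q * eulerProd (q ^ 2) * eulerProd (q ^ 10) ^ 3) + 4 * (eulerProd (q ^ 2) ^ 4 *
        eulerProd (q ^ 5) ^ 2 / (q * eulerProd q ^ 2 * eulerProd (q ^ 10) ^ 4)) =
      5 * (eulerProd (q ^ 2) * eulerProd (q ^ 5) ^ 5 /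
        (q * eulerProd q * eulerProd (q ^ 10) ^ 5)) := by
    rw [← inv_ramanujanK_sub hq₀ hq, ← inv_ramanujanK_sub_four_sub hq₀ hq,
      ← inv_ramanujanK_add_one_sub hq₀ hq]
    ring
  field_simp at relation ⊢
  linear_combination relation

end RamanujanK

open PowerSeries

/-! ### Convergent expansions on the punctured unit disc -/

section DiskExpansion

variable {R : Type*} [CommRing R] [Algebra R ℂ] {c d : R⟦X⟧} {f g : ℂ → ℂ} {q : ℂ}

/-- The formal power series `c` converges to `f` on the punctured open unit disc. The coefficient
ring is kept general in order to express integrality, and the origin is left out because the theta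
series are only considered for `q ≠ 0`. -/
def HasDiskExpansion (c : R⟦X⟧) (f : ℂ → ℂ) : Prop :=
  ∀ q : ℂ, q ≠ 0 → ‖q‖ < 1 → HasSum (fun n ↦ algebraMap R ℂ (coeff n c) * q ^ n) (f q)

/-- The sum of a formal power series at a complex number. -/
noncomputable def diskSum (c : R⟦X⟧) (q : ℂ) : ℂ := ∑' n, algebraMap R ℂ (coeff n c) * q ^ n

theorem hasSum_zero_pow (c : R⟦X⟧) : HasSum
    (fun n ↦ algebraMap R ℂ (coeff n c) * 0 ^ n) (algebraMap R ℂ (constantCoeff c)) := by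
  simpa using hasSum_single (f := fun n ↦ algebraMap R ℂ (coeff n c) * (0 : ℂ) ^ n) 0
    fun n hn ↦ by simp [hn]

theorem hasDiskExpansion_C (r : R) :
    HasDiskExpansion (C r) fun _ ↦ algebraMap R ℂ r := by
  intro q _ _
  simpa using hasSum_single (f := fun n ↦ algebraMap R ℂ (coeff n (C r)) * q ^ n) 0
    fun n hn ↦ by simp [coeff_C, hn]

theorem hasDiskExpansion_X : HasDiskExpansion (X : R⟦X⟧) fun q ↦ q := by
  intro q _ _
  simpa using hasSum_single (f := fun n ↦ algebraMap R ℂ (coeff n (X : R⟦X⟧)) * q ^ n) 1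
    fun n hn ↦ by simp [coeff_X, hn]

namespace HasDiskExpansion

theorem diskSum_eq (h : HasDiskExpansion c f) (hq₀ : q ≠ 0) (hq : ‖q‖ < 1) : diskSum c q = f q :=
  (h q hq₀ hq).tsum_eq

theorem hasSum_diskSum (h : HasDiskExpansion c f) (hq : ‖q‖ < 1) :
    HasSum (fun n ↦ algebraMap R ℂ (coeff n c) * q ^ n) (diskSum c q) := by
  rcases eq_or_ne q 0 with rfl | hq₀
  · exact (hasSum_zero_pow c).summable.hasSum
  · exact (h q hq₀ hq).summable.hasSum

theorem congr (h : HasDiskExpansion c f) (hfg : ∀ q, q ≠ 0 → ‖q‖ < 1 → f q = g q) :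
    HasDiskExpansion c g :=
  fun q hq₀ hq ↦ hfg q hq₀ hq ▸ h q hq₀ hq

theorem sub (hf : HasDiskExpansion c f) (hg : HasDiskExpansion d g) :
    HasDiskExpansion (c - d) fun q ↦ f q - g q := fun q hq₀ hq ↦
  ((hf q hq₀ hq).sub (hg q hq₀ hq)).congr_fun fun n ↦ by simp [sub_mul]

theorem mul (hf : HasDiskExpansion c f) (hg : HasDiskExpansion d g) :
    HasDiskExpansion (c * d) fun q ↦ f q * g q := by
  intro q hq₀ hq
  have norm_f := (hf q hq₀ hq).summable.norm
  have norm_g := (hg q hq₀ hq).summable.norm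
  have product := (summable_norm_sum_mul_antidiagonal_of_summable_norm norm_f norm_g).of_norm.hasSum
  rw [← tsum_mul_tsum_eq_tsum_sum_antidiagonal_of_summable_norm norm_f norm_g,
    (hf q hq₀ hq).tsum_eq, (hg q hq₀ hq).tsum_eq] at product
  refine product.congr_fun fun n ↦ ?_
  rw [coeff_mul, map_sum, Finset.sum_mul]
  refine Finset.sum_congr rfl fun p hp ↦ ?_
  rw [← Finset.HasAntidiagonal.mem_antidiagonal.1 hp, pow_add, _root_.map_mul]
  ring

theorem pow (hf : HasDiskExpansion c f) (n : ℕ) : HasDiskExpansion (c ^ n) fun q ↦ f q ^ n := by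
  induction n with
  | zero => simpa using hasDiskExpansion_C (1 : R)
  | succ n ih => simpa only [pow_succ] using ih.mul hf

theorem exists_norm_le (hf : HasDiskExpansion c f) (hq : ‖q‖ < 1) :
    ∃ (u : ℕ → ℝ) (r : ℝ), Summable u ∧ ‖q‖ < r ∧
      ∀ n, ∀ w ∈ Metric.ball (0 : ℂ) r, ‖algebraMap R ℂ (coeff n c) * w ^ n‖ ≤ u n := by
  obtain ⟨r, hqr, hr⟩ := exists_between hq
  have hr₀ : 0 ≤ r := (norm_nonneg q).trans hqr.le
  have norm_r : ‖(r : ℂ)‖ = r := by rw [Complex.norm_real, Real.norm_of_nonneg hr₀]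
  refine ⟨_, r, (hf.hasSum_diskSum (norm_r.trans_lt hr)).summable.norm, hqr, fun n w hw ↦ ?_⟩
  rw [norm_mul, norm_mul, norm_pow, norm_pow, norm_r]
  gcongr
  exact (mem_ball_zero_iff.1 hw).le

theorem differentiableAt_diskSum (hf : HasDiskExpansion c f) (hq : ‖q‖ < 1) :
    DifferentiableAt ℂ (diskSum c) q := by
  obtain ⟨u, r, hu, hqr, bound⟩ := hf.exists_norm_le hq
  exact (Complex.differentiableOn_tsum_of_summable_norm hu (fun n ↦ by fun_prop)
    Metric.isOpen_ball bound).differentiableAt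
    (Metric.isOpen_ball.mem_nhds (mem_ball_zero_iff.2 hqr))

theorem hasSum_natCast_mul_deriv_diskSum (hf : HasDiskExpansion c f) (hq : ‖q‖ < 1) :
    HasSum (fun n : ℕ ↦ n * algebraMap R ℂ (coeff n c) * q ^ n) (q * deriv (diskSum c) q) := by
  obtain ⟨u, r, hu, hqr, bound⟩ := hf.exists_norm_le hq
  refine ((Complex.hasSum_deriv_of_summable_norm hu (fun n ↦ by fun_prop) Metric.isOpen_ball bound
    (mem_ball_zero_iff.2 hqr)).mul_left q).congr_fun fun n ↦ ?_
  rw [deriv_const_mul_field, deriv_pow_field]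
  rcases n with _ | n
  · simp
  · rw [Nat.add_sub_cancel]
    ring

theorem eventuallyEq_diskSum (hf : HasDiskExpansion c f) (hq₀ : q ≠ 0) (hq : ‖q‖ < 1) :
    f =ᶠ[𝓝 q] diskSum c := by
  filter_upwards [isOpen_ne.mem_nhds hq₀,
    Metric.isOpen_ball.mem_nhds (mem_ball_zero_iff.2 hq)] with w hw₀ hw
  exact (hf.diskSum_eq hw₀ (mem_ball_zero_iff.1 hw)).symm

theorem differentiableAt (hf : HasDiskExpansion c f) (hq₀ : q ≠ 0) (hq : ‖q‖ < 1) :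
    DifferentiableAt ℂ f q :=
  (hf.eventuallyEq_diskSum hq₀ hq).differentiableAt_iff.2 (hf.differentiableAt_diskSum hq)

theorem hasSum_natCast_mul (hf : HasDiskExpansion c f) (hq₀ : q ≠ 0) (hq : ‖q‖ < 1) :
    HasSum (fun n : ℕ ↦ n * algebraMap R ℂ (coeff n c) * q ^ n) (q * deriv f q) := by
  rw [(hf.eventuallyEq_diskSum hq₀ hq).deriv_eq]
  exact hf.hasSum_natCast_mul_deriv_diskSum hq

theorem map_iff : HasDiskExpansion (PowerSeries.map (algebraMap R ℂ) c) f ↔ HasDiskExpansion c f :=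
  Iff.rfl

theorem hasFPowerSeriesAt {c : ℂ⟦X⟧} (hf : HasDiskExpansion c f) : HasFPowerSeriesAt (diskSum c)
    (FormalMultilinearSeries.ofScalars ℂ fun n ↦ coeff n c) 0 := by
  rw [hasFPowerSeriesAt_iff]
  filter_upwards [Metric.ball_mem_nhds (0 : ℂ) one_pos] with w hw
  rw [zero_add]
  exact (hf.hasSum_diskSum (mem_ball_zero_iff.1 hw)).congr_fun fun n ↦ by simp [mul_comm]

theorem unique {c d : ℂ⟦X⟧} (hc : HasDiskExpansion c f) (hd : HasDiskExpansion d f) : c = d := by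
  have punctured : ∀ᶠ w in 𝓝[≠] (0 : ℂ), diskSum c w = diskSum d w := by
    filter_upwards [self_mem_nhdsWithin,
      nhdsWithin_le_nhds (Metric.ball_mem_nhds (0 : ℂ) one_pos)] with w hw₀ hw
    rw [hc.diskSum_eq hw₀ (mem_ball_zero_iff.1 hw), hd.diskSum_eq hw₀ (mem_ball_zero_iff.1 hw)]
  have near_zero : diskSum c =ᶠ[𝓝 0] diskSum d :=
    (hc.hasFPowerSeriesAt.analyticAt.frequently_eq_iff_eventually_eq
      hd.hasFPowerSeriesAt.analyticAt).1 punctured.frequently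
  have series_eq := (hc.hasFPowerSeriesAt.congr near_zero).eq_formalMultilinearSeries
    hd.hasFPowerSeriesAt
  ext n
  simpa using congrArg (·.coeff n) series_eq

theorem unique_of_faithfulSMul [FaithfulSMul R ℂ] (hc : HasDiskExpansion c f)
    (hd : HasDiskExpansion d f) : c = d :=
  PowerSeries.map_injective _ (FaithfulSMul.algebraMap_injective R ℂ)
    ((map_iff.2 hc).unique (map_iff.2 hd))

theorem exists_inv {c : ℂ⟦X⟧} (hf : HasDiskExpansion c f) (hc : constantCoeff c ≠ 0)
    (hne : ∀ q, q ≠ 0 → ‖q‖ < 1 → f q ≠ 0) :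
    ∃ d : ℂ⟦X⟧, HasDiskExpansion d fun q ↦ (f q)⁻¹ := by
  have sum_ne_zero (q : ℂ) (hq : ‖q‖ < 1) : diskSum c q ≠ 0 := by
    rcases eq_or_ne q 0 with rfl | hq₀
    · rwa [diskSum, (hasSum_zero_pow c).tsum_eq]
    · exact hf.diskSum_eq hq₀ hq ▸ hne q hq₀ hq
  have holomorphic : DifferentiableOn ℂ (fun q ↦ (diskSum c q)⁻¹)
      (Metric.ball 0 ((1 : NNReal) : ℝ)) := fun q hq ↦ by
    have hq : ‖q‖ < 1 := by simpa using hq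
    exact ((hf.differentiableAt_diskSum hq).inv (sum_ne_zero q hq)).differentiableWithinAt
  refine ⟨PowerSeries.mk fun n ↦
    (n.factorial : ℂ)⁻¹ * iteratedDeriv n (fun q ↦ (diskSum c q)⁻¹) 0, fun q hq₀ hq ↦ ?_⟩
  have taylor := Complex.hasSum_taylorSeries_on_ball holomorphic (z := q) (by simpa using hq)
  rw [hf.diskSum_eq hq₀ hq] at taylor
  refine taylor.congr_fun fun n ↦ ?_
  simp only [coeff_mk, Algebra.algebraMap_self, RingHom.id_apply, sub_zero, smul_eq_mul]
  ring

theorem inv_of_mul_eq_one (hf : HasDiskExpansion c f) (hcd : c * d = 1)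
    (hne : ∀ q, q ≠ 0 → ‖q‖ < 1 → f q ≠ 0) : HasDiskExpansion d fun q ↦ (f q)⁻¹ := by
  rw [← map_iff] at hf ⊢
  have map_mul_eq_one := congrArg (PowerSeries.map (algebraMap R ℂ)) hcd
  rw [_root_.map_mul, _root_.map_one] at map_mul_eq_one
  have constantCoeff_ne_zero : constantCoeff (PowerSeries.map (algebraMap R ℂ) c) ≠ 0 :=
    (IsUnit.of_mul_eq_one _ map_mul_eq_one).map constantCoeff |>.ne_zero
  obtain ⟨e, he⟩ := hf.exists_inv constantCoeff_ne_zero hne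
  have mul_e : PowerSeries.map (algebraMap R ℂ) c * e = 1 := by
    refine ((hf.mul he).congr fun q hq₀ hq ↦ mul_inv_cancel₀ (hne q hq₀ hq)).unique ?_
    simpa using hasDiskExpansion_C (1 : ℂ)
  rwa [← left_inv_eq_right_inv ((mul_comm _ _).trans mul_e) map_mul_eq_one]

theorem invOfUnit_one (hf : HasDiskExpansion c f) (hc : constantCoeff c = 1)
    (hne : ∀ q, q ≠ 0 → ‖q‖ < 1 → f q ≠ 0) :
    HasDiskExpansion (invOfUnit c 1) fun q ↦ (f q)⁻¹ :=
  hf.inv_of_mul_eq_one (mul_invOfUnit c 1 (by rwa [Units.val_one])) hne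

end HasDiskExpansion

end DiskExpansion

/-! ### Integral expansions of theta series -/

section ThetaSeries

variable {q : ℂ} {a m : ℕ}

/-- The formal power series `∑ j, (-1) ^ j X ^ (a j + m j (j - 1) / 2)` of `theta (-q ^ a) (q ^ m)`.
For `0 < a < m` every `j` contributing to the `n`-th coefficient satisfies `|j| ≤ n`. -/
noncomputable def thetaSeries (a m : ℕ) : ℤ⟦X⟧ :=
  PowerSeries.mk fun n ↦ ∑ j ∈ Finset.Icc (-(n : ℤ)) n with thetaExp a m j = n, (-1) ^ j.natAbs

theorem constantCoeff_thetaSeries (a m : ℕ) : constantCoeff (thetaSeries a m) = 1 := by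
  rw [← coeff_zero_eq_constantCoeff_apply, thetaSeries, coeff_mk]
  simp [Finset.filter_singleton, thetaExp, tri]

theorem abs_le_thetaExp (ha : 0 < a) (ham : a < m) (j : ℤ) : |j| ≤ thetaExp a m j := by
  have one_le_a : (1 : ℤ) ≤ a := by exact_mod_cast ha
  have a_add_one_le_m : (a : ℤ) + 1 ≤ m := by exact_mod_cast ham
  rw [thetaExp]
  rcases le_or_gt 0 j with hj | hj
  · rw [abs_of_nonneg hj]
    nlinarith [mul_nonneg (sub_nonneg.2 one_le_a) hj,
      mul_nonneg (Int.natCast_nonneg m) (tri_nonneg j)]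
  · have neg_le_tri : -j ≤ tri j := by nlinarith [two_mul_tri j]
    rw [abs_of_neg hj]
    nlinarith [mul_nonneg (sub_nonneg.2 a_add_one_le_m) (tri_nonneg j),
      mul_nonneg (Int.natCast_nonneg a) (sub_nonneg.2 neg_le_tri)]

theorem thetaTerm_neg_pow_pow (hq₀ : q ≠ 0) (a m : ℕ) (j : ℤ) :
    thetaTerm (-q ^ a) (q ^ m) j = (-1) ^ j.natAbs * q ^ thetaExp a m j := by
  have sign_eq : (-1 : ℂ) ^ j = (-1) ^ j.natAbs := by
    rcases Int.natAbs_eq j with hj | hj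
    · conv_lhs => rw [hj, zpow_natCast]
    · conv_lhs => rw [hj, zpow_neg, zpow_natCast, ← inv_pow, inv_neg_one]
  rw [thetaTerm, thetaExp, neg_eq_neg_one_mul, mul_zpow, sign_eq, zpow_add₀ hq₀, zpow_mul,
    zpow_mul, zpow_natCast, zpow_natCast, mul_assoc]

theorem preimage_toNat_thetaExp (ha : 0 < a) (ham : a < m) (n : ℕ) :
    (fun j ↦ (thetaExp a m j).toNat) ⁻¹' {n} =
      ↑({j ∈ Finset.Icc (-(n : ℤ)) n | thetaExp a m j = n} : Finset ℤ) := by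
  ext j
  have bounds := abs_le.1 (abs_le_thetaExp ha ham j)
  simp only [Set.mem_preimage, Set.mem_singleton_iff, Finset.coe_filter, Finset.mem_Icc,
    Set.mem_ofPred_eq]
  omega

theorem hasSum_mul_coeff_thetaSeries (hq₀ : q ≠ 0) (ha : 0 < a) (ham : a < m) {w : ℕ → ℂ} {s : ℂ}
    (hs : HasSum (fun j ↦ w (thetaExp a m j).toNat * thetaTerm (-q ^ a) (q ^ m) j) s) :
    HasSum (fun n ↦ w n * (coeff n (thetaSeries a m) : ℤ) * q ^ n) s := by
  refine (hs.tsum_fiberwise fun j ↦ (thetaExp a m j).toNat).congr_fun fun n ↦ ?_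
  rw [preimage_toNat_thetaExp ha ham, Finset.tsum_subtype'
    _ fun j ↦ w (thetaExp a m j).toNat * thetaTerm (-q ^ a) (q ^ m) j, thetaSeries, coeff_mk]
  push_cast
  rw [Finset.mul_sum, Finset.sum_mul]
  refine Finset.sum_congr rfl fun j hj ↦ ?_
  rw [thetaTerm_neg_pow_pow hq₀, (Finset.mem_filter.1 hj).2, Int.toNat_natCast, zpow_natCast,
    mul_assoc]

theorem hasDiskExpansion_theta (ha : 0 < a) (ham : a < m) :
    HasDiskExpansion (thetaSeries a m) fun q ↦ theta (-q ^ a) (q ^ m) := by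
  intro q hq₀ hq
  have hm : m ≠ 0 := by omega
  have sum_theta := (summable_norm_thetaTerm (pow_ne_zero m hq₀) (norm_pow_lt_one hq hm)
    (neg_ne_zero.2 (pow_ne_zero a hq₀))).of_norm.hasSum
  simpa [theta] using
    hasSum_mul_coeff_thetaSeries (w := fun _ ↦ 1) hq₀ ha ham (by simpa using sum_theta)

theorem hasDerivAt_theta (hq₀ : q ≠ 0) (hq : ‖q‖ < 1) (ha : 0 < a) (ham : a < m) :
    HasDerivAt (fun q ↦ theta (-q ^ a) (q ^ m)) (thetaEulerDeriv a m q / q) q := by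
  have expansion := hasDiskExpansion_theta ha ham
  have cast_toNat (j : ℤ) : ((thetaExp a m j).toNat : ℂ) = thetaExp a m j := by
    rw [← Int.cast_natCast, Int.toNat_of_nonneg ((abs_nonneg j).trans (abs_le_thetaExp ha ham j))]
  have sum_eulerDeriv :
      HasSum (fun n : ℕ ↦ n * ((coeff n (thetaSeries a m) : ℤ) : ℂ) * q ^ n)
        (thetaEulerDeriv a m q) := by
    refine hasSum_mul_coeff_thetaSeries (w := fun n ↦ n) hq₀ ha ham ?_
    simp only [cast_toNat]
    exact (summable_norm_thetaExp_mul_thetaTerm hq₀ hq a (by omega)).of_norm.hasSum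
  rw [sum_eulerDeriv.unique (expansion.hasSum_natCast_mul hq₀ hq), mul_div_cancel_left₀ _ hq₀]
  exact (expansion.differentiableAt hq₀ hq).hasDerivAt

theorem theta_neg_pow_three_mul (hq₀ : q ≠ 0) (hq : ‖q‖ < 1) (hm : m ≠ 0) :
    theta (-q ^ m) (q ^ (3 * m)) = eulerProd (q ^ m) := by
  have product := theta_sign_mul_pow hq₀ hq (s := -1) (by norm_num)
    (mul_ne_zero three_ne_zero hm) (show m + 2 * m = 3 * m by ring)
  simp only [neg_one_mul, neg_neg] at product
  rw [product, eulerProd, eulerProd, qPochhammer_eq_prod_range _ (norm_pow_lt_one hq hm) 3]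
  simp only [Finset.prod_range_succ, Finset.prod_range_zero]
  ring_nf

theorem hasDiskExpansion_eulerProd_pow (hm : m ≠ 0) :
    HasDiskExpansion (thetaSeries m (3 * m)) fun q ↦ eulerProd (q ^ m) :=
  (hasDiskExpansion_theta (by omega) (by omega)).congr
    fun _ hq₀ hq ↦ theta_neg_pow_three_mul hq₀ hq hm

theorem hasDiskExpansion_inv_eulerProd_pow (hm : m ≠ 0) :
    HasDiskExpansion (invOfUnit (thetaSeries m (3 * m)) 1) fun q ↦ (eulerProd (q ^ m))⁻¹ :=
  (hasDiskExpansion_eulerProd_pow hm).invOfUnit_one (constantCoeff_thetaSeries _ _)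
    fun _ _ hq ↦ eulerProd_pow_ne_zero hq hm

end ThetaSeries

/-! ### The antiderivative -/

section Antiderivative

variable {q : ℂ}

theorem hasDerivAt_rogersRamanujan (hq₀ : q ≠ 0) (hq : ‖q‖ < 1) :
    HasDerivAt rogersRamanujan
      (rogersRamanujan q * ((eulerProd q ^ 5 / eulerProd (q ^ 5) - 1) / 5) / q) q := by
  have deriv_num := hasDerivAt_theta hq₀ hq (a := 1) (m := 5) (by norm_num) (by norm_num)
  have deriv_den := hasDerivAt_theta hq₀ hq (a := 2) (m := 5) (by norm_num) (by norm_num)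
  simp only [pow_one] at deriv_num
  have num_ne_zero := theta_neg_self_five_ne_zero hq₀ hq
  have den_ne_zero := theta_neg_sq_five_ne_zero hq₀ hq
  have wronskian := theta_mul_theta_add_five_mul hq₀ hq
  have E1_ne_zero := eulerProd_ne_zero hq
  have E5_ne_zero := eulerProd_pow_ne_zero hq (n := 5) (by norm_num)
  have quotient_eq : eulerProd q ^ 5 / eulerProd (q ^ 5)
      = eulerProd q ^ 6 / (theta (-q) (q ^ 5) * theta (-q ^ 2) (q ^ 5)) := by
    rw [theta_neg_mul_theta_neg_sq hq₀ hq]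
    field_simp
  refine (deriv_num.div deriv_den den_ne_zero).congr_deriv ?_
  rw [quotient_eq, ← wronskian, rogersRamanujan]
  field_simp
  ring

theorem hasDerivAt_ramanujanK (hq₀ : q ≠ 0) (hq : ‖q‖ < 1) :
    HasDerivAt ramanujanK (ramanujanK q *
      (eulerProd q * eulerProd (q ^ 2) ^ 2 * eulerProd (q ^ 5) ^ 3 / eulerProd (q ^ 10) ^ 2) / q)
      q := by
  have deriv_R := hasDerivAt_rogersRamanujan hq₀ hq
  have deriv_R_sq : HasDerivAt (fun q ↦ rogersRamanujan (q ^ 2)) _ q :=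
    HasDerivAt.comp (h := fun q : ℂ ↦ q ^ 2) q
      (hasDerivAt_rogersRamanujan (pow_ne_zero 2 hq₀) (norm_pow_lt_one hq two_ne_zero))
      (hasDerivAt_pow 2 q)
  refine (((hasDerivAt_id q).mul deriv_R).mul (deriv_R_sq.pow 2)).congr_deriv ?_
  have logDeriv_factor_eq :
      eulerProd q * eulerProd (q ^ 2) ^ 2 * eulerProd (q ^ 5) ^ 3 / eulerProd (q ^ 10) ^ 2 =
        (eulerProd q ^ 5 / eulerProd (q ^ 5) +
          4 * (eulerProd (q ^ 2) ^ 5 / eulerProd (q ^ 10))) / 5 := by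
    rw [eulerProd_pow_five_div_add hq₀ hq, mul_div_cancel_left₀ _ (by norm_num)]
  rw [logDeriv_factor_eq, ramanujanK, ← pow_mul]
  simp only [id_eq, Pi.mul_apply, Pi.pow_apply, Nat.cast_ofNat, Nat.reduceMul, Nat.reduceSub]
  field_simp
  ring

theorem hasDerivAt_one_sub_two_mul_div {𝕜 : Type*} [NontriviallyNormedField 𝕜] {k : 𝕜}
    (hk : k ≠ 0) (hden : k⁻¹ + 1 - k ≠ 0) :
    HasDerivAt (fun k ↦ (1 - 2 * k) / (k⁻¹ + 1 - k))
      (k⁻¹ * (k⁻¹ - 4 - k) / (k⁻¹ + 1 - k) ^ 2) k := by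
  have deriv_num := ((hasDerivAt_id k).const_mul 2).const_sub 1
  have deriv_den := ((hasDerivAt_inv hk).add_const 1).sub (hasDerivAt_id k)
  refine (deriv_num.div deriv_den hden).congr_deriv ?_
  congr 1
  simp only [id_eq, Pi.sub_apply]
  field_simp
  ring

/-- A modular function whose derivative is `E(q) ^ 8 E(q ^ 10) ^ 3 / E(q ^ 2) ^ 7`, written as a
rational function of Ramanujan's `k`. -/
noncomputable def eulerQuotientPrimitive (q : ℂ) : ℂ :=
  (1 - 2 * ramanujanK q) / ((ramanujanK q)⁻¹ + 1 - ramanujanK q)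

theorem hasDerivAt_eulerQuotientPrimitive (hq₀ : q ≠ 0) (hq : ‖q‖ < 1) :
    HasDerivAt eulerQuotientPrimitive
      (eulerProd q ^ 8 * eulerProd (q ^ 10) ^ 3 / eulerProd (q ^ 2) ^ 7) q := by
  have k_ne_zero := ramanujanK_ne_zero hq₀ hq
  have E1_ne_zero := eulerProd_ne_zero hq
  have E2_ne_zero := eulerProd_pow_ne_zero hq (n := 2) (by norm_num)
  have E5_ne_zero := eulerProd_pow_ne_zero hq (n := 5) (by norm_num)
  have E10_ne_zero := eulerProd_pow_ne_zero hq (n := 10) (by norm_num)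
  have den_ne_zero : (ramanujanK q)⁻¹ + 1 - ramanujanK q ≠ 0 := by
    rw [inv_ramanujanK_add_one_sub hq₀ hq]
    positivity
  refine ((hasDerivAt_one_sub_two_mul_div k_ne_zero den_ne_zero).comp q
    (hasDerivAt_ramanujanK hq₀ hq)).congr_deriv ?_
  rw [inv_ramanujanK_add_one_sub hq₀ hq, inv_ramanujanK_sub_four_sub hq₀ hq]
  field_simp

theorem exists_hasDiskExpansion_rogersRamanujan :
    ∃ c : ℤ⟦X⟧, HasDiskExpansion c rogersRamanujan := by
  have num := hasDiskExpansion_theta (a := 1) (m := 5) (by norm_num) (by norm_num)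
  have den := hasDiskExpansion_theta (a := 2) (m := 5) (by norm_num) (by norm_num)
  have inv_den := den.invOfUnit_one (constantCoeff_thetaSeries _ _)
    fun q hq₀ hq ↦ theta_neg_sq_five_ne_zero hq₀ hq
  exact ⟨_, (num.mul inv_den).congr fun q _ _ ↦ by rw [pow_one, rogersRamanujan, div_eq_mul_inv]⟩

theorem exists_hasDiskExpansion_rogersRamanujan_sq :
    ∃ c : ℤ⟦X⟧, HasDiskExpansion c fun q ↦ rogersRamanujan (q ^ 2) := by
  have num := hasDiskExpansion_theta (a := 2 * 1) (m := 2 * 5) (by norm_num) (by norm_num)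
  have den := hasDiskExpansion_theta (a := 2 * 2) (m := 2 * 5) (by norm_num) (by norm_num)
  simp only [pow_mul, pow_one] at num den
  have inv_den := den.invOfUnit_one (constantCoeff_thetaSeries _ _) fun q hq₀ hq ↦
    theta_neg_sq_five_ne_zero (pow_ne_zero 2 hq₀) (norm_pow_lt_one hq two_ne_zero)
  exact ⟨_, (num.mul inv_den).congr fun q _ _ ↦ by rw [rogersRamanujan, div_eq_mul_inv]⟩

theorem exists_hasDiskExpansion_ramanujanK : ∃ c : ℤ⟦X⟧, HasDiskExpansion c ramanujanK := by
  obtain ⟨c, hc⟩ := exists_hasDiskExpansion_rogersRamanujan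
  obtain ⟨d, hd⟩ := exists_hasDiskExpansion_rogersRamanujan_sq
  exact ⟨_, (hasDiskExpansion_X.mul hc).mul (hd.pow 2)⟩

theorem exists_hasDiskExpansion_eulerQuotientPrimitive :
    ∃ c : ℤ⟦X⟧, HasDiskExpansion c eulerQuotientPrimitive := by
  obtain ⟨c, hc⟩ := exists_hasDiskExpansion_ramanujanK
  have E1 := hasDiskExpansion_eulerProd_pow (m := 1) (by norm_num)
  have E10 := hasDiskExpansion_eulerProd_pow (m := 10) (by norm_num)
  have inv_E2 := hasDiskExpansion_inv_eulerProd_pow (m := 2) (by norm_num)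
  have inv_E5 := hasDiskExpansion_inv_eulerProd_pow (m := 5) (by norm_num)
  have numerator := (hasDiskExpansion_C (1 : ℤ)).sub ((hasDiskExpansion_C (2 : ℤ)).mul hc)
  have inv_denominator := hasDiskExpansion_X.mul
    (((E1.pow 2).mul (E10.pow 4)).mul ((inv_E2.pow 4).mul (inv_E5.pow 2)))
  refine ⟨_, (numerator.mul inv_denominator).congr fun q hq₀ hq ↦ ?_⟩
  rw [eulerQuotientPrimitive, inv_ramanujanK_add_one_sub hq₀ hq]
  simp only [pow_one, map_one, map_ofNat]
  field_simp

theorem hasSum_natCast_mul_eulerQuotientPrimitive {c : ℤ⟦X⟧}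
    (hc : HasDiskExpansion c eulerQuotientPrimitive) (hq : ‖q‖ < 1) :
    HasSum (fun n : ℕ ↦ (n : ℂ) * (coeff n c : ℤ) * q ^ n)
      (q * eulerProd q ^ 8 * eulerProd (q ^ 10) ^ 3 / eulerProd (q ^ 2) ^ 7) := by
  rcases eq_or_ne q 0 with rfl | hq₀
  · have terms_eq_zero (n : ℕ) : (n : ℂ) * (coeff n c : ℤ) * 0 ^ n = 0 := by
      rcases n with _ | n <;> simp
    simpa only [terms_eq_zero, zero_mul, zero_div] using hasSum_zero
  · have derivative := hc.hasSum_natCast_mul hq₀ hq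
    rw [(hasDerivAt_eulerQuotientPrimitive hq₀ hq).deriv, ← mul_div_assoc, ← mul_assoc]
      at derivative
    exact derivative

end Antiderivative

/-! ### The first coefficients -/

section LowCoefficients

theorem X_pow_five_dvd_thetaSeries_one_sub :
    X ^ 5 ∣ thetaSeries 1 (3 * 1) - (1 - X - X ^ 2) := by
  rw [X_pow_dvd_iff]
  intro n hn
  rw [map_sub, sub_eq_zero, thetaSeries, coeff_mk]
  interval_cases n <;> simp only [map_sub, coeff_X, coeff_X_pow, coeff_one] <;> decide

theorem X_pow_five_dvd_thetaSeries_two_sub :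
    X ^ 5 ∣ thetaSeries 2 (3 * 2) - (1 - X ^ 2 - X ^ 4) := by
  rw [X_pow_dvd_iff]
  intro n hn
  rw [map_sub, sub_eq_zero, thetaSeries, coeff_mk]
  interval_cases n <;> simp only [map_sub, coeff_X_pow, coeff_one] <;> decide

theorem X_pow_five_dvd_thetaSeries_ten_sub : X ^ 5 ∣ thetaSeries 10 (3 * 10) - 1 := by
  rw [X_pow_dvd_iff]
  intro n hn
  rw [map_sub, sub_eq_zero, thetaSeries, coeff_mk]
  interval_cases n <;> simp only [coeff_one] <;> decide

theorem eq_of_mul_eq_of_pow_five_eq_zero {R : Type*} [CommRing R] {x d : R} (hx : x ^ 5 = 0)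
    (h : (1 - x ^ 2 - x ^ 4) ^ 7 * d = x * (1 - x - x ^ 2) ^ 8) :
    d = x - 8 * x ^ 2 + 27 * x ^ 3 - 56 * x ^ 4 := by
  have numerator_fourth : (1 - x - x ^ 2) ^ 4 = 1 - 4 * x + 2 * x ^ 2 + 8 * x ^ 3 - 5 * x ^ 4 := by
    linear_combination (-8 + 2 * x + 4 * x ^ 2 + x ^ 3) * hx
  have numerator : x * (1 - x - x ^ 2) ^ 8 = x - 8 * x ^ 2 + 20 * x ^ 3 := by
    rw [pow_mul _ 4 2, numerator_fourth]
    linear_combination (-70 + 72 * x + 44 * x ^ 2 - 80 * x ^ 3 + 25 * x ^ 4) * hx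
  have denominator_sq : (1 - x ^ 2 - x ^ 4) ^ 2 = 1 - 2 * x ^ 2 - x ^ 4 := by
    linear_combination (2 * x + x ^ 3) * hx
  have denominator_fourth : (1 - x ^ 2 - x ^ 4) ^ 4 = 1 - 4 * x ^ 2 + 2 * x ^ 4 := by
    rw [pow_mul _ 2 2, denominator_sq]
    linear_combination (4 * x + x ^ 3) * hx
  have denominator : (1 - x ^ 2 - x ^ 4) ^ 7 = 1 - 7 * x ^ 2 + 14 * x ^ 4 := by
    rw [pow_add _ 6 1, pow_add _ 4 2, denominator_fourth, denominator_sq]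
    linear_combination (-3 * x - 11 * x ^ 3 + 2 * x ^ 5 + 2 * x ^ 7) * hx
  have inverse : (1 + 7 * x ^ 2 + 35 * x ^ 4) * (1 - 7 * x ^ 2 + 14 * x ^ 4) = 1 := by
    linear_combination (-147 * x + 490 * x ^ 3) * hx
  rw [numerator, denominator] at h
  calc d = (1 + 7 * x ^ 2 + 35 * x ^ 4) * ((1 - 7 * x ^ 2 + 14 * x ^ 4) * d) := by
        rw [← mul_assoc, inverse, one_mul]
    _ = x - 8 * x ^ 2 + 27 * x ^ 3 - 56 * x ^ 4 := by
        rw [h]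
        linear_combination (175 - 280 * x + 700 * x ^ 2) * hx

theorem X_pow_five_dvd_sub_of_mul_eq {e₁ e₂ e₁₀ d : ℤ⟦X⟧}
    (h₁ : X ^ 5 ∣ e₁ - (1 - X - X ^ 2)) (h₂ : X ^ 5 ∣ e₂ - (1 - X ^ 2 - X ^ 4))
    (h₁₀ : X ^ 5 ∣ e₁₀ - 1) (h : e₂ ^ 7 * d = X * e₁ ^ 8 * e₁₀ ^ 3) :
    X ^ 5 ∣ d - (X - 8 * X ^ 2 + 27 * X ^ 3 - 56 * X ^ 4) := by
  rw [← Ideal.mem_span_singleton, ← Ideal.Quotient.mk_eq_mk_iff_sub_mem] at *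
  set φ := Ideal.Quotient.mk (Ideal.span {(X : ℤ⟦X⟧) ^ 5})
  simp only [map_sub, map_add, map_mul, map_pow, map_one, map_ofNat] at h₁ h₂ h₁₀ ⊢
  have x_pow_five : φ X ^ 5 = 0 := by
    rw [← map_pow, Ideal.Quotient.eq_zero_iff_mem]
    exact Ideal.mem_span_singleton_self _
  refine eq_of_mul_eq_of_pow_five_eq_zero x_pow_five ?_
  simpa [h₁, h₂, h₁₀] using congrArg φ h

theorem X_pow_five_dvd_natCast_mul_coeff_sub {c : ℤ⟦X⟧}
    (hc : HasDiskExpansion c eulerQuotientPrimitive) :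
    X ^ 5 ∣ PowerSeries.mk (fun n ↦ (n : ℤ) * coeff n c)
      - (X - 8 * X ^ 2 + 27 * X ^ 3 - 56 * X ^ 4) := by
  have derivative : HasDiskExpansion (PowerSeries.mk fun n ↦ (n : ℤ) * coeff n c) fun q ↦
      q * eulerProd q ^ 8 * eulerProd (q ^ 10) ^ 3 / eulerProd (q ^ 2) ^ 7 := fun q _ hq ↦ by
    simpa using hasSum_natCast_mul_eulerQuotientPrimitive hc hq
  have E1 := hasDiskExpansion_eulerProd_pow (m := 1) (by norm_num)
  have E2 := hasDiskExpansion_eulerProd_pow (m := 2) (by norm_num)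
  have E10 := hasDiskExpansion_eulerProd_pow (m := 10) (by norm_num)
  refine X_pow_five_dvd_sub_of_mul_eq X_pow_five_dvd_thetaSeries_one_sub
    X_pow_five_dvd_thetaSeries_two_sub X_pow_five_dvd_thetaSeries_ten_sub
    (((E2.pow 7).mul derivative).unique_of_faithfulSMul
      (((hasDiskExpansion_X.mul (E1.pow 8)).mul (E10.pow 3)).congr fun q _ hq ↦ ?_))
  have E2_ne_zero := eulerProd_pow_ne_zero hq two_ne_zero
  rw [pow_one]
  field_simp

theorem coeff_eulerQuotientPrimitive {c : ℤ⟦X⟧}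
    (hc : HasDiskExpansion c eulerQuotientPrimitive) :
    coeff 1 c = 1 ∧ coeff 2 c = -4 ∧ coeff 3 c = 9 ∧ coeff 4 c = -14 := by
  have low (n : ℕ) (hn : n < 5) := X_pow_dvd_iff.1 (X_pow_five_dvd_natCast_mul_coeff_sub hc) n hn
  simp only [← map_ofNat (C (R := ℤ)), map_sub, map_add, coeff_mk, coeff_C_mul, coeff_X,
    coeff_X_pow] at low
  have coeff_one := low 1 (by norm_num)
  have coeff_two := low 2 (by norm_num)
  have coeff_three := low 3 (by norm_num)
  have coeff_four := low 4 (by norm_num)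
  norm_num at coeff_one coeff_two coeff_three coeff_four
  refine ⟨?_, ?_, ?_, ?_⟩ <;> omega

end LowCoefficients

theorem ofReal_eulerE {q : ℝ} (hq : |q| < 1) : (eulerE q : ℂ) = eulerProd q := by
  have multipliable : Multipliable fun j : ℕ ↦ 1 - q ^ (j + 1) := by
    simpa only [sub_eq_add_neg] using multipliable_one_add_of_summable
      (f := fun j : ℕ ↦ -q ^ (j + 1)) (by
        simpa using (summable_nat_add_iff 1).2 (summable_geometric_of_lt_one (abs_nonneg q) hq))
  have map_tprod := multipliable.map_tprod Complex.ofRealHom Complex.continuous_ofReal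
  simp only [Complex.ofRealHom_eq_coe] at map_tprod
  rw [eulerE, map_tprod, eulerProd_eq_tprod]
  push_cast
  rfl

theorem ofReal_eulerE_quotient {q : ℝ} (hq : |q| < 1) :
    ((q * eulerE q ^ 8 * eulerE (q ^ 10) ^ 3 / eulerE (q ^ 2) ^ 7 : ℝ) : ℂ) =
      q * eulerProd q ^ 8 * eulerProd (q ^ 10) ^ 3 / eulerProd (q ^ 2) ^ 7 := by
  have abs_pow_lt_one {n : ℕ} (hn : n ≠ 0) : |q ^ n| < 1 := by
    rw [abs_pow]
    exact pow_lt_one₀ (abs_nonneg q) hq hn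
  push_cast [ofReal_eulerE hq, ofReal_eulerE (abs_pow_lt_one two_ne_zero),
    ofReal_eulerE (abs_pow_lt_one (show 10 ≠ 0 by norm_num))]
  rfl

end QSeries

open QSeries in
theorem stmt_9_general :
    ∃ a : ℕ → ℤ,
      (∀ q : ℂ, ‖q‖ < 1 → HasSum (fun n : ℕ ↦ (n : ℂ) * a n * q ^ n)
        (q * eulerProd q ^ 8 * eulerProd (q ^ 10) ^ 3 / eulerProd (q ^ 2) ^ 7)) ∧
      a 1 = 1 ∧ a 2 = -4 ∧ a 3 = 9 ∧ a 4 = -14 := by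
  obtain ⟨c, hc⟩ := exists_hasDiskExpansion_eulerQuotientPrimitive
  exact ⟨fun n ↦ PowerSeries.coeff n c,
    fun _ hq ↦ hasSum_natCast_mul_eulerQuotientPrimitive hc hq, coeff_eulerQuotientPrimitive hc⟩

theorem stmt_9 :
    ∃ a : ℕ → ℤ,
      (∀ q : ℝ, 0 < q → q < 1 →
        Summable (fun n : ℕ => |(n : ℝ) * (a n : ℝ) * q ^ n|) ∧
        q * eulerE q ^ 8 * eulerE (q ^ 10) ^ 3 / eulerE (q ^ 2) ^ 7
          = ∑' n : ℕ, (n : ℝ) * (a n : ℝ) * q ^ n) ∧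
      a 1 = 1 ∧ a 2 = -4 ∧ a 3 = 9 ∧ a 4 = -14 := by
  obtain ⟨a, expansion, values⟩ := stmt_9_general
  refine ⟨a, fun q hq₀ hq ↦ ?_, values⟩
  have abs_lt_one : |q| < 1 := by rwa [abs_of_pos hq₀]
  have real_expansion : HasSum (fun n : ℕ ↦ (n : ℝ) * (a n : ℝ) * q ^ n)
      (q * eulerE q ^ 8 * eulerE (q ^ 10) ^ 3 / eulerE (q ^ 2) ^ 7) := by
    rw [← Complex.hasSum_ofReal, QSeries.ofReal_eulerE_quotient abs_lt_one]
    simpa using expansion q (by simpa using abs_lt_one)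
  exact ⟨real_expansion.summable.abs, real_expansion.tsum_eq.symm⟩
end
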